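/- arXiv:0803.0923 — 9 statements merged into one kernel-verified Lean document; each statement's English description precedes it below -/
import Mathlib

section
/- There exist h₀ > 0 and C > 0 such that for every h ∈ (0,h₀) and every (s,ξ,ζ) ∈ Ω the matrix ∇_hΨ⁽ʰ⁾(s,ξ,ζ) is invertible and ‖(∇_hΨ⁽ʰ⁾(s,ξ,ζ))⁻¹ − R₀(s)ᵀ + h R₀(s)ᵀ[(ξν₂′(s) + ζν₃′(s)) ⊗ e₁] R₀(s)ᵀ‖ ≤ C h², where a ⊗ e₁ denotes the 3×3 matrix whose first column is a and whose other two columns vanish; in particular (∇_hΨ⁽ʰ⁾)⁻¹ → R₀ᵀ uniformly on Ω as h → 0. -/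
open MeasureTheory Set

noncomputable section

abbrev M3 : Type := Matrix (Fin 3) (Fin 3) ℝ

/-- The special orthogonal group `SO(3)` as a set of `3 × 3` real matrices. -/
def SO3 : Set M3 := {R : M3 | R.transpose * R = 1 ∧ R.det = 1}

/-- The Frobenius norm of a `3 × 3` real matrix. -/
def frob3 (F : M3) : ℝ := Real.sqrt (∑ i, ∑ j, (F i j) ^ 2)

/-- The Frobenius distance from a matrix to `SO(3)`. -/
def distSO3 (F : M3) : ℝ := sInf ((fun R => frob3 (F - R)) '' SO3)

/-- The Euclidean norm on `ℝ³`. -/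
def enorm3 (v : Fin 3 → ℝ) : ℝ := Real.sqrt (∑ i, (v i) ^ 2)

/-- The `3 × 3` matrix with the three given columns. -/
def colMat (a b c : Fin 3 → ℝ) : M3 :=
  Matrix.of fun i j => if j = 0 then a i else if j = 1 then b i else c i

/-- `a ⊗ e₁` : the `3 × 3` matrix whose first column is `a` and whose other columns vanish. -/
def tensE1 (a : Fin 3 → ℝ) : M3 := Matrix.of fun i j => if j = 0 then a i else 0

/-- The normal vector `ν₂(s) = R₀(s) e₂`. -/
def nu2 (R₀ : ℝ → M3) (s : ℝ) : Fin 3 → ℝ := (R₀ s).mulVec (Pi.single 1 1)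

/-- The normal vector `ν₃(s) = R₀(s) e₃`. -/
def nu3 (R₀ : ℝ → M3) (s : ℝ) : Fin 3 → ℝ := (R₀ s).mulVec (Pi.single 2 1)

/-- The parametrization `Ψ⁽ʰ⁾(s,ξ,ζ) = γ(s) + hξν₂(s) + hζν₃(s)` of the thin beam. -/
def Psih (γ : ℝ → Fin 3 → ℝ) (R₀ : ℝ → M3) (h : ℝ) (p : ℝ × ℝ × ℝ) : Fin 3 → ℝ :=
  γ p.1 + (h * p.2.1) • nu2 R₀ p.1 + (h * p.2.2) • nu3 R₀ p.1

/-- The scaled gradient `∇_h z = (∂_s z | h⁻¹ ∂_ξ z | h⁻¹ ∂_ζ z)` as a `3 × 3` matrix. -/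
def scaledGrad (h : ℝ) (z : ℝ × ℝ × ℝ → Fin 3 → ℝ) (p : ℝ × ℝ × ℝ) : M3 :=
  Matrix.of fun i j =>
    if j = 0 then deriv (fun t => z (t, p.2.1, p.2.2) i) p.1
    else if j = 1 then h⁻¹ * deriv (fun t => z (p.1, t, p.2.2) i) p.2.1
    else h⁻¹ * deriv (fun t => z (p.1, p.2.1, t) i) p.2.2

theorem so3_entry_le (R : M3) (hR : R.transpose * R = 1) (i j : Fin 3) : |R i j| ≤ 1 := by
  have h := congrFun (congrFun hR j) j
  simp only [Matrix.mul_apply, Matrix.transpose_apply, Matrix.one_apply_eq] at h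
  rw [← sq_le_one_iff_abs_le_one, ← h]
  have := Finset.single_le_sum (f := fun k => R k j * R k j)
    (fun k _ => mul_self_nonneg (R k j)) (Finset.mem_univ i)
  simpa [sq] using this

theorem frob3_le (F : M3) (K : ℝ) (hK : 0 ≤ K) (hF : ∀ i j, |F i j| ≤ K) :
    frob3 F ≤ 3 * K := by
  unfold frob3
  apply Real.sqrt_le_iff.mpr
  refine ⟨by positivity, ?_⟩
  have h : ∀ i j, (F i j) ^ 2 ≤ K ^ 2 := fun i j => sq_le_sq' (abs_le.mp (hF i j)).1
    (abs_le.mp (hF i j)).2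
  calc (∑ i, ∑ j, (F i j) ^ 2) ≤ ∑ i : Fin 3, ∑ j : Fin 3, K ^ 2 :=
        Finset.sum_le_sum fun i _ => Finset.sum_le_sum fun j _ => h i j
    _ = (3 * K) ^ 2 := by simp; ring

theorem key_expansion (R : M3) (hR : R.transpose * R = 1) (a : Fin 3 → ℝ) (M : ℝ) (hM : 0 < M)
    (ha : ∀ i, |a i| ≤ M) (h : ℝ) (hh : 0 < h) (hhM : h * (6 * M) ≤ 1) :
    IsUnit (R + h • tensE1 a) ∧
    frob3 ((R + h • tensE1 a)⁻¹ - R.transpose + h • (R.transpose * tensE1 a * R.transpose))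
      ≤ 54 * M ^ 2 * h ^ 2 := by
  have hR' : R * R.transpose = 1 := mul_eq_one_comm.mp hR
  obtain ⟨B, hB⟩ : ∃ B : M3, B = R.transpose * tensE1 a := ⟨_, rfl⟩
  obtain ⟨β, hβ⟩ : ∃ β : ℝ, β = B 0 0 := ⟨_, rfl⟩
  have hB0 : ∀ i j, j ≠ 0 → B i j = 0 := by
    intro i j hj
    simp [hB, Matrix.mul_apply, tensE1, hj]
  have hBb : ∀ i, |B i 0| ≤ 3 * M := by
    intro i
    have e : ∀ k, |R k i * a k| ≤ M := by
      intro k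
      rw [abs_mul]
      nlinarith [so3_entry_le R hR k i, ha k, abs_nonneg (R k i), abs_nonneg (a k)]
    simp only [hB, Matrix.mul_apply, tensE1, Matrix.transpose_apply, Matrix.of_apply, if_true]
    calc _ ≤ ∑ k, |R k i * a k| := Finset.abs_sum_le_sum_abs _ _
      _ ≤ ∑ k : Fin 3, M := Finset.sum_le_sum fun k _ => e k
      _ = 3 * M := by simp
  have hBB : B * B = β • B := by
    ext i j
    by_cases hj : j = 0
    · subst hj
      simp [Matrix.mul_apply, Fin.sum_univ_three, hB0 i 1, hB0 i 2, hβ, mul_comm]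
    · simp [Matrix.mul_apply, Fin.sum_univ_three, hB0 _ j hj]
  have hβb : |β| ≤ 3 * M := hβ ▸ hBb 0
  have hhβ : |h * β| ≤ 1 / 2 := by
    rw [abs_mul, abs_of_pos hh]; nlinarith
  have hden : 1 / 2 ≤ 1 + h * β := by linarith [(abs_le.mp hhβ).1]
  have hden0 : 1 + h * β ≠ 0 := by linarith
  obtain ⟨c, hc⟩ : ∃ c : ℝ, c = h / (1 + h * β) := ⟨_, rfl⟩
  have hc1 : h - c - h * c * β = 0 := by rw [hc]; field_simp; ring
  have hRB : R * B = tensE1 a := by rw [hB, ← mul_assoc, hR', one_mul]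
  have hfac : R + h • tensE1 a = R * (1 + h • B) := by
    rw [mul_add, mul_one, mul_smul_comm, hRB]
  have hmid : (1 + h • B) * (1 - c • B) = 1 := by
    have : (1 + h • B) * (1 - c • B) = 1 + (h - c - h * c * β) • B := by
      simp only [add_mul, mul_sub, one_mul, mul_one, smul_mul_assoc, mul_smul_comm, hBB]
      module
    rw [this, hc1]; simp
  have hinv : (R + h • tensE1 a) * ((1 - c • B) * R.transpose) = 1 := by
    rw [hfac, mul_assoc, ← mul_assoc (1 + h • B), hmid, one_mul, hR']
  refine ⟨.of_mul_eq_one _ hinv, ?_⟩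
  rw [Matrix.inv_eq_right_inv hinv, ← hB]
  have hE : (1 - c • B) * R.transpose - R.transpose + h • (B * R.transpose)
      = (h - c) • (B * R.transpose) := by
    simp only [sub_mul, one_mul, smul_mul_assoc]
    module
  rw [hE]
  have hcb : |h - c| ≤ 6 * M * h ^ 2 := by
    have : h - c = h ^ 2 * β / (1 + h * β) := by rw [hc]; field_simp; ring
    rw [this, abs_div, abs_of_pos (by linarith : 0 < 1 + h * β),
      div_le_iff₀ (by linarith), abs_mul, abs_of_pos (by positivity : 0 < h ^ 2)]
    have h2 : 0 < h ^ 2 := by positivity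
    calc h ^ 2 * |β| ≤ h ^ 2 * (3 * M) := by gcongr
      _ = 6 * M * h ^ 2 * (1 / 2) := by ring
      _ ≤ _ := by gcongr
  refine (frob3_le _ (6 * M * h ^ 2 * (3 * M)) (by positivity) ?_).trans (le_of_eq (by ring))
  intro i j
  have : (B * R.transpose) i j = B i 0 * R j 0 := by
    simp [Matrix.mul_apply, Fin.sum_univ_three, hB0 i 1, hB0 i 2]
  rw [Matrix.smul_apply, this, smul_eq_mul, abs_mul, abs_mul]
  have h1 : |B i 0| * |R j 0| ≤ 3 * M * 1 :=
    mul_le_mul (hBb i) (so3_entry_le R hR j 0) (abs_nonneg _) (by positivity)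
  rw [mul_one] at h1
  exact mul_le_mul hcb h1 (by positivity) (by positivity)

theorem nu2_eq (R₀ : ℝ → M3) : nu2 R₀ = fun s i => R₀ s i 1 := by
  ext s i; simp [nu2]

theorem nu3_eq (R₀ : ℝ → M3) : nu3 R₀ = fun s i => R₀ s i 2 := by
  ext s i; simp [nu3]

theorem deriv_col (R₀ : ℝ → M3) (hR : ∀ i j, ContDiff ℝ 1 fun s => R₀ s i j) (j i : Fin 3)
    (s : ℝ) : deriv (fun s i => R₀ s i j) s i = deriv (fun s => R₀ s i j) s := by
  rw [deriv_pi fun k => ((hR k j).differentiable one_ne_zero) s]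

theorem scaledGrad_eq (γ : ℝ → Fin 3 → ℝ) (hγ : ContDiff ℝ 2 γ) (R₀ : ℝ → M3)
    (hR : ∀ i j, ContDiff ℝ 1 fun s => R₀ s i j) (h : ℝ) (hh : 0 < h) (p : ℝ × ℝ × ℝ)
    (he : (R₀ p.1).mulVec (Pi.single 0 1) = deriv γ p.1) :
    scaledGrad h (Psih γ R₀ h) p = R₀ p.1 +
      h • tensE1 (p.2.1 • deriv (nu2 R₀) p.1 + p.2.2 • deriv (nu3 R₀) p.1) := by
  obtain ⟨s, x, z⟩ := p
  have hd : ∀ i j, HasDerivAt (fun s => R₀ s i j) (deriv (fun s => R₀ s i j) s) s := fun i j =>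
    (((hR i j).differentiable one_ne_zero) s).hasDerivAt
  have hg : ∀ i, HasDerivAt (fun s => γ s i) (R₀ s i 0) s := by
    intro i
    have h1 : HasDerivAt γ (deriv γ s) s := ((hγ.differentiable two_ne_zero) s).hasDerivAt
    have h2 := hasDerivAt_pi.mp h1 i
    have h3 := congrFun he i
    simp at h3
    rwa [← h3] at h2
  have hh' : h ≠ 0 := hh.ne'
  ext i j
  fin_cases j
  · simp only [scaledGrad, Psih, tensE1, nu2_eq, nu3_eq, Matrix.add_apply, Matrix.smul_apply,
      Matrix.of_apply, Pi.add_apply, Pi.smul_apply, deriv_col R₀ hR, smul_eq_mul]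
    simp only [Fin.zero_eta, if_true]
    refine (((hg i).add ((hd i 1).const_mul (h * x))).add ((hd i 2).const_mul (h * z))).deriv.trans ?_
    ring
  · have hx : HasDerivAt (fun t => γ s i + h * t * R₀ s i 1 + h * z * R₀ s i 2)
        (h * 1 * R₀ s i 1) x :=
      (((((hasDerivAt_id x).const_mul h).mul_const (R₀ s i 1)).const_add _).add_const _)
    simp [scaledGrad, Psih, tensE1, nu2_eq, nu3_eq]
    have := hx.deriv
    simp at this
    try rw [this]
    try field_simp
  · have hx : HasDerivAt (fun t => γ s i + h * x * R₀ s i 1 + h * t * R₀ s i 2)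
        (h * 1 * R₀ s i 2) z :=
      ((((hasDerivAt_id z).const_mul h).mul_const (R₀ s i 2)).const_add _)
    simp [scaledGrad, Psih, tensE1, nu2_eq, nu3_eq]
    have := hx.deriv
    simp at this
    try rw [this]
    try field_simp

theorem scaledGrad_Psih_inv_expansion
    (L : ℝ) (hL : 0 < L)
    (γ : ℝ → Fin 3 → ℝ) (hγ : ContDiff ℝ 2 γ)
    (harc : ∀ s ∈ Icc (0:ℝ) L, enorm3 (deriv γ s) = 1)
    (hγinj : InjOn γ (Icc (0:ℝ) L))
    (R₀ : ℝ → M3) (hR₀C1 : ∀ i j, ContDiff ℝ 1 fun s => R₀ s i j)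
    (hR₀SO : ∀ s ∈ Icc (0:ℝ) L, R₀ s ∈ SO3)
    (hR₀e1 : ∀ s ∈ Icc (0:ℝ) L, (R₀ s).mulVec (Pi.single 0 1) = deriv γ s)
    (Dset : Set (ℝ × ℝ)) (hDopen : IsOpen Dset) (hDconn : IsConnected Dset)
    (hDbdd : Bornology.IsBounded Dset) (hDvol : volume Dset = 1) :
    ∃ h₀ : ℝ, 0 < h₀ ∧ ∃ C : ℝ, 0 < C ∧
      ∀ h ∈ Ioo (0:ℝ) h₀, ∀ p ∈ Ioo (0:ℝ) L ×ˢ Dset,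
        IsUnit (scaledGrad h (Psih γ R₀ h) p) ∧
        frob3 ((scaledGrad h (Psih γ R₀ h) p)⁻¹ - (R₀ p.1).transpose +
            h • ((R₀ p.1).transpose *
              tensE1 (p.2.1 • deriv (nu2 R₀) p.1 + p.2.2 • deriv (nu3 R₀) p.1) *
              (R₀ p.1).transpose)) ≤ C * h ^ 2 := by
  obtain ⟨P, hP⟩ := hDbdd.exists_norm_le
  have hK : ∀ i j, ∃ K, ∀ s ∈ Icc (0:ℝ) L, |deriv (fun s => R₀ s i j) s| ≤ K := by
    intro i j
    have hc : Continuous (deriv fun s => R₀ s i j) := (hR₀C1 i j).continuous_deriv le_rfl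
    obtain ⟨K, hK⟩ := isCompact_Icc.exists_bound_of_continuousOn (s := Icc (0:ℝ) L) hc.continuousOn
    exact ⟨K, fun s hs => hK s hs⟩
  choose K hK using hK
  obtain ⟨N, hN⟩ : ∃ N : ℝ, N = ∑ i, ∑ j, |K i j| := ⟨_, rfl⟩
  have hKN : ∀ i j, |K i j| ≤ N := by
    intro i j
    rw [hN]
    exact (Finset.single_le_sum (f := fun j => |K i j|) (fun _ _ => abs_nonneg _)
      (Finset.mem_univ j)).trans (Finset.single_le_sum (f := fun i => ∑ j, |K i j|)
      (fun _ _ => Finset.sum_nonneg fun _ _ => abs_nonneg _) (Finset.mem_univ i))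
  have hN0 : 0 ≤ N := (abs_nonneg _).trans (hKN 0 0)
  obtain ⟨M, hM⟩ : ∃ M : ℝ, M = 2 * (|P| * N) + 1 := ⟨_, rfl⟩
  have hM0 : 0 < M := by rw [hM]; positivity
  refine ⟨1 / (6 * M), by positivity, 54 * M ^ 2, by positivity, ?_⟩
  rintro h ⟨hh, hh2⟩ p ⟨hp1, hp2⟩
  have hs : p.1 ∈ Icc (0:ℝ) L := Ioo_subset_Icc_self hp1
  rw [scaledGrad_eq γ hγ R₀ hR₀C1 h hh p (hR₀e1 _ hs)]
  refine key_expansion _ (hR₀SO _ hs).1 _ M hM0 ?_ h hh ?_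
  · intro i
    have hd : ∀ j, |deriv (fun s => R₀ s i j) p.1| ≤ N := fun j =>
      (hK i j _ hs).trans ((le_abs_self _).trans (hKN i j))
    have hn := (hP _ hp2).trans (le_abs_self P)
    have hx : |p.2.1| ≤ |P| := (norm_fst_le p.2).trans hn
    have hz : |p.2.2| ≤ |P| := (norm_snd_le p.2).trans hn
    simp only [nu2_eq, nu3_eq, Pi.add_apply, Pi.smul_apply, deriv_col R₀ hR₀C1, smul_eq_mul]
    refine (abs_add_le _ _).trans ?_
    rw [abs_mul, abs_mul, hM]
    have h1 := mul_le_mul hx (hd 1) (abs_nonneg _) (abs_nonneg _)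
    have h2 := mul_le_mul hz (hd 2) (abs_nonneg _) (abs_nonneg _)
    linarith
  · exact ((lt_div_iff₀ (by positivity)).mp hh2).le
end
end

section
/- There exists h₀ > 0 such that for every h ∈ (0,h₀) the map Ψ⁽ʰ⁾ is injective on [0,L] × cl(D). -/
open MeasureTheory Set

noncomputable section

/-- Unscaled tubular map. -/
def tubeMap (γ : ℝ → Fin 3 → ℝ) (R₀ : ℝ → M3) (p : ℝ × ℝ × ℝ) : Fin 3 → ℝ :=
  γ p.1 + p.2.1 • nu2 R₀ p.1 + p.2.2 • nu3 R₀ p.1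

lemma contDiff_nu (R₀ : ℝ → M3) (hR : ∀ i j, ContDiff ℝ 1 fun s => R₀ s i j) (j : Fin 3) :
    ContDiff ℝ 1 fun s => (R₀ s).mulVec (Pi.single j 1) := by
  rw [contDiff_pi]
  intro i
  simpa using hR i j

lemma tubeMap_hasStrict (γ : ℝ → Fin 3 → ℝ) (hγ : ContDiff ℝ 2 γ)
    (R₀ : ℝ → M3) (hR : ∀ i j, ContDiff ℝ 1 fun s => R₀ s i j) (p : ℝ × ℝ × ℝ) :
    HasStrictFDerivAt (tubeMap γ R₀) (fderiv ℝ (tubeMap γ R₀) p) p := by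
  have h : ContDiff ℝ 1 (tubeMap γ R₀) := by
    have h1 := hγ.of_le (show (1 : WithTop ℕ∞) ≤ 2 by norm_num)
    have h2 : ContDiff ℝ 1 (nu2 R₀) := contDiff_nu R₀ hR 1
    have h3 : ContDiff ℝ 1 (nu3 R₀) := contDiff_nu R₀ hR 2
    unfold tubeMap
    fun_prop
  exact h.contDiffAt.hasStrictFDerivAt (by norm_num)

lemma tubeMap_fderiv (γ : ℝ → Fin 3 → ℝ) (hγ : ContDiff ℝ 2 γ)
    (R₀ : ℝ → M3) (hR : ∀ i j, ContDiff ℝ 1 fun s => R₀ s i j) (s : ℝ)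
    (he : (R₀ s).mulVec (Pi.single 0 1) = deriv γ s) (v : ℝ × ℝ × ℝ) :
    fderiv ℝ (tubeMap γ R₀) (s, 0, 0) v = (R₀ s).mulVec ![v.1, v.2.1, v.2.2] := by
  have hd := (tubeMap_hasStrict γ hγ R₀ hR (s, 0, 0)).hasFDerivAt
  have h1 : HasDerivAt γ (deriv γ s) s :=
    ((hγ.differentiable (by norm_num)) s).hasDerivAt
  have h2 : HasDerivAt (nu2 R₀) (deriv (nu2 R₀) s) s :=
    (((contDiff_nu R₀ hR 1).differentiable (by norm_num)) s).hasDerivAt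
  have h3 : HasDerivAt (nu3 R₀) (deriv (nu3 R₀) s) s :=
    (((contDiff_nu R₀ hR 2).differentiable (by norm_num)) s).hasDerivAt
  have f1 : HasFDerivAt (fun p : ℝ × ℝ × ℝ => p.1)
    (ContinuousLinearMap.fst ℝ ℝ (ℝ × ℝ)) (s, 0, 0) := hasFDerivAt_fst
  have f2 : HasFDerivAt (fun p : ℝ × ℝ × ℝ => p.2)
    (ContinuousLinearMap.snd ℝ ℝ (ℝ × ℝ)) (s, 0, 0) := hasFDerivAt_snd
  have g1 := HasDerivAt.hasFDerivAt h1 |>.comp (s, (0:ℝ), (0:ℝ)) f1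
  have g2 := HasDerivAt.hasFDerivAt h2 |>.comp (s, (0:ℝ), (0:ℝ)) f1
  have g3 := HasDerivAt.hasFDerivAt h3 |>.comp (s, (0:ℝ), (0:ℝ)) f1
  have key := (g1.add (f2.fst.smul g2)).add (f2.snd.smul g3)
  have := hd.unique key
  rw [this]
  ext i
  have hei := congrFun he i
  simp at hei
  simp [nu2, nu3, Matrix.mulVec, dotProduct, Fin.sum_univ_three, ← hei]
  ring

lemma tubeMap_locInj (γ : ℝ → Fin 3 → ℝ) (hγ : ContDiff ℝ 2 γ)
    (R₀ : ℝ → M3) (hR : ∀ i j, ContDiff ℝ 1 fun s => R₀ s i j) (s : ℝ)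
    (hSO : R₀ s ∈ SO3)
    (he : (R₀ s).mulVec (Pi.single 0 1) = deriv γ s) :
    ∃ u ∈ nhds (s, (0:ℝ), (0:ℝ)), InjOn (tubeMap γ R₀) u := by
  have hd := tubeMap_hasStrict γ hγ R₀ hR (s, 0, 0)
  have hinj : Function.Injective (fderiv ℝ (tubeMap γ R₀) (s, 0, 0)) := by
    intro v w hvw
    rw [tubeMap_fderiv γ hγ R₀ hR s he, tubeMap_fderiv γ hγ R₀ hR s he] at hvw
    have h := congrArg (fun x => (R₀ s).transpose.mulVec x) hvw
    simp only [Matrix.mulVec_mulVec, hSO.1, Matrix.one_mulVec] at h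
    have a := congrFun h 0
    have b := congrFun h 1
    have c := congrFun h 2
    simp at a b c
    exact Prod.ext a (Prod.ext b c)
  let e : (ℝ × ℝ × ℝ) ≃L[ℝ] (Fin 3 → ℝ) :=
    (LinearEquiv.ofInjectiveOfFinrankEq
      (fderiv ℝ (tubeMap γ R₀) (s, 0, 0)).toLinearMap hinj (by simp)).toContinuousLinearEquiv
  have hd' : HasStrictFDerivAt (tubeMap γ R₀) (e : (ℝ × ℝ × ℝ) →L[ℝ] (Fin 3 → ℝ)) (s, 0, 0) := by
    convert hd using 1
    exact ContinuousLinearMap.ext fun v => rfl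
  exact ⟨(hd'.toOpenPartialHomeomorph _).source,
    (hd'.toOpenPartialHomeomorph _).open_source.mem_nhds hd'.mem_toOpenPartialHomeomorph_source,
    (hd'.toOpenPartialHomeomorph _).injOn⟩

theorem Psih_injective_for_small_h
    (L : ℝ) (hL : 0 < L)
    (γ : ℝ → Fin 3 → ℝ) (hγ : ContDiff ℝ 2 γ)
    (harc : ∀ s ∈ Icc (0:ℝ) L, enorm3 (deriv γ s) = 1)
    (hγinj : InjOn γ (Icc (0:ℝ) L))
    (R₀ : ℝ → M3) (hR₀C1 : ∀ i j, ContDiff ℝ 1 fun s => R₀ s i j)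
    (hR₀SO : ∀ s ∈ Icc (0:ℝ) L, R₀ s ∈ SO3)
    (hR₀e1 : ∀ s ∈ Icc (0:ℝ) L, (R₀ s).mulVec (Pi.single 0 1) = deriv γ s)
    (Dset : Set (ℝ × ℝ)) (hDopen : IsOpen Dset) (hDconn : IsConnected Dset)
    (hDbdd : Bornology.IsBounded Dset) (hDvol : volume Dset = 1) :
    ∃ h₀ : ℝ, 0 < h₀ ∧ ∀ h ∈ Ioo (0:ℝ) h₀,
      InjOn (Psih γ R₀ h) (Icc (0:ℝ) L ×ˢ closure Dset) := by
  have hcomp : IsCompact (Icc (0:ℝ) L ×ˢ ({((0:ℝ), (0:ℝ))} : Set (ℝ × ℝ))) :=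
    isCompact_Icc.prod isCompact_singleton
  obtain ⟨t, ht, htinj⟩ := Set.InjOn.exists_mem_nhdsSet (f := tubeMap γ R₀)
    (s := Icc (0:ℝ) L ×ˢ ({((0:ℝ), (0:ℝ))} : Set (ℝ × ℝ)))
    (by
      rintro ⟨a, b⟩ ⟨ha, hb⟩ ⟨c, d⟩ ⟨hc, hd⟩ h
      simp only [mem_singleton_iff] at hb hd
      subst hb hd
      simp only [tubeMap, zero_smul, add_zero] at h
      exact Prod.ext (hγinj ha hc h) rfl)
    hcomp
    (fun p _ => (tubeMap_hasStrict γ hγ R₀ hR₀C1 p).hasFDerivAt.continuousAt)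
    (by
      rintro ⟨a, b⟩ ⟨ha, hb⟩
      simp only [mem_singleton_iff] at hb
      subst hb
      exact tubeMap_locInj γ hγ R₀ hR₀C1 a (hR₀SO a ha) (hR₀e1 a ha))
  rw [mem_nhdsSet_iff_exists] at ht
  obtain ⟨U, hU, hKU, hUt⟩ := ht
  obtain ⟨δ, hδ, hthick⟩ := hcomp.exists_thickening_subset_open hU hKU
  obtain ⟨C, hC, hCb⟩ := hDbdd.closure.exists_pos_norm_le
  have hmem : ∀ h ∈ Ioo (0:ℝ) (δ / C), ∀ p ∈ Icc (0:ℝ) L ×ˢ closure Dset,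
      (p.1, h • p.2) ∈ t := by
    rintro h ⟨h0, h1⟩ ⟨a, b⟩ ⟨ha, hb⟩
    apply hUt
    apply hthick
    rw [Metric.mem_thickening_iff]
    refine ⟨(a, 0), ⟨ha, rfl⟩, ?_⟩
    rw [lt_div_iff₀ hC] at h1
    have hbn := hCb b hb
    have : dist (a, h • b) (a, (0 : ℝ × ℝ)) = h * ‖b‖ := by
      rw [Prod.dist_eq]
      simp [-Prod.norm_mk, norm_smul, abs_of_pos h0]
      positivity
    rw [this]
    nlinarith
  refine ⟨δ / C, by positivity, ?_⟩
  intro h hh p hp q hq hpq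
  have := htinj (hmem h hh p hp) (hmem h hh q hq) (by simpa [tubeMap, Psih] using hpq)
  rw [Prod.mk.injEq] at this
  exact Prod.ext this.1 (smul_right_injective _ hh.1.ne' this.2)
end
end

section
/- There exist δ > 0 and constants 0 < c ≤ C such that the map Ψ : [0,L] × ℝ² → ℝ³ defined by Ψ(s,y₂,y₃) := γ(s) + y₂ν₂(s) + y₃ν₃(s) satisfies c‖p − q‖ ≤ ‖Ψ(p) − Ψ(q)‖ ≤ C‖p − q‖ for all p, q ∈ [0,L] × cl(B_δ(0)); in particular Ψ is injective on this set (i.e., Ψ is bilipschitz on a uniform tubular neighbourhood of the curve γ). -/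
open MeasureTheory Set

noncomputable section

/-- The tubular-neighbourhood parametrization `Ψ(s,y₂,y₃) = γ(s) + y₂ν₂(s) + y₃ν₃(s)`. -/
def Psi (γ : ℝ → Fin 3 → ℝ) (R₀ : ℝ → M3) (p : ℝ × ℝ × ℝ) : Fin 3 → ℝ :=
  γ p.1 + p.2.1 • nu2 R₀ p.1 + p.2.2 • nu3 R₀ p.1

/-- The Euclidean norm of the difference of two points of `ℝ × ℝ²`. -/
def pdist (p q : ℝ × ℝ × ℝ) : ℝ :=
  Real.sqrt ((p.1 - q.1) ^ 2 + (p.2.1 - q.2.1) ^ 2 + (p.2.2 - q.2.2) ^ 2)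

/-- `C¹` maps are Lipschitz on compact intervals. -/
theorem aux_lip {E : Type*} [NormedAddCommGroup E] [NormedSpace ℝ E] (L : ℝ)
    (f : ℝ → E) (hf : ContDiff ℝ 1 f) :
    ∃ K : ℝ, 0 < K ∧ ∀ s ∈ Icc (0:ℝ) L, ∀ t ∈ Icc (0:ℝ) L, ‖f s - f t‖ ≤ K * |s - t| := by
  have hc : Continuous (deriv f) := hf.continuous_deriv le_rfl
  obtain ⟨K, hK⟩ := isCompact_Icc.exists_bound_of_continuousOn (s := Icc (0:ℝ) L) hc.continuousOn
  refine ⟨max K 1, lt_max_of_lt_right one_pos, fun s hs t ht => ?_⟩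
  have := (convex_Icc (0:ℝ) L).norm_image_sub_le_of_norm_deriv_le (f := f) (C := max K 1)
    (fun x _ => (hf.differentiable one_ne_zero) x)
    (fun x hx => (hK x hx).trans (le_max_left _ _)) ht hs
  simpa [Real.norm_eq_abs] using this

theorem aux_taylor {E : Type*} [NormedAddCommGroup E] [NormedSpace ℝ E] (L K : ℝ) (hK : 0 < K)
    (f : ℝ → E) (hf : Differentiable ℝ f)
    (hlip : ∀ s ∈ Icc (0:ℝ) L, ∀ t ∈ Icc (0:ℝ) L, ‖deriv f s - deriv f t‖ ≤ K * |s - t|) :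
    ∀ s ∈ Icc (0:ℝ) L, ∀ t ∈ Icc (0:ℝ) L,
      ‖f s - f t - (s - t) • deriv f t‖ ≤ K * |s - t| * |s - t| := by
  intro s hs t ht
  have hsub : uIcc t s ⊆ Icc (0:ℝ) L := uIcc_subset_Icc ht hs
  have := (convex_uIcc t s).norm_image_sub_le_of_norm_hasDerivWithin_le
    (f := fun x => f x - x • deriv f t) (f' := fun x => deriv f x - (1:ℝ) • deriv f t)
    (C := K * |s - t|)
    (fun x _ => ((hf x).hasDerivAt.sub ((hasDerivAt_id x).smul_const _)).hasDerivWithinAt)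
    (fun x hx => by
      rw [one_smul]
      refine (hlip x (hsub hx) t ht).trans ?_
      have := abs_sub_left_of_mem_uIcc hx
      gcongr) left_mem_uIcc right_mem_uIcc
  rw [Real.norm_eq_abs] at this
  convert this using 2
  rw [sub_smul]; abel

theorem enorm3_eq (v : Fin 3 → ℝ) : enorm3 v = ‖WithLp.toLp 2 v‖ := by
  simp [enorm3, EuclideanSpace.norm_eq]

theorem aux_rot (R : M3) (hR : R ∈ SO3) (a b c : ℝ) :
    enorm3 (a • R.mulVec (Pi.single 0 1) + b • R.mulVec (Pi.single 1 1)
      + c • R.mulVec (Pi.single 2 1)) = Real.sqrt (a ^ 2 + b ^ 2 + c ^ 2) := by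
  have h := hR.1
  have h' : ∀ i j, (R.transpose * R) i j = (1 : M3) i j := fun i j => by rw [h]
  have h00 := h' 0 0
  have h01 := h' 0 1
  have h02 := h' 0 2
  have h11 := h' 1 1
  have h12 := h' 1 2
  have h22 := h' 2 2
  simp [Matrix.mul_apply, Fin.sum_univ_three] at h00 h01 h02 h11 h12 h22
  unfold enorm3
  congr 1
  simp [Fin.sum_univ_three]
  linear_combination a ^ 2 * h00 + b ^ 2 * h11 + c ^ 2 * h22 + 2 * a * b * h01
    + 2 * a * c * h02 + 2 * b * c * h12

theorem aux_abs {y : ℝ × ℝ} {δ : ℝ} (hδ : 0 < δ) (h : y.1 ^ 2 + y.2 ^ 2 ≤ δ ^ 2) :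
    |y.1| ≤ δ ∧ |y.2| ≤ δ :=
  ⟨abs_le_of_sq_le_sq (by nlinarith [sq_nonneg y.2]) hδ.le,
    abs_le_of_sq_le_sq (by nlinarith [sq_nonneg y.1]) hδ.le⟩

theorem pdist_fst (p q : ℝ × ℝ × ℝ) : |p.1 - q.1| ≤ pdist p q := by
  unfold pdist
  apply Real.abs_le_sqrt
  nlinarith [sq_nonneg (p.2.1 - q.2.1), sq_nonneg (p.2.2 - q.2.2)]

theorem pdist_le (p q : ℝ × ℝ × ℝ) :
    pdist p q ≤ |p.1 - q.1| + |p.2.1 - q.2.1| + |p.2.2 - q.2.2| := by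
  unfold pdist
  apply Real.sqrt_le_iff.2 ⟨by positivity, ?_⟩
  rw [← sq_abs (p.1 - q.1), ← sq_abs (p.2.1 - q.2.1), ← sq_abs (p.2.2 - q.2.2)]
  have h1 := abs_nonneg (p.1 - q.1)
  have h2 := abs_nonneg (p.2.1 - q.2.1)
  have h3 := abs_nonneg (p.2.2 - q.2.2)
  nlinarith [mul_nonneg h1 h2, mul_nonneg h1 h3, mul_nonneg h2 h3]

set_option maxHeartbeats 1000000 in
theorem Psi_bilipschitz_on_tubular_neighbourhood
    (L : ℝ) (hL : 0 < L)
    (γ : ℝ → Fin 3 → ℝ) (hγ : ContDiff ℝ 2 γ)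
    (harc : ∀ s ∈ Icc (0:ℝ) L, enorm3 (deriv γ s) = 1)
    (hγinj : InjOn γ (Icc (0:ℝ) L))
    (R₀ : ℝ → M3) (hR₀C1 : ∀ i j, ContDiff ℝ 1 fun s => R₀ s i j)
    (hR₀SO : ∀ s ∈ Icc (0:ℝ) L, R₀ s ∈ SO3)
    (hR₀e1 : ∀ s ∈ Icc (0:ℝ) L, (R₀ s).mulVec (Pi.single 0 1) = deriv γ s) :
    ∃ δ : ℝ, 0 < δ ∧ ∃ c C : ℝ, 0 < c ∧ c ≤ C ∧
      (∀ p ∈ Icc (0:ℝ) L ×ˢ {y : ℝ × ℝ | y.1 ^ 2 + y.2 ^ 2 ≤ δ ^ 2},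
        ∀ q ∈ Icc (0:ℝ) L ×ˢ {y : ℝ × ℝ | y.1 ^ 2 + y.2 ^ 2 ≤ δ ^ 2},
          c * pdist p q ≤ enorm3 (Psi γ R₀ p - Psi γ R₀ q) ∧
          enorm3 (Psi γ R₀ p - Psi γ R₀ q) ≤ C * pdist p q) ∧
      InjOn (Psi γ R₀) (Icc (0:ℝ) L ×ˢ {y : ℝ × ℝ | y.1 ^ 2 + y.2 ^ 2 ≤ δ ^ 2}) := by
  classical
  obtain ⟨T, hT⟩ : ∃ T : (Fin 3 → ℝ) ≃L[ℝ] EuclideanSpace ℝ (Fin 3), ∀ v, enorm3 v = ‖T v‖ :=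
    ⟨(EuclideanSpace.equiv (Fin 3) ℝ).symm, fun v => enorm3_eq v⟩
  have hG2 : ContDiff ℝ 2 (fun s => T (γ s)) := T.contDiff.comp hγ
  have hGd : ∀ s, deriv (fun s => T (γ s)) s = T (deriv γ s) := fun s =>
    (T.hasFDerivAt.comp_hasDerivAt s
      ((hγ.differentiable two_ne_zero) s).hasDerivAt).deriv
  have hG1 : ContDiff ℝ 1 (deriv (fun s => T (γ s))) := by
    have : ContDiff ℝ (1 + 1) (fun s => T (γ s)) := by
      convert hG2 using 1
      norm_num
    exact (contDiff_succ_iff_deriv.1 this).2.2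
  have hN : ∀ j, ContDiff ℝ 1 (fun s => T ((R₀ s).mulVec (Pi.single j 1))) := fun j => by
    refine T.contDiff.comp (contDiff_pi.2 fun i => ?_)
    simpa using hR₀C1 i j
  obtain ⟨K0, hK0, hl0⟩ := aux_lip L _ hG1
  obtain ⟨K2, hK2, hl2⟩ := aux_lip L _ (hN 1)
  obtain ⟨K3, hK3, hl3⟩ := aux_lip L _ (hN 2)
  have htay := aux_taylor L K0 hK0 _ (hG2.differentiable two_ne_zero) hl0
  have hrot : ∀ t ∈ Icc (0:ℝ) L, ∀ a b c : ℝ,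
      ‖a • T (deriv γ t) + b • T (nu2 R₀ t) + c • T (nu3 R₀ t)‖
        = Real.sqrt (a ^ 2 + b ^ 2 + c ^ 2) := by
    intro t ht a b c
    rw [← aux_rot (R₀ t) (hR₀SO t ht) a b c, hT, hR₀e1 t ht]
    simp only [map_add, map_smul, nu2, nu3]
  -- the key estimate
  have key : ∀ δ : ℝ, 0 < δ →
      ∀ p ∈ Icc (0:ℝ) L ×ˢ {y : ℝ × ℝ | y.1 ^ 2 + y.2 ^ 2 ≤ δ ^ 2}, ∀ q : ℝ × ℝ × ℝ,
        q.1 ∈ Icc (0:ℝ) L →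
        |enorm3 (Psi γ R₀ p - Psi γ R₀ q) - pdist p q| ≤
          (K0 * |p.1 - q.1| + (K2 + K3) * δ) * |p.1 - q.1| := by
    intro δ hδ p hp q hq
    obtain ⟨hp1, hp2⟩ := hp
    obtain ⟨ha, hb⟩ := aux_abs hδ hp2
    have e1 : pdist p q = ‖(p.1 - q.1) • T (deriv γ q.1) + (p.2.1 - q.2.1) • T (nu2 R₀ q.1)
        + (p.2.2 - q.2.2) • T (nu3 R₀ q.1)‖ := (hrot q.1 hq _ _ _).symm
    rw [hT, e1]
    refine (abs_norm_sub_norm_le _ _).trans ?_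
    have e2 : T (Psi γ R₀ p - Psi γ R₀ q) - ((p.1 - q.1) • T (deriv γ q.1)
        + (p.2.1 - q.2.1) • T (nu2 R₀ q.1) + (p.2.2 - q.2.2) • T (nu3 R₀ q.1))
        = (T (γ p.1) - T (γ q.1) - (p.1 - q.1) • T (deriv γ q.1))
          + p.2.1 • (T (nu2 R₀ p.1) - T (nu2 R₀ q.1))
          + p.2.2 • (T (nu3 R₀ p.1) - T (nu3 R₀ q.1)) := by
      simp only [Psi, map_add, map_smul, map_sub]
      module
    rw [e2]
    have b1 := htay p.1 hp1 q.1 hq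
    rw [hGd] at b1
    have b2 : ‖p.2.1 • (T (nu2 R₀ p.1) - T (nu2 R₀ q.1))‖ ≤ δ * (K2 * |p.1 - q.1|) := by
      rw [norm_smul, Real.norm_eq_abs]
      exact mul_le_mul ha (hl2 p.1 hp1 q.1 hq) (norm_nonneg _) hδ.le
    have b3 : ‖p.2.2 • (T (nu3 R₀ p.1) - T (nu3 R₀ q.1))‖ ≤ δ * (K3 * |p.1 - q.1|) := by
      rw [norm_smul, Real.norm_eq_abs]
      exact mul_le_mul hb (hl3 p.1 hp1 q.1 hq) (norm_nonneg _) hδ.le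
    refine (norm_add₃_le).trans ?_
    linarith
  -- far pairs
  obtain ⟨η, hη, hηK⟩ : ∃ η : ℝ, 0 < η ∧ K0 * η = 1 / 4 :=
    ⟨1 / (4 * K0), by positivity, by field_simp⟩
  have hfar : ∃ m : ℝ, 0 < m ∧ ∀ s ∈ Icc (0:ℝ) L, ∀ t ∈ Icc (0:ℝ) L, η ≤ |s - t| →
      m ≤ ‖T (γ s) - T (γ t)‖ := by
    let S : Set (ℝ × ℝ) := (Icc (0:ℝ) L ×ˢ Icc (0:ℝ) L) ∩ {x | η ≤ |x.1 - x.2|}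
    have hS : IsCompact S := (isCompact_Icc.prod isCompact_Icc).inter_right
      (isClosed_le continuous_const (by fun_prop))
    have hc : ContinuousOn (fun x : ℝ × ℝ => ‖T (γ x.1) - T (γ x.2)‖) S := by
      have := hG2.continuous
      exact ((this.comp continuous_fst).sub (this.comp continuous_snd)).norm.continuousOn
    rcases S.eq_empty_or_nonempty with h | h
    · refine ⟨1, one_pos, fun s hs t ht hst => ?_⟩
      have : (s, t) ∈ S := ⟨⟨hs, ht⟩, hst⟩
      rw [h] at this
      exact this.elim
    · obtain ⟨x, hx, hmin⟩ := hS.exists_isMinOn h hc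
      refine ⟨‖T (γ x.1) - T (γ x.2)‖, ?_,
        fun s hs t ht hst => isMinOn_iff.1 hmin (s, t) ⟨⟨hs, ht⟩, hst⟩⟩
      rw [norm_pos_iff, sub_ne_zero]
      intro he
      have := hγinj hx.1.1 hx.1.2 (T.injective he)
      have h2 : η ≤ |x.1 - x.2| := hx.2
      rw [this, sub_self, abs_zero] at h2
      linarith
  obtain ⟨m, hm, hfar⟩ := hfar
  have hn2 : ∀ t ∈ Icc (0:ℝ) L, ‖T (nu2 R₀ t)‖ = 1 := fun t ht => by
    simpa using hrot t ht 0 1 0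
  have hn3 : ∀ t ∈ Icc (0:ℝ) L, ‖T (nu3 R₀ t)‖ = 1 := fun t ht => by
    simpa using hrot t ht 0 0 1
  obtain ⟨δ, hδ, hδ1, hδ2⟩ : ∃ δ : ℝ, 0 < δ ∧ (K2 + K3) * δ ≤ 1 / 4 ∧ 8 * δ ≤ m := by
    refine ⟨min (1 / (4 * (K2 + K3))) (m / 8), by positivity, ?_, ?_⟩
    · calc (K2 + K3) * _ ≤ (K2 + K3) * (1 / (4 * (K2 + K3))) := by
            gcongr
            exact min_le_left _ _
        _ = 1 / 4 := by field_simp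
    · have := min_le_right (1 / (4 * (K2 + K3))) (m / 8)
      linarith
  have hD : 0 < L + 4 * δ := by positivity
  obtain ⟨c, hc, hc1, hc2⟩ : ∃ c : ℝ, 0 < c ∧ c ≤ 1 / 2 ∧ c * (L + 4 * δ) ≤ m / 2 := by
    refine ⟨min (1 / 2) (m / 2 / (L + 4 * δ)), by positivity, min_le_left _ _, ?_⟩
    rw [← le_div_iff₀ hD]
    exact min_le_right _ _
  have main : ∀ p ∈ Icc (0:ℝ) L ×ˢ {y : ℝ × ℝ | y.1 ^ 2 + y.2 ^ 2 ≤ δ ^ 2},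
        ∀ q ∈ Icc (0:ℝ) L ×ˢ {y : ℝ × ℝ | y.1 ^ 2 + y.2 ^ 2 ≤ δ ^ 2},
          c * pdist p q ≤ enorm3 (Psi γ R₀ p - Psi γ R₀ q) ∧
          enorm3 (Psi γ R₀ p - Psi γ R₀ q) ≤ (2 + K0 * L) * pdist p q := by
    intro p hp q hq
    have hk := abs_le.1 (key δ hδ p hp q hq.1)
    have hpd := pdist_fst p q
    have h0 := abs_nonneg (p.1 - q.1)
    have hpd0 : 0 ≤ pdist p q := h0.trans hpd
    have hL1 : |p.1 - q.1| ≤ L := by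
      have h1 := hp.1
      have h2 := hq.1
      rw [abs_le]
      constructor <;> linarith [h1.1, h1.2, h2.1, h2.2]
    constructor
    · rcases le_total η |p.1 - q.1| with hst | hst
      · have hf := hfar p.1 hp.1 q.1 hq.1 hst
        obtain ⟨pa, pb⟩ := aux_abs hδ hp.2
        obtain ⟨qa, qb⟩ := aux_abs hδ hq.2
        have e : T (γ p.1) - T (γ q.1) = T (Psi γ R₀ p - Psi γ R₀ q)
            + (q.2.1 • T (nu2 R₀ q.1) - p.2.1 • T (nu2 R₀ p.1))
            + (q.2.2 • T (nu3 R₀ q.1) - p.2.2 • T (nu3 R₀ p.1)) := by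
          simp only [Psi, map_add, map_smul, map_sub]
          module
        have u1 : ‖q.2.1 • T (nu2 R₀ q.1) - p.2.1 • T (nu2 R₀ p.1)‖ ≤ δ + δ := by
          refine (norm_sub_le _ _).trans (add_le_add ?_ ?_)
          · rw [norm_smul, hn2 _ hq.1, mul_one]; exact qa
          · rw [norm_smul, hn2 _ hp.1, mul_one]; exact pa
        have u2 : ‖q.2.2 • T (nu3 R₀ q.1) - p.2.2 • T (nu3 R₀ p.1)‖ ≤ δ + δ := by
          refine (norm_sub_le _ _).trans (add_le_add ?_ ?_)
          · rw [norm_smul, hn3 _ hq.1, mul_one]; exact qb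
          · rw [norm_smul, hn3 _ hp.1, mul_one]; exact pb
        have u3 := (e ▸ hf).trans norm_add₃_le
        have u4 : pdist p q ≤ L + 4 * δ := by
          have v1 := abs_sub p.2.1 q.2.1
          have v2 := abs_sub p.2.2 q.2.2
          linarith [pdist_le p q]
        have u5 := mul_le_mul_of_nonneg_left u4 hc.le
        rw [hT]
        linarith
      · have w1 : K0 * |p.1 - q.1| ≤ 1 / 4 := hηK ▸ mul_le_mul_of_nonneg_left hst hK0.le
        have w2 : (K0 * |p.1 - q.1| + (K2 + K3) * δ) * |p.1 - q.1| ≤ 1 / 2 * pdist p q :=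
          mul_le_mul (by linarith) hpd h0 (by norm_num)
        have w3 := mul_le_mul_of_nonneg_right hc1 hpd0
        linarith [hk.1]
    · have w1 : K0 * |p.1 - q.1| ≤ K0 * L := mul_le_mul_of_nonneg_left hL1 hK0.le
      have w2 : (K0 * |p.1 - q.1| + (K2 + K3) * δ) * |p.1 - q.1| ≤ (K0 * L + 1) * pdist p q :=
        mul_le_mul (by linarith) hpd h0 (by positivity)
      linarith [hk.2]
  refine ⟨δ, hδ, c, 2 + K0 * L, hc, ?_, main, ?_⟩
  · have : 0 < K0 * L := by positivity
    linarith
  · intro p hp q hq hpq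
    have h1 := (main p hp q hq).1
    rw [hpq, sub_self] at h1
    have h2 : enorm3 0 = 0 := by simp [enorm3]
    rw [h2] at h1
    have h3 : pdist p q ≤ 0 := by
      by_contra h
      push Not at h
      linarith [mul_pos hc h]
    have h4 := Real.sqrt_eq_zero'.1 (le_antisymm h3 (Real.sqrt_nonneg _))
    have s1 := sq_nonneg (p.1 - q.1)
    have s2 := sq_nonneg (p.2.1 - q.2.1)
    have s3 := sq_nonneg (p.2.2 - q.2.2)
    have z1 : p.1 - q.1 = 0 := pow_eq_zero_iff two_ne_zero |>.1 (by linarith)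
    have z2 : p.2.1 - q.2.1 = 0 := pow_eq_zero_iff two_ne_zero |>.1 (by linarith)
    have z3 : p.2.2 - q.2.2 = 0 := pow_eq_zero_iff two_ne_zero |>.1 (by linarith)
    exact Prod.ext (sub_eq_zero.1 z1) (Prod.ext (sub_eq_zero.1 z2) (sub_eq_zero.1 z3))
end
end

section
/- Let L > 0, let (h_j) be a sequence of positive numbers converging to 0, and for each j let f_j : (0,L) → ℝ^{3×3} be measurable with f_j(s) ∈ SO(3) for a.e. s ∈ (0,L). Suppose there is c > 0 such that for every j, every compact interval [a,b] ⊂ (0,L) and every δ ∈ ℝ with |δ| ≤ min(a, L−b), one has ∫_a^b ‖f_j(s+δ) − f_j(s)‖² ds ≤ c(|δ| + h_j)². Then there exist a subsequence (f_{j_k}) and a measurable map R̄ : (0,L) → ℝ^{3×3} with R̄(s) ∈ SO(3) for a.e. s, such that ∫_a^b ‖f_{j_k}(s) − R̄(s)‖² ds → 0 for every compact interval [a,b] ⊂ (0,L); moreover R̄ satisfies ∫_a^b ‖R̄(s+δ) − R̄(s)‖² ds ≤ c δ² for every such [a,b] and every |δ| ≤ min(a, L−b). -/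
open MeasureTheory Set

noncomputable section

open Filter Topology in
theorem fk_prim {E : Type*} [NormedAddCommGroup E] [NormedSpace ℝ E] [ProperSpace E]
    (g : ℕ → ℝ → E) (K : ℝ) (hK : ∀ j s, ‖g j s‖ ≤ K)
    (hintg : ∀ j a b, IntervalIntegrable (g j) volume a b) :
    ∃ φ : ℕ → ℕ, StrictMono φ ∧ ∀ x : ℝ, ∃ l : E,
      Tendsto (fun k => ∫ s in (0:ℝ)..x, g (φ k) s) atTop (𝓝 l) := by
  have hcpt : IsCompact (Set.pi univ (fun q : ℚ => Metric.closedBall (0:E) (K * |(q:ℝ) - 0|))) :=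
    isCompact_univ_pi (fun q => isCompact_closedBall _ _)
  have hmem : ∀ j, (fun q : ℚ => ∫ s in (0:ℝ)..q, g j s) ∈
      Set.pi univ (fun q : ℚ => Metric.closedBall (0:E) (K * |(q:ℝ) - 0|)) := by
    intro j q _
    rw [mem_closedBall_zero_iff]
    exact intervalIntegral.norm_integral_le_of_norm_le_const (fun x _ => hK j x)
  obtain ⟨l, _, φ, hφ, hl⟩ := hcpt.tendsto_subseq hmem
  refine ⟨φ, hφ, fun x => ?_⟩
  rw [tendsto_pi_nhds] at hl
  have hK0 : 0 ≤ K := (norm_nonneg _).trans (hK 0 0)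
  apply cauchySeq_tendsto_of_complete
  rw [Metric.cauchySeq_iff]
  intro ε hε
  obtain ⟨q, hq1, hq2⟩ := exists_rat_btwn (show x < x + ε / (4 * (K + 1)) by
    have : 0 < ε / (4 * (K + 1)) := by positivity
    linarith)
  have hc := (hl q).cauchySeq
  rw [Metric.cauchySeq_iff] at hc
  obtain ⟨N, hN⟩ := hc (ε / 2) (by positivity)
  refine ⟨N, fun m hm n hn => ?_⟩
  have key : ∀ j, dist (∫ s in (0:ℝ)..x, g j s) (∫ s in (0:ℝ)..q, g j s) < ε / 4 := by
    intro j
    rw [dist_comm, dist_eq_norm, intervalIntegral.integral_interval_sub_left (hintg _ _ _) (hintg _ _ _)]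
    calc _ ≤ K * |(q:ℝ) - x| :=
          intervalIntegral.norm_integral_le_of_norm_le_const (fun x _ => hK j x)
      _ ≤ (K+1) * |(q:ℝ) - x| := by gcongr; linarith
      _ < (K+1) * (ε / (4 * (K + 1))) := by
          gcongr
          rw [abs_of_pos] <;> linarith
      _ = ε / 4 := by field_simp
  have h1 := key (φ m)
  have h2 := key (φ n)
  have h3 := hN m hm n hn
  simp only [Function.comp] at h3
  have h4 := dist_triangle4 (∫ s in (0:ℝ)..x, g (φ m) s) (∫ s in (0:ℝ)..q, g (φ m) s)
    (∫ s in (0:ℝ)..q, g (φ n) s) (∫ s in (0:ℝ)..x, g (φ n) s)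
  rw [dist_comm (∫ s in (0:ℝ)..q, g (φ n) s)] at h4
  linarith

theorem fk_bdd_int {E : Type*} [NormedAddCommGroup E] {μ : Measure ℝ} [IsFiniteMeasure μ]
    {g : ℝ → E} (K : ℝ) (hK : ∀ s, ‖g s‖ ≤ K) (hm : AEStronglyMeasurable g μ) :
    Integrable g μ := Integrable.of_bound hm K (ae_of_all _ hK)

theorem fk_bdd_intv {E : Type*} [NormedAddCommGroup E]
    {g : ℝ → E} (K : ℝ) (hK : ∀ s, ‖g s‖ ≤ K) (hm : StronglyMeasurable g) (a b : ℝ) :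
    IntervalIntegrable g volume a b :=
  ⟨fk_bdd_int K hK hm.aestronglyMeasurable, fk_bdd_int K hK hm.aestronglyMeasurable⟩

theorem fk_avg {E : Type*} [NormedAddCommGroup E] [NormedSpace ℝ E] [CompleteSpace E]
    (g : ℝ → E) (hm : StronglyMeasurable g) (K : ℝ) (hK : ∀ s, ‖g s‖ ≤ K)
    (L : ℝ) (hL : 0 < L) (ε η : ℝ) (hε : 0 < ε)
    (hη : ∀ δ, 0 < δ → δ ≤ ε → ∫ s in (0:ℝ)..L, ‖g (s + δ) - g s‖ ≤ η) :
    ∫ s in (0:ℝ)..L, ‖ε⁻¹ • ((∫ t in (0:ℝ)..(s+ε), g t) - ∫ t in (0:ℝ)..s, g t) - g s‖ ≤ η := by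
  have hi := fun a b => fk_bdd_intv K hK hm a b
  have hm2 : StronglyMeasurable (fun p : ℝ × ℝ => ‖g (p.1 + p.2) - g p.1‖) :=
    ((hm.comp_measurable (measurable_fst.add measurable_snd)).sub
      (hm.comp_measurable measurable_fst)).norm
  have hb2 : ∀ p : ℝ × ℝ, ‖‖g (p.1 + p.2) - g p.1‖‖ ≤ K + K := fun p => by
    rw [norm_norm]; exact (norm_sub_le _ _).trans (add_le_add (hK _) (hK _))
  have hptw : ∀ s, ‖ε⁻¹ • ((∫ t in (0:ℝ)..(s+ε), g t) - ∫ t in (0:ℝ)..s, g t) - g s‖ ≤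
      ε⁻¹ * ∫ t in (0:ℝ)..ε, ‖g (s + t) - g s‖ := by
    intro s
    have e1 : ε⁻¹ • ((∫ t in (0:ℝ)..(s+ε), g t) - ∫ t in (0:ℝ)..s, g t) - g s
        = ε⁻¹ • ∫ t in (0:ℝ)..ε, (g (s + t) - g s) := by
      rw [intervalIntegral.integral_interval_sub_left (hi _ _) (hi _ _)]
      rw [intervalIntegral.integral_sub
        (fk_bdd_intv K (fun t => hK (s + t)) (hm.comp_measurable (measurable_const_add s)) _ _)
        (by simp)]
      rw [intervalIntegral.integral_comp_add_left (fun t => g t) s]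
      simp [smul_sub, smul_smul, hε.ne']
    rw [e1, norm_smul, Real.norm_of_nonneg (by positivity)]
    gcongr
    exact intervalIntegral.norm_integral_le_integral_norm hε.le
  have hprod : Integrable (fun p : ℝ × ℝ => ‖g (p.1 + p.2) - g p.1‖)
      ((volume.restrict (Ioc 0 L)).prod (volume.restrict (Ioc 0 ε))) :=
    Integrable.of_bound hm2.aestronglyMeasurable (K + K) (ae_of_all _ hb2)
  have hswap : ∫ s in (0:ℝ)..L, ∫ t in (0:ℝ)..ε, ‖g (s + t) - g s‖ =
      ∫ t in (0:ℝ)..ε, ∫ s in (0:ℝ)..L, ‖g (s + t) - g s‖ := by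
    simp only [intervalIntegral.integral_of_le hL.le, intervalIntegral.integral_of_le hε.le]
    exact integral_integral_swap hprod
  have hI1 : IntervalIntegrable (fun s => ∫ t in (0:ℝ)..ε, ‖g (s + t) - g s‖) volume 0 L := by
    rw [intervalIntegrable_iff_integrableOn_Ioc_of_le hL.le]
    simp only [intervalIntegral.integral_of_le hε.le]
    exact hprod.integral_prod_left
  have hI2 : IntervalIntegrable (fun t => ∫ s in (0:ℝ)..L, ‖g (s + t) - g s‖) volume 0 ε := by
    rw [intervalIntegrable_iff_integrableOn_Ioc_of_le hε.le]
    simp only [intervalIntegral.integral_of_le hL.le]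
    exact hprod.integral_prod_right
  have hcont : Continuous (fun s => ∫ t in (0:ℝ)..s, g t) :=
    intervalIntegral.continuous_primitive hi 0
  have hI0 : IntervalIntegrable (fun s => ‖ε⁻¹ • ((∫ t in (0:ℝ)..(s+ε), g t)
      - ∫ t in (0:ℝ)..s, g t) - g s‖) volume 0 L := by
    have hcc : Continuous (fun s => ε⁻¹ • ((∫ t in (0:ℝ)..(s+ε), g t)
      - ∫ t in (0:ℝ)..s, g t)) :=
      ((hcont.comp (continuous_id.add continuous_const)).sub hcont).const_smul _
    exact ((hcc.intervalIntegrable 0 L).sub (hi 0 L)).norm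
  calc _ ≤ ∫ s in (0:ℝ)..L, ε⁻¹ * ∫ t in (0:ℝ)..ε, ‖g (s + t) - g s‖ :=
        intervalIntegral.integral_mono_on hL.le hI0 (hI1.const_mul _) (fun s _ => hptw s)
    _ = ε⁻¹ * ∫ t in (0:ℝ)..ε, ∫ s in (0:ℝ)..L, ‖g (s + t) - g s‖ := by
        rw [intervalIntegral.integral_const_mul, hswap]
    _ ≤ ε⁻¹ * ∫ t in (0:ℝ)..ε, η := by
        gcongr
        exact intervalIntegral.integral_mono_on_of_le_Ioo hε.le hI2 (by simp)
          (fun t ht => hη t ht.1 ht.2.le)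
    _ = η := by simp [hε.ne']

open Filter Topology in
theorem fk_ae {E : Type*} [NormedAddCommGroup E] [NormedSpace ℝ E] [ProperSpace E]
    (g : ℕ → ℝ → E) (hm : ∀ j, StronglyMeasurable (g j)) (K : ℝ) (hK : ∀ j s, ‖g j s‖ ≤ K)
    (L : ℝ) (hL : 0 < L)
    (hη : ∀ η > 0, ∃ ε > 0, ∃ N : ℕ, ∀ j ≥ N, ∀ δ, 0 < δ → δ ≤ ε →
      ∫ s in (0:ℝ)..L, ‖g j (s + δ) - g j s‖ ≤ η) :
    ∃ φ : ℕ → ℕ, StrictMono φ ∧ ∃ U : ℝ → E, StronglyMeasurable U ∧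
      ∀ᵐ s ∂(volume.restrict (Ioc 0 L)), Tendsto (fun k => g (φ k) s) atTop (𝓝 (U s)) := by
  have hi := fun j a b => fk_bdd_intv K (hK j) (hm j) a b
  have hK0 : 0 ≤ K := (norm_nonneg _).trans (hK 0 0)
  obtain ⟨φ, hφ, hl⟩ := fk_prim g K hK hi
  choose G hG using hl
  have hcauchy : ∀ η > 0, ∃ N, ∀ m ≥ N, ∀ n ≥ N,
      ∫ s in (0:ℝ)..L, ‖g (φ m) s - g (φ n) s‖ ≤ 4 * η := by
    intro η hη0
    obtain ⟨ε, hε, N, hN⟩ := hη η hη0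
    set A : ℕ → ℝ → E := fun k s => ε⁻¹ • ((∫ t in (0:ℝ)..(s+ε), g (φ k) t)
      - ∫ t in (0:ℝ)..s, g (φ k) t) with hA
    have hAc : ∀ k, Continuous (A k) := fun k => by
      have hcont : Continuous (fun s => ∫ t in (0:ℝ)..s, g (φ k) t) :=
        intervalIntegral.continuous_primitive (hi _) 0
      exact ((hcont.comp (continuous_id.add continuous_const)).sub hcont).const_smul _
    set B : ℝ → E := fun s => ε⁻¹ • (G (s + ε) - G s) with hB
    have hAB : ∀ s, Tendsto (fun k => A k s) atTop (𝓝 (B s)) := fun s =>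
      ((hG (s+ε)).sub (hG s)).const_smul _
    have hBm : StronglyMeasurable B :=
      stronglyMeasurable_of_tendsto atTop (fun k => (hAc k).stronglyMeasurable)
        (tendsto_pi_nhds.2 hAB)
    have hAK : ∀ k s, ‖A k s‖ ≤ K := by
      intro k s
      simp only [hA]
      rw [intervalIntegral.integral_interval_sub_left (hi _ _ _) (hi _ _ _), norm_smul,
        Real.norm_of_nonneg (by positivity)]
      calc _ ≤ ε⁻¹ * (K * |s + ε - s|) := by
            gcongr
            exact intervalIntegral.norm_integral_le_of_norm_le_const (fun x _ => hK _ x)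
        _ = K := by
            rw [add_sub_cancel_left, abs_of_pos hε]; field_simp
    have hBK : ∀ s, ‖B s‖ ≤ K := fun s =>
      le_of_tendsto (hAB s).norm (Eventually.of_forall (fun k => hAK k s))
    have hdct : Tendsto (fun k => ∫ s in (0:ℝ)..L, ‖A k s - B s‖) atTop
        (𝓝 (∫ s in (0:ℝ)..L, (0:ℝ))) := by
      apply intervalIntegral.tendsto_integral_filter_of_dominated_convergence (fun _ => K + K)
      · exact Eventually.of_forall fun k =>
          ((hAc k).stronglyMeasurable.sub hBm).norm.aestronglyMeasurable
      · exact Eventually.of_forall fun k => ae_of_all _ fun s _ => by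
          rw [norm_norm]; exact (norm_sub_le _ _).trans (add_le_add (hAK _ _) (hBK _))
      · simp
      · refine ae_of_all _ fun s _ => ?_
        have := ((hAB s).sub_const (B s)).norm
        simpa using this
    rw [intervalIntegral.integral_zero] at hdct
    have hev := hdct.eventually (gt_mem_nhds hη0)
    rw [eventually_atTop] at hev
    obtain ⟨N', hN'⟩ := hev
    have hiA : ∀ k, IntervalIntegrable (A k) volume 0 L := fun k => (hAc k).intervalIntegrable _ _
    have hiB : IntervalIntegrable B volume 0 L := fk_bdd_intv K hBK hBm _ _
    have h1 : ∀ m ≥ max N N', ∫ s in (0:ℝ)..L, ‖A m s - g (φ m) s‖ ≤ η := fun m hm' =>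
      fk_avg (g (φ m)) (hm _) K (hK _) L hL ε η hε
        (hN (φ m) (((le_max_left _ _).trans hm').trans (hφ.id_le m)))
    refine ⟨max N N', fun m hm' n hn' => ?_⟩
    have a1 := h1 m hm'
    have a2 := h1 n hn'
    have a3 := (hN' m ((le_max_right _ _).trans hm')).le
    have a4 := (hN' n ((le_max_right _ _).trans hn')).le
    have i1 : ∀ m, IntervalIntegrable (fun s => ‖A m s - g (φ m) s‖) volume 0 L :=
      fun m => ((hiA m).sub (hi _ _ _)).norm
    have i2 : ∀ m, IntervalIntegrable (fun s => ‖A m s - B s‖) volume 0 L :=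
      fun m => ((hiA m).sub hiB).norm
    calc _ ≤ ∫ s in (0:ℝ)..L, ((‖A m s - g (φ m) s‖ + ‖A n s - g (φ n) s‖) +
            (‖A m s - B s‖ + ‖A n s - B s‖)) := by
          apply intervalIntegral.integral_mono_on hL.le ((hi _ _ _).sub (hi _ _ _)).norm
            (((i1 m).add (i1 n)).add ((i2 m).add (i2 n)))
          intro s _
          have e : g (φ m) s - g (φ n) s = (-(A m s - g (φ m) s) + (A n s - g (φ n) s)) +
            ((A m s - B s) + -(A n s - B s)) := by abel
          rw [e]
          refine (norm_add_le _ _).trans (add_le_add ?_ ?_)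
          · refine (norm_add_le _ _).trans ?_
            rw [norm_neg]
          · refine (norm_add_le _ _).trans ?_
            rw [norm_neg]
      _ ≤ 4 * η := by
          rw [intervalIntegral.integral_add ((i1 m).add (i1 n)) ((i2 m).add (i2 n)),
            intervalIntegral.integral_add (i1 m) (i1 n),
            intervalIntegral.integral_add (i2 m) (i2 n)]
          linarith
  have hintg : ∀ k, Integrable (g (φ k)) (volume.restrict (Ioc 0 L)) := fun k =>
    fk_bdd_int K (hK _) (hm _).aestronglyMeasurable
  have hcs : CauchySeq (fun k => (hintg k).toL1 (g (φ k))) := by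
    rw [Metric.cauchySeq_iff]
    intro η hη0
    obtain ⟨N, hN⟩ := hcauchy (η / 5) (by positivity)
    refine ⟨N, fun m hm' n hn' => ?_⟩
    have := hN m hm' n hn'
    rw [dist_eq_norm, ← Integrable.toL1_sub _ _ (hintg m) (hintg n),
      L1.norm_of_fun_eq_integral_norm]
    rw [intervalIntegral.integral_of_le hL.le] at this
    simp only [Pi.sub_apply]
    linarith
  obtain ⟨U, hU⟩ := cauchySeq_tendsto_of_complete hcs
  obtain ⟨ψ, hψ, hψ2⟩ := (tendstoInMeasure_of_tendsto_Lp hU).exists_seq_tendsto_ae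
  refine ⟨φ ∘ ψ, hφ.comp hψ, U, Lp.stronglyMeasurable U, ?_⟩
  have hco : ∀ᵐ s ∂(volume.restrict (Ioc 0 L)), ∀ k, (hintg k).toL1 (g (φ k)) s = g (φ k) s :=
    ae_all_iff.2 fun k => (hintg k).coeFn_toL1
  filter_upwards [hψ2, hco] with s h1 h2
  simpa only [h2, Function.comp] using h1

theorem SO3_entry {R : M3} (hR : R ∈ SO3) (i k : Fin 3) : |R i k| ≤ 1 := by
  have h := congrFun (congrFun hR.1 k) k
  rw [Matrix.mul_apply] at h
  simp only [Matrix.transpose_apply, Matrix.one_apply_eq] at h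
  have h2 : R i k * R i k ≤ 1 := by
    rw [← h]
    exact Finset.single_le_sum (f := fun i => R i k * R i k)
      (fun i _ => mul_self_nonneg _) (Finset.mem_univ i)
  rw [← sq_le_one_iff_abs_le_one]
  nlinarith

theorem SO3_closed : IsClosed SO3 := by
  have h1 : IsClosed {R : M3 | R.transpose * R = 1} :=
    isClosed_eq (by fun_prop) continuous_const
  have h2 : IsClosed {R : M3 | R.det = 1} :=
    isClosed_eq (by fun_prop) continuous_const
  exact h1.inter h2

theorem frob3_sq (A : M3) : frob3 A ^ 2 = ∑ i, ∑ j, (A i j) ^ 2 :=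
  Real.sq_sqrt (Finset.sum_nonneg fun _ _ => Finset.sum_nonneg fun _ _ => sq_nonneg _)

theorem frob3_sq_le {A B : M3} (hA : A ∈ SO3) (hB : B ∈ SO3) : frob3 (A - B) ^ 2 ≤ 36 := by
  rw [frob3_sq]
  calc _ ≤ ∑ i : Fin 3, ∑ j : Fin 3, (4:ℝ) := by
        refine Finset.sum_le_sum fun i _ => Finset.sum_le_sum fun j _ => ?_
        have h1 := abs_le.1 (SO3_entry hA i j)
        have h2 := abs_le.1 (SO3_entry hB i j)
        rw [Matrix.sub_apply]
        nlinarith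
    _ = 36 := by norm_num

/-- Entrywise truncation to `[-1,1]`, as a Euclidean vector. -/
def trunc3 (A : M3) : EuclideanSpace ℝ (Fin 3 × Fin 3) :=
  WithLp.toLp 2 (fun p => max (-1) (min 1 (A p.1 p.2)))

theorem trunc3_apply {A : M3} (hA : A ∈ SO3) (i k : Fin 3) : trunc3 A (i, k) = A i k := by
  have h1 := abs_le.1 (SO3_entry hA i k)
  simp [trunc3, h1.1, h1.2]

theorem trunc3_norm (A : M3) : ‖trunc3 A‖ ≤ 3 := by
  rw [EuclideanSpace.norm_eq]
  apply Real.sqrt_le_iff.2 ⟨by norm_num, ?_⟩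
  calc _ ≤ ∑ i : Fin 3 × Fin 3, (1:ℝ) := by
        refine Finset.sum_le_sum fun p _ => ?_
        have : |trunc3 A p| ≤ 1 := by
          simp only [trunc3]
          rw [abs_le]
          exact ⟨le_max_left _ _, max_le (by norm_num) (min_le_left _ _)⟩
        rw [Real.norm_eq_abs]
        nlinarith [abs_nonneg (trunc3 A p)]
    _ ≤ 3 ^ 2 := by norm_num

theorem trunc3_sub {A B : M3} (hA : A ∈ SO3) (hB : B ∈ SO3) :
    ‖trunc3 A - trunc3 B‖ ^ 2 = frob3 (A - B) ^ 2 := by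
  rw [frob3_sq, EuclideanSpace.norm_sq_eq, Fintype.sum_prod_type]
  simp [trunc3_apply hA, trunc3_apply hB]

theorem ae_shift {P : ℝ → Prop} {L : ℝ} (hP : ∀ᵐ s ∂(volume.restrict (Icc (0:ℝ) L)), P s)
    {a b δ : ℝ} (h1 : 0 ≤ a + δ) (h2 : b + δ ≤ L) :
    ∀ᵐ s ∂(volume.restrict (Icc a b)), P (s + δ) := by
  rw [ae_restrict_iff' measurableSet_Icc] at hP ⊢
  have := (measurePreserving_add_right volume δ).quasiMeasurePreserving.ae hP
  filter_upwards [this] with s hs hs2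
  exact hs ⟨by linarith [hs2.1], by linarith [hs2.2]⟩

theorem trunc3_meas {f : ℝ → M3} (hmeas : ∀ i k, Measurable fun s => f s i k) :
    StronglyMeasurable fun s => trunc3 (f s) := by
  apply Measurable.stronglyMeasurable
  unfold trunc3
  apply (WithLp.measurable_toLp 2 _).comp
  exact measurable_pi_lambda _ fun p => measurable_const.max (measurable_const.min (hmeas p.1 p.2))

theorem fk_modulus (L : ℝ)
    (h : ℝ) (f : ℝ → M3) (hmeas : ∀ i k, Measurable fun s => f s i k)
    (hSO : ∀ᵐ s ∂(volume.restrict (Icc (0:ℝ) L)), f s ∈ SO3)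
    (c : ℝ) (δ η : ℝ) (hη : 0 < η) (hδ : 0 < δ) (hδL : δ ≤ L - δ)
    (hquot : ∫ s in Icc δ (L - δ), frob3 (f (s + δ) - f s) ^ 2 ≤ c * (|δ| + h) ^ 2) :
    ∫ s in (0:ℝ)..L, ‖trunc3 (f (s + δ)) - trunc3 (f s)‖ ≤
      12 * δ + (η * L + η⁻¹ * (c * (δ + h) ^ 2)) := by
  have hm := trunc3_meas hmeas
  have hm2 : StronglyMeasurable fun s => ‖trunc3 (f (s + δ)) - trunc3 (f s)‖ :=
    ((hm.comp_measurable (measurable_add_const δ)).sub hm).norm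
  have hb : ∀ s, ‖‖trunc3 (f (s + δ)) - trunc3 (f s)‖‖ ≤ 6 := fun s => by
    rw [norm_norm]
    linarith [norm_sub_le (trunc3 (f (s + δ))) (trunc3 (f s)), trunc3_norm (f (s + δ)),
      trunc3_norm (f s)]
  have hi := fun a b => fk_bdd_intv 6 hb hm2 a b
  have hi2 : IntervalIntegrable (fun s => ‖trunc3 (f (s + δ)) - trunc3 (f s)‖ ^ 2) volume δ (L - δ) := by
    refine fk_bdd_intv 36 (fun s => ?_) (hm2.pow 2) _ _
    have := hb s
    rw [Pi.pow_apply, norm_pow]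
    nlinarith [norm_nonneg ‖trunc3 (f (s + δ)) - trunc3 (f s)‖]
  rw [← intervalIntegral.integral_add_adjacent_intervals (hi 0 δ) (hi δ L),
    ← intervalIntegral.integral_add_adjacent_intervals (hi δ (L - δ)) (hi (L - δ) L)]
  have e1 : ∫ s in (0:ℝ)..δ, ‖trunc3 (f (s + δ)) - trunc3 (f s)‖ ≤ 6 * δ := by
    have := intervalIntegral.norm_integral_le_of_norm_le_const (a := 0) (b := δ) (fun x _ => hb x)
    rw [sub_zero, abs_of_pos hδ] at this
    exact (le_abs_self _).trans this
  have e2 : ∫ s in (L - δ)..L, ‖trunc3 (f (s + δ)) - trunc3 (f s)‖ ≤ 6 * δ := by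
    have := intervalIntegral.norm_integral_le_of_norm_le_const (a := L - δ) (b := L) (fun x _ => hb x)
    rw [sub_sub_cancel, abs_of_pos hδ] at this
    exact (le_abs_self _).trans this
  have e3 : ∫ s in δ..(L - δ), ‖trunc3 (f (s + δ)) - trunc3 (f s)‖ ^ 2 ≤ c * (δ + h) ^ 2 := by
    rw [abs_of_pos hδ] at hquot
    refine le_trans (le_of_eq ?_) hquot
    rw [intervalIntegral.integral_of_le hδL, ← integral_Icc_eq_integral_Ioc]
    apply integral_congr_ae
    filter_upwards [ae_shift hSO (a := δ) (b := L - δ) (δ := δ) (by linarith) (by linarith),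
      ae_shift hSO (a := δ) (b := L - δ) (δ := 0) (by linarith) (by linarith)] with s h1 h2
    rw [add_zero] at h2
    exact trunc3_sub h1 h2
  have e4 : ∫ s in δ..(L - δ), ‖trunc3 (f (s + δ)) - trunc3 (f s)‖ ≤
      η * L + η⁻¹ * (c * (δ + h) ^ 2) := by
    calc _ ≤ ∫ s in δ..(L - δ), (η + η⁻¹ * ‖trunc3 (f (s + δ)) - trunc3 (f s)‖ ^ 2) := by
          apply intervalIntegral.integral_mono_on hδL (hi _ _) (by
            exact (intervalIntegrable_const).add (hi2.const_mul _))
          intro s _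
          set v := ‖trunc3 (f (s + δ)) - trunc3 (f s)‖
          have : 0 ≤ η⁻¹ * ((v - η / 2) ^ 2 + η ^ 2 * (3 / 4)) := by positivity
          have e : η⁻¹ * ((v - η / 2) ^ 2 + η ^ 2 * (3 / 4)) = η + η⁻¹ * v ^ 2 - v := by
            field_simp; ring
          linarith
      _ = η * (L - δ - δ) + η⁻¹ * ∫ s in δ..(L - δ), ‖trunc3 (f (s + δ)) - trunc3 (f s)‖ ^ 2 := by
          rw [intervalIntegral.integral_add intervalIntegrable_const (hi2.const_mul _),
            intervalIntegral.integral_const_mul, intervalIntegral.integral_const, smul_eq_mul,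
            mul_comm η]
      _ ≤ _ := by
          gcongr
          linarith
  linarith

theorem frechet_kolmogorov_SO3_compactness
    (L : ℝ) (hL : 0 < L)
    (h : ℕ → ℝ) (hpos : ∀ j, 0 < h j)
    (hlim : Filter.Tendsto h Filter.atTop (nhds 0))
    (f : ℕ → ℝ → M3) (hmeas : ∀ j i k, Measurable fun s => f j s i k)
    (hSO : ∀ j, ∀ᵐ s ∂(volume.restrict (Ioo (0:ℝ) L)), f j s ∈ SO3)
    (c : ℝ) (hc : 0 < c)
    (hquot : ∀ j, ∀ a b : ℝ, 0 < a → a ≤ b → b < L → ∀ δ : ℝ, |δ| ≤ min a (L - b) →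
      ∫ s in Icc a b, frob3 (f j (s + δ) - f j s) ^ 2 ≤ c * (|δ| + h j) ^ 2) :
    ∃ φ : ℕ → ℕ, StrictMono φ ∧ ∃ Rb : ℝ → M3,
      (∀ i k, Measurable fun s => Rb s i k) ∧
      (∀ᵐ s ∂(volume.restrict (Ioo (0:ℝ) L)), Rb s ∈ SO3) ∧
      (∀ a b : ℝ, 0 < a → a ≤ b → b < L →
        Filter.Tendsto (fun k => ∫ s in Icc a b, frob3 (f (φ k) s - Rb s) ^ 2)
          Filter.atTop (nhds 0)) ∧
      (∀ a b : ℝ, 0 < a → a ≤ b → b < L → ∀ δ : ℝ, |δ| ≤ min a (L - b) →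
        ∫ s in Icc a b, frob3 (Rb (s + δ) - Rb s) ^ 2 ≤ c * δ ^ 2) := by
  have hIcc : ∀ {P : ℝ → Prop}, (∀ᵐ s ∂(volume.restrict (Ioo (0:ℝ) L)), P s) →
      ∀ᵐ s ∂(volume.restrict (Icc (0:ℝ) L)), P s := fun {P} hP => by
    rwa [← Measure.restrict_congr_set (Ioo_ae_eq_Icc (μ := volume) (a := (0:ℝ)) (b := L))]
  have hSO' : ∀ j, ∀ᵐ s ∂(volume.restrict (Icc (0:ℝ) L)), f j s ∈ SO3 := fun j => hIcc (hSO j)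
  have hmod : ∀ η > 0, ∃ ε > 0, ∃ N : ℕ, ∀ j ≥ N, ∀ δ, 0 < δ → δ ≤ ε →
      ∫ s in (0:ℝ)..L, ‖trunc3 (f j (s + δ)) - trunc3 (f j s)‖ ≤ η := by
    intro η hη
    set η' := η / (3 * L) with hη'
    have hη'0 : 0 < η' := by positivity
    have hcont : Filter.Tendsto (fun e : ℝ => 12 * e + (η' * L + η'⁻¹ * (c * (e + e) ^ 2)))
        (nhds 0) (nhds (12 * 0 + (η' * L + η'⁻¹ * (c * (0 + 0) ^ 2)))) :=
      Continuous.tendsto (by fun_prop) 0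
    have hlt : 12 * 0 + (η' * L + η'⁻¹ * (c * (0 + 0) ^ 2)) < η := by
      have : η' * L = η / 3 := by rw [hη']; field_simp
      rw [this]; simp; linarith
    have hev := hcont.eventually (gt_mem_nhds hlt)
    rw [Metric.eventually_nhds_iff] at hev
    obtain ⟨r, hr, hr2⟩ := hev
    set ε := min (r / 2) (L / 2) with hε
    have hε0 : 0 < ε := by positivity
    have hεr : ε < r := lt_of_le_of_lt (min_le_left _ _) (by linarith)
    have hεL : ε ≤ L / 2 := min_le_right _ _
    have hval := hr2 (y := ε) (by rw [Real.dist_eq, sub_zero, abs_of_pos hε0]; exact hεr)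
    have hh := hlim.eventually (gt_mem_nhds hε0)
    rw [Filter.eventually_atTop] at hh
    obtain ⟨N, hN⟩ := hh
    refine ⟨ε, hε0, N, fun j hj δ hδ hδε => ?_⟩
    refine (fk_modulus L (h j) (f j) (hmeas j) (hSO' j) c δ η' hη'0 hδ (by linarith)
      (hquot j δ (L - δ) hδ (by linarith) (by linarith) δ ?_)).trans ?_
    · rw [sub_sub_cancel, min_self, abs_of_pos hδ]
    · refine le_trans ?_ hval.le
      have := (hN j hj).le
      have := (hpos j).le
      gcongr
  obtain ⟨φ, hφ, U, hUm, hU⟩ := fk_ae (fun j s => trunc3 (f j s)) (fun j => trunc3_meas (hmeas j)) 3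
    (fun j s => trunc3_norm _) L hL hmod
  let Rb : ℝ → M3 := fun s => Matrix.of fun i k => U s (i, k)
  have hRbm : ∀ i k, Measurable fun s => Rb s i k := fun i k =>
    (measurable_pi_apply (i, k)).comp ((WithLp.measurable_ofLp 2 _).comp hUm.measurable)
  have hgood : ∀ᵐ s ∂(volume.restrict (Icc (0:ℝ) L)), (∀ j, f j s ∈ SO3) ∧ Rb s ∈ SO3 ∧
      Filter.Tendsto (fun k => f (φ k) s) Filter.atTop (nhds (Rb s)) := by
    rw [Measure.restrict_congr_set Ioc_ae_eq_Icc] at hU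
    filter_upwards [hU, ae_all_iff.2 hSO'] with s h1 h2
    have h3 : Filter.Tendsto (fun k => f (φ k) s) Filter.atTop (nhds (Rb s)) := by
      refine tendsto_pi_nhds.2 fun i => tendsto_pi_nhds.2 fun k => ?_
      have := ((show Continuous fun v : EuclideanSpace ℝ (Fin 3 × Fin 3) => v (i, k) by fun_prop).tendsto
        (U s)).comp h1
      refine this.congr fun n => ?_
      exact trunc3_apply (h2 _) i k
    exact ⟨h2, SO3_closed.mem_of_tendsto h3 (Filter.Eventually.of_forall fun k => h2 _), h3⟩
  have hfc : Continuous fun A : M3 => frob3 A ^ 2 := by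
    simp only [frob3_sq]; fun_prop
  have hfm : ∀ {u v : ℝ → M3}, (∀ i k, Measurable fun s => u s i k) →
      (∀ i k, Measurable fun s => v s i k) → Measurable fun s => frob3 (u s - v s) ^ 2 := by
    intro u v hu hv
    simp only [frob3_sq, Matrix.sub_apply]
    exact Finset.measurable_sum _ fun i _ => Finset.measurable_sum _ fun k _ =>
      ((hu i k).sub (hv i k)).pow_const 2
  refine ⟨φ, hφ, Rb, hRbm, ?_, ?_, ?_⟩
  · have := ae_restrict_of_ae_restrict_of_subset Ioo_subset_Icc_self hgood
    filter_upwards [this] with s hs using hs.2.1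
  · intro a b ha hab hb
    have h0 := ae_shift hgood (a := a) (b := b) (δ := 0) (by linarith) (by linarith)
    simp only [add_zero] at h0
    have : Filter.Tendsto (fun k => ∫ s in Icc a b, frob3 (f (φ k) s - Rb s) ^ 2)
          Filter.atTop (nhds (∫ s in Icc a b, (0:ℝ))) := by
      apply tendsto_integral_of_dominated_convergence (fun _ => (36:ℝ))
      · exact fun k => (hfm (hmeas _) hRbm).aestronglyMeasurable
      · simp
      · intro k
        filter_upwards [h0] with s hs
        rw [Real.norm_of_nonneg (sq_nonneg _)]
        exact frob3_sq_le (hs.1 _) hs.2.1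
      · filter_upwards [h0] with s hs
        have := (hfc.tendsto _).comp (hs.2.2.sub_const (Rb s))
        simpa [Function.comp_def, frob3] using this
    simpa using this
  · intro a b ha hab hb δ hδ
    have hδ' := abs_le.1 hδ
    have hδ1 := min_le_left a (L - b)
    have hδ2 := min_le_right a (L - b)
    have h0 := ae_shift hgood (a := a) (b := b) (δ := 0) (by linarith) (by linarith)
    have hs1 := ae_shift hgood (a := a) (b := b) (δ := δ) (by linarith) (by linarith)
    simp only [add_zero] at h0
    have hsh : ∀ {u : ℝ → M3}, (∀ i k, Measurable fun s => u s i k) →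
        ∀ i k, Measurable fun s => u (s + δ) i k := fun hu i k =>
      (hu i k).comp (measurable_add_const δ)
    have ht : Filter.Tendsto (fun k => ∫ s in Icc a b, frob3 (f (φ k) (s + δ) - f (φ k) s) ^ 2)
          Filter.atTop (nhds (∫ s in Icc a b, frob3 (Rb (s + δ) - Rb s) ^ 2)) := by
      apply tendsto_integral_of_dominated_convergence (fun _ => (36:ℝ))
      · exact fun k => (hfm (hsh (hmeas _)) (hmeas _)).aestronglyMeasurable
      · simp
      · intro k
        filter_upwards [h0, hs1] with s hs hs'
        rw [Real.norm_of_nonneg (sq_nonneg _)]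
        exact frob3_sq_le (hs'.1 _) (hs.1 _)
      · filter_upwards [h0, hs1] with s hs hs'
        exact (hfc.tendsto _).comp (hs'.2.2.sub hs.2.2)
    have hr : Filter.Tendsto (fun k => c * (|δ| + h (φ k)) ^ 2) Filter.atTop
        (nhds (c * (|δ| + 0) ^ 2)) :=
      (((hlim.comp hφ.tendsto_atTop).const_add _).pow 2).const_mul _
    rw [add_zero, sq_abs] at hr
    exact le_of_tendsto_of_tendsto' ht hr fun k => hquot _ a b ha hab hb δ hδ
end
end

section
/- Let v ∈ C²([0,L];ℝ³) and d₂, d₃ ∈ C¹([0,L];ℝ³) be such that R(s) := (v′(s)|d₂(s)|d₃(s)) ∈ SO(3) for every s ∈ [0,L], and let q ∈ C¹([0,L];ℝ³) and β ∈ C¹(cl Ω;ℝ³). For h > 0 define v⁽ʰ⁾ : Ω → ℝ³ by v⁽ʰ⁾(s,ξ,ζ) := v(s) + hξd₂(s) + hζd₃(s) + hq(s) + h²β(s,ξ,ζ). Then lim_{h→0⁺} (1/h²) ∫_Ω W(s,ξ,ζ, (∇_h v⁽ʰ⁾)(∇_hΨ⁽ʰ⁾)⁻¹) det(∇_hΨ⁽ʰ⁾)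 ds dξ dζ = ½ ∫_Ω Q₃(s,ξ,ζ, G_{q,β}(s,ξ,ζ)) ds dξ dζ, where G_{q,β}(s,ξ,ζ) := R₀(s) [ (R(s)ᵀR′(s) − R₀(s)ᵀR₀′(s))(0,ξ,ζ)ᵀ + R(s)ᵀq′(s) | R(s)ᵀ∂_ξβ(s,ξ,ζ) | R(s)ᵀ∂_ζβ(s,ξ,ζ) ] R₀(s)ᵀ, the matrix in square brackets having the three displayed vectors as its columns. -/
open MeasureTheory Set

noncomputable section

attribute [local instance] Matrix.frobeniusNormedAddCommGroup Matrix.frobeniusNormedSpace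

/-- Twice the quadratic form of linearized elasticity:
`Q₃(z,G) = ∂²W/∂F²(z,Id)[G,G]`. -/
def Q3 (W : ℝ × ℝ × ℝ → M3 → ℝ) (z : ℝ × ℝ × ℝ) (G : M3) : ℝ :=
  iteratedFDeriv ℝ 2 (W z) 1 ![G, G]

/-- The recovery sequence `v⁽ʰ⁾(s,ξ,ζ) = v(s) + hξd₂(s) + hζd₃(s) + hq(s) + h²β(s,ξ,ζ)`. -/
def vh8 (v d₂ d₃ q : ℝ → Fin 3 → ℝ) (β : ℝ × ℝ × ℝ → Fin 3 → ℝ) (h : ℝ)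
    (p : ℝ × ℝ × ℝ) : Fin 3 → ℝ :=
  v p.1 + (h * p.2.1) • d₂ p.1 + (h * p.2.2) • d₃ p.1 + h • q p.1 + (h ^ 2) • β p

/-- The frame `R(s) = (v′(s)|d₂(s)|d₃(s))`. -/
def Rmat (v d₂ d₃ : ℝ → Fin 3 → ℝ) (s : ℝ) : M3 := colMat (deriv v s) (d₂ s) (d₃ s)

/-- The derivative `R′(s) = (v″(s)|d₂′(s)|d₃′(s))`. -/
def Rmat' (v d₂ d₃ : ℝ → Fin 3 → ℝ) (s : ℝ) : M3 :=
  colMat (deriv (deriv v) s) (deriv d₂ s) (deriv d₃ s)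

/-- The entrywise derivative `R₀′(s)`. -/
def R0' (R₀ : ℝ → M3) (s : ℝ) : M3 := Matrix.of fun i j => deriv (fun t => R₀ t i j) s

/-- The matrix field `G_{q,β}` appearing in the limiting energy. -/
def Gqb (R₀ : ℝ → M3) (v d₂ d₃ q : ℝ → Fin 3 → ℝ) (β : ℝ × ℝ × ℝ → Fin 3 → ℝ)
    (p : ℝ × ℝ × ℝ) : M3 :=
  R₀ p.1 *
    colMat
      (((Rmat v d₂ d₃ p.1).transpose * Rmat' v d₂ d₃ p.1 -
          (R₀ p.1).transpose * R0' R₀ p.1).mulVec ![0, p.2.1, p.2.2] +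
        (Rmat v d₂ d₃ p.1).transpose.mulVec (deriv q p.1))
      ((Rmat v d₂ d₃ p.1).transpose.mulVec (deriv (fun t => β (p.1, t, p.2.2)) p.2.1))
      ((Rmat v d₂ d₃ p.1).transpose.mulVec (deriv (fun t => β (p.1, p.2.1, t)) p.2.2)) *
    (R₀ p.1).transpose

lemma frob3_eq (F : M3) : frob3 F = ‖F‖ := by
  rw [Matrix.frobenius_norm_def, frob3, Real.sqrt_eq_rpow]
  simp

lemma one_mem_SO3 : (1 : M3) ∈ SO3 := by simp [SO3]

lemma distSO3_le (F : M3) : distSO3 F ≤ ‖F - 1‖ := by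
  rw [← frob3_eq]
  apply csInf_le
  · refine ⟨0, ?_⟩
    rintro _ ⟨R, _, rfl⟩
    exact Real.sqrt_nonneg _
  · exact ⟨1, one_mem_SO3, rfl⟩

lemma taylor_min {E : Type*} [NormedAddCommGroup E] [NormedSpace ℝ E] (f : E → ℝ) (x : E) (r : ℝ)
    (hf : ∀ y ∈ Metric.ball x r, ContDiffAt ℝ 2 f y) (h0 : f x = 0) (hnn : ∀ y, 0 ≤ f y)
    (K : E) (hK : ‖K‖ < r) :
    ∃ θ ∈ Ioo (0:ℝ) 1, f (x + K) = (1/2) * iteratedFDeriv ℝ 2 f (x + θ • K) ![K, K] := by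
  have hmem : ∀ t ∈ Icc (0:ℝ) 1, x + t • K ∈ Metric.ball x r := by
    intro t ht
    rw [Metric.mem_ball, dist_eq_norm]
    simp only [add_sub_cancel_left, norm_smul, Real.norm_eq_abs, abs_of_nonneg ht.1]
    nlinarith [norm_nonneg K, ht.2]
  have hpath : ∀ t : ℝ, HasDerivAt (fun t : ℝ => x + t • K) K t := by
    intro t
    simpa using ((hasDerivAt_id t).smul_const K).const_add x
  have h1 : ∀ t ∈ Icc (0:ℝ) 1,
      HasDerivAt (fun t : ℝ => f (x + t • K)) (fderiv ℝ f (x + t • K) K) t := by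
    intro t ht
    exact (((hf _ (hmem t ht)).differentiableAt (by norm_num)).hasFDerivAt).comp_hasDerivAt t
      (hpath t)
  have h2 : ∀ t ∈ Icc (0:ℝ) 1,
      HasDerivAt (fun t : ℝ => fderiv ℝ f (x + t • K) K)
        (fderiv ℝ (fderiv ℝ f) (x + t • K) K K) t := by
    intro t ht
    have hd : ContDiffAt ℝ 1 (fderiv ℝ f) (x + t • K) :=
      (hf _ (hmem t ht)).fderiv_right (by norm_num)
    have := ((hd.differentiableAt (by norm_num)).hasFDerivAt).comp_hasDerivAt t (hpath t)
    simpa using this.clm_apply (hasDerivAt_const t K)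
  have hd0 : fderiv ℝ f x = 0 := by
    apply IsLocalMin.fderiv_eq_zero
    exact Filter.Eventually.of_forall fun y => by rw [h0]; exact hnn y
  obtain ⟨a, ha, hae⟩ := exists_ratio_hasDerivAt_eq_ratio_slope
    (fun t : ℝ => f (x + t • K)) (fun t => fderiv ℝ f (x + t • K) K) (zero_lt_one)
    (fun t ht => (h1 t ht).continuousAt.continuousWithinAt)
    (fun t ht => h1 t ⟨ht.1.le, ht.2.le⟩)
    (fun t : ℝ => t ^ 2) (fun t => 2 * t) (by fun_prop)
    (fun t _ => by simpa using hasDerivAt_pow 2 t)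
  obtain ⟨θ, hθ, hθe⟩ := exists_hasDerivAt_eq_slope
    (fun t : ℝ => fderiv ℝ f (x + t • K) K) (fun t => fderiv ℝ (fderiv ℝ f) (x + t • K) K K) ha.1
    (fun t ht => (h2 t ⟨ht.1, ht.2.trans ha.2.le⟩).continuousAt.continuousWithinAt)
    (fun t ht => h2 t ⟨ht.1.le, ht.2.le.trans ha.2.le⟩)
  refine ⟨θ, ⟨hθ.1, hθ.2.trans ha.2⟩, ?_⟩
  rw [iteratedFDeriv_two_apply]
  simp only [one_smul, zero_smul, add_zero, h0, hd0, sub_zero] at hae hθe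
  simp at hae hθe ⊢
  rw [hθe]
  have := ha.1.ne'
  field_simp
  linarith

lemma caratheodory_meas {X : Type*} [MeasurableSpace X] (μ : Measure X) {E : Type*}
    [TopologicalSpace E]
    (W : X → E → ℝ) (hW : ∀ F, Measurable fun z => W z F) (f : X → E)
    (hf : AEStronglyMeasurable f μ) (hc : ∀ᵐ p ∂μ, ContinuousAt (W p) (f p)) :
    AEStronglyMeasurable (fun p => W p (f p)) μ := by
  have hm := hf.stronglyMeasurable_mk
  refine aestronglyMeasurable_of_tendsto_ae Filter.atTop
    (f := fun n p => W p (hm.approx n p)) ?_ ?_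
  · intro n
    exact (SimpleFunc.measurable_bind (hm.approx n) (fun b a => W a b) hW).aestronglyMeasurable
  · filter_upwards [hc, hf.ae_eq_mk] with p hp he
    have := hm.tendsto_approx p
    rw [← he] at this
    exact hp.tendsto.comp this

def Amat (d₂ d₃ q : ℝ → Fin 3 → ℝ) (β : ℝ × ℝ × ℝ → Fin 3 → ℝ) (p : ℝ × ℝ × ℝ) : M3 :=
  colMat (p.2.1 • deriv d₂ p.1 + p.2.2 • deriv d₃ p.1 + deriv q p.1)
    (fderiv ℝ β p (0, 1, 0)) (fderiv ℝ β p (0, 0, 1))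

def Bmat (β : ℝ × ℝ × ℝ → Fin 3 → ℝ) (p : ℝ × ℝ × ℝ) : M3 :=
  colMat (fderiv ℝ β p (1, 0, 0)) 0 0

def Pmat (R₀ : ℝ → M3) (p : ℝ × ℝ × ℝ) : M3 :=
  tensE1 ((R0' R₀ p.1).mulVec ![0, p.2.1, p.2.2])

lemma continuous_M3 {X : Type*} [TopologicalSpace X] (f : X → M3)
    (h : ∀ i j, Continuous fun x => f x i j) : Continuous f := 
  continuous_matrix h

lemma continuous_colMat {X : Type*} [TopologicalSpace X] (a b c : X → Fin 3 → ℝ)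
    (ha : Continuous a) (hb : Continuous b) (hc : Continuous c) :
    Continuous fun x => colMat (a x) (b x) (c x) := by
  apply continuous_M3
  intro i j
  simp only [colMat, Matrix.of_apply]
  split_ifs <;> fun_prop

lemma Amat_cont (d₂ d₃ q : ℝ → Fin 3 → ℝ) (β : ℝ × ℝ × ℝ → Fin 3 → ℝ)
    (hd₂ : ContDiff ℝ 1 d₂) (hd₃ : ContDiff ℝ 1 d₃) (hq : ContDiff ℝ 1 q) (hβ : ContDiff ℝ 1 β) :
    Continuous (Amat d₂ d₃ q β) := by
  have h1 := hd₂.continuous_deriv le_rfl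
  have h2 := hd₃.continuous_deriv le_rfl
  have h3 := hq.continuous_deriv le_rfl
  have h4 := hβ.continuous_fderiv (by norm_num)
  apply continuous_colMat <;> fun_prop

lemma Bmat_cont (β : ℝ × ℝ × ℝ → Fin 3 → ℝ) (hβ : ContDiff ℝ 1 β) : Continuous (Bmat β) := by
  have h4 := hβ.continuous_fderiv (by norm_num)
  apply continuous_colMat <;> fun_prop

lemma Pmat_cont (R₀ : ℝ → M3) (hR₀C1 : ∀ i j, ContDiff ℝ 1 fun s => R₀ s i j) :
    Continuous (Pmat R₀) := by
  have h1 := fun i j => (hR₀C1 i j).continuous_deriv le_rfl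
  apply continuous_M3
  intro i j
  simp only [Pmat, tensE1, Matrix.of_apply]
  split_ifs
  · simp only [Matrix.mulVec, dotProduct, Fin.sum_univ_three, R0', Matrix.of_apply]
    simp
    fun_prop
  · fun_prop

lemma scaledGrad_Psih (γ : ℝ → Fin 3 → ℝ) (hγ : ContDiff ℝ 2 γ) (R₀ : ℝ → M3)
    (hR₀C1 : ∀ i j, ContDiff ℝ 1 fun s => R₀ s i j) (h : ℝ) (hh : h ≠ 0) (p : ℝ × ℝ × ℝ)
    (he : (R₀ p.1).mulVec (Pi.single 0 1) = deriv γ p.1) :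
    scaledGrad h (Psih γ R₀ h) p = R₀ p.1 + h • Pmat R₀ p := by
  obtain ⟨s, x, y⟩ := p
  have hg : ∀ i, HasDerivAt (fun t => γ t i) (deriv γ s i) s :=
    hasDerivAt_pi.1 (hγ.differentiable (by norm_num) s).hasDerivAt
  have hR : ∀ i j, HasDerivAt (fun t => R₀ t i j) (R0' R₀ s i j) s := fun i j =>
    ((hR₀C1 i j).differentiable (by norm_num) s).hasDerivAt
  ext i j
  have he' := congrFun he i
  simp at he'
  fin_cases j
  · simp [scaledGrad, Psih, nu2, nu3, Pmat, tensE1, Matrix.mulVec, dotProduct, Fin.sum_univ_three]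
    rw [(((hg i).fun_add ((hR i 1).const_mul (h * x))).fun_add ((hR i 2).const_mul (h * y))).deriv, ← he']
    ring
  · simp [scaledGrad, Psih, nu2, nu3, Pmat, tensE1]
    field_simp
  · simp [scaledGrad, Psih, nu2, nu3, Pmat, tensE1]
    field_simp

lemma scaledGrad_vh8 (v d₂ d₃ q : ℝ → Fin 3 → ℝ) (β : ℝ × ℝ × ℝ → Fin 3 → ℝ)
    (hv : ContDiff ℝ 2 v) (hd₂ : ContDiff ℝ 1 d₂) (hd₃ : ContDiff ℝ 1 d₃) (hq : ContDiff ℝ 1 q)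
    (hβ : ContDiff ℝ 1 β) (h : ℝ) (hh : h ≠ 0) (p : ℝ × ℝ × ℝ) :
    scaledGrad h (vh8 v d₂ d₃ q β h) p =
      Rmat v d₂ d₃ p.1 + h • Amat d₂ d₃ q β p + (h ^ 2) • Bmat β p := by
  obtain ⟨s, x, y⟩ := p
  have g1 : ∀ i, HasDerivAt (fun t => v t i) (deriv v s i) s :=
    hasDerivAt_pi.1 (hv.differentiable (by norm_num) s).hasDerivAt
  have g2 : ∀ i, HasDerivAt (fun t => d₂ t i) (deriv d₂ s i) s :=
    hasDerivAt_pi.1 (hd₂.differentiable (by norm_num) s).hasDerivAt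
  have g3 : ∀ i, HasDerivAt (fun t => d₃ t i) (deriv d₃ s i) s :=
    hasDerivAt_pi.1 (hd₃.differentiable (by norm_num) s).hasDerivAt
  have g4 : ∀ i, HasDerivAt (fun t => q t i) (deriv q s i) s :=
    hasDerivAt_pi.1 (hq.differentiable (by norm_num) s).hasDerivAt
  have hb := (hβ.differentiable (by norm_num) (s, x, y)).hasFDerivAt
  have b1 : ∀ i, HasDerivAt (fun t => β (t, x, y) i) (fderiv ℝ β (s, x, y) (1, 0, 0) i) s :=
    hasDerivAt_pi.1 (hb.comp_hasDerivAt s ((hasDerivAt_id s).prodMk (hasDerivAt_const s (x, y))))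
  have b2 : ∀ i, HasDerivAt (fun t => β (s, t, y) i) (fderiv ℝ β (s, x, y) (0, 1, 0) i) x :=
    hasDerivAt_pi.1 (hb.comp_hasDerivAt x
      ((hasDerivAt_const x s).prodMk ((hasDerivAt_id x).prodMk (hasDerivAt_const x y))))
  have b3 : ∀ i, HasDerivAt (fun t => β (s, x, t) i) (fderiv ℝ β (s, x, y) (0, 0, 1) i) y :=
    hasDerivAt_pi.1 (hb.comp_hasDerivAt y
      ((hasDerivAt_const y s).prodMk ((hasDerivAt_const y x).prodMk (hasDerivAt_id y))))
  ext i j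
  fin_cases j
  · simp [scaledGrad, vh8, Rmat, Amat, Bmat, colMat]
    rw [(((((g1 i).fun_add ((g2 i).const_mul (h * x))).fun_add ((g3 i).const_mul (h * y))).fun_add
      ((g4 i).const_mul h)).fun_add ((b1 i).const_mul (h ^ 2))).deriv]
    ring
  · simp [scaledGrad, vh8, Rmat, Amat, Bmat, colMat]
    have := ((((((hasDerivAt_id' x).const_mul h).mul_const (d₂ s i)).const_add (v s i)).add_const
      (h * y * d₃ s i)).add_const (h * q s i)).fun_add ((b2 i).const_mul (h ^ 2))
    rw [this.deriv]
    field_simp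
  · simp [scaledGrad, vh8, Rmat, Amat, Bmat, colMat]
    have := (((((hasDerivAt_id' y).const_mul h).mul_const (d₃ s i)).const_add
      (v s i + h * x * d₂ s i)).add_const (h * q s i)).fun_add ((b3 i).const_mul (h ^ 2))
    rw [this.deriv]
    field_simp

/-- `E(h,p)`: the scaled strain. -/
def Emat (R₀ : ℝ → M3) (v d₂ d₃ q : ℝ → Fin 3 → ℝ) (β : ℝ × ℝ × ℝ → Fin 3 → ℝ)
    (h : ℝ) (p : ℝ × ℝ × ℝ) : M3 :=
  (R₀ p.1 * (Rmat v d₂ d₃ p.1).transpose * (Amat d₂ d₃ q β p + h • Bmat β p) - Pmat R₀ p) *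
    (R₀ p.1 + h • Pmat R₀ p)⁻¹

lemma Emat_zero (R₀ : ℝ → M3) (v d₂ d₃ q : ℝ → Fin 3 → ℝ) (β : ℝ × ℝ × ℝ → Fin 3 → ℝ)
    (hβ : ContDiff ℝ 1 β)
    (p : ℝ × ℝ × ℝ) (hR0 : R₀ p.1 ∈ SO3) :
    Emat R₀ v d₂ d₃ q β 0 p = Gqb R₀ v d₂ d₃ q β p := by
  have hi : (R₀ p.1)⁻¹ = (R₀ p.1).transpose := Matrix.inv_eq_left_inv hR0.1
  have hr : R₀ p.1 * (R₀ p.1).transpose = 1 := mul_eq_one_comm.1 hR0.1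
  obtain ⟨s, x, y⟩ := p
  have hb := (hβ.differentiable (by norm_num) (s, x, y)).hasFDerivAt
  have b2 : HasDerivAt (fun t => β (s, t, y)) (fderiv ℝ β (s, x, y) (0, 1, 0)) x :=
    (hb.comp_hasDerivAt x
      ((hasDerivAt_const x s).prodMk ((hasDerivAt_id x).prodMk (hasDerivAt_const x y))))
  have b3 : HasDerivAt (fun t => β (s, x, t)) (fderiv ℝ β (s, x, y) (0, 0, 1)) y :=
    (hb.comp_hasDerivAt y
      ((hasDerivAt_const y s).prodMk ((hasDerivAt_const y x).prodMk (hasDerivAt_id y))))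
  simp only at hi hr
  have hP : Pmat R₀ (s, x, y) = R₀ s * ((R₀ s).transpose * Pmat R₀ (s, x, y)) := by
    rw [← mul_assoc, hr, one_mul]
  have key : colMat
      (((Rmat v d₂ d₃ s).transpose * Rmat' v d₂ d₃ s -
          (R₀ s).transpose * R0' R₀ s).mulVec ![0, x, y] +
        (Rmat v d₂ d₃ s).transpose.mulVec (deriv q s))
      ((Rmat v d₂ d₃ s).transpose.mulVec (fderiv ℝ β (s, x, y) (0, 1, 0)))
      ((Rmat v d₂ d₃ s).transpose.mulVec (fderiv ℝ β (s, x, y) (0, 0, 1))) =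
      (Rmat v d₂ d₃ s).transpose * Amat d₂ d₃ q β (s, x, y)
        - (R₀ s).transpose * Pmat R₀ (s, x, y) := by
    ext i j
    generalize Rmat v d₂ d₃ s = R
    generalize R₀ s = S
    generalize hh : R0' R₀ s = S'
    fin_cases j
    · simp [colMat, Amat, Pmat, tensE1, Matrix.mul_apply, Matrix.mulVec, dotProduct,
        Fin.sum_univ_three, Rmat', hh]
      ring
    · simp [colMat, Amat, Pmat, tensE1, Matrix.mul_apply, Matrix.mulVec, dotProduct,
        Fin.sum_univ_three]
    · simp [colMat, Amat, Pmat, tensE1, Matrix.mul_apply, Matrix.mulVec, dotProduct,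
        Fin.sum_univ_three]
  simp only [Emat, Gqb, zero_smul, add_zero, hi, b2.deriv, b3.deriv]
  rw [key]
  nth_rewrite 1 [hP]
  noncomm_ring

lemma F_eq (R₀ R A B P : M3) (hR0 : R₀ ∈ SO3) (hR : R ∈ SO3) (h : ℝ)
    (hdet : (R₀ + h • P).det ≠ 0) :
    (R₀ * R.transpose) * ((R + h • A + (h ^ 2) • B) * (R₀ + h • P)⁻¹) =
      1 + h • ((R₀ * R.transpose * (A + h • B) - P) * (R₀ + h • P)⁻¹) := by
  have h1 : (R₀ + h • P) * (R₀ + h • P)⁻¹ = 1 := Matrix.mul_nonsing_inv _ hdet.isUnit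
  have h2 : R₀ * R.transpose * R = R₀ := by rw [mul_assoc, hR.1, mul_one]
  rw [← h1]
  rw [← mul_assoc, ← smul_mul_assoc, ← add_mul]
  congr 1
  rw [mul_add, mul_add, h2, smul_sub, mul_add]
  simp only [mul_smul_comm, smul_add, smul_smul, pow_two]
  abel

lemma prod_SO3 (R₀ R : M3) (hR0 : R₀ ∈ SO3) (hR : R ∈ SO3) : R₀ * R.transpose ∈ SO3 := by
  refine ⟨?_, ?_⟩
  · rw [Matrix.transpose_mul, Matrix.transpose_transpose, mul_assoc, ← mul_assoc _ R₀, hR0.1,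
      one_mul]
    exact mul_eq_one_comm.1 hR.1
  · rw [Matrix.det_mul, Matrix.det_transpose, hR0.2, hR.2, one_mul]

lemma Rmat_cont (v d₂ d₃ : ℝ → Fin 3 → ℝ)
    (hv : ContDiff ℝ 2 v) (hd₂ : ContDiff ℝ 1 d₂) (hd₃ : ContDiff ℝ 1 d₃) :
    Continuous (Rmat v d₂ d₃) :=
  continuous_colMat _ _ _ (hv.continuous_deriv (by norm_num)) hd₂.continuous hd₃.continuous

lemma continuousAt_inv_M3 {X : Type*} [TopologicalSpace X] (f : X → M3) (x : X)
    (hf : Continuous f) (hd : (f x).det ≠ 0) : ContinuousAt (fun y => (f y)⁻¹) x := by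
  have e : (fun y => (f y)⁻¹) = fun y => ((f y).det)⁻¹ • (f y).adjugate := by
    funext y
    rw [Matrix.inv_def, Ring.inverse_eq_inv']
  rw [e]
  have h1 : Continuous fun y => (f y).det := hf.matrix_det
  have h2 : Continuous fun y => (f y).adjugate := hf.matrix_adjugate
  exact (h1.continuousAt.inv₀ hd).smul h2.continuousAt

lemma Psi_cont (R₀ : ℝ → M3) (hR₀C1 : ∀ i j, ContDiff ℝ 1 fun s => R₀ s i j) :
    Continuous (fun x : ℝ × (ℝ × ℝ × ℝ) => R₀ x.2.1 + x.1 • Pmat R₀ x.2) := by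
  have h0 : Continuous R₀ := continuous_M3 _ fun i j => (hR₀C1 i j).continuous
  have h1 := Pmat_cont R₀ hR₀C1
  exact (h0.comp (by fun_prop : Continuous fun x : ℝ × (ℝ × ℝ × ℝ) => x.2.1)).add
    (continuous_fst.smul (h1.comp continuous_snd))

lemma Emat_cont (R₀ : ℝ → M3) (hR₀C1 : ∀ i j, ContDiff ℝ 1 fun s => R₀ s i j)
    (v d₂ d₃ q : ℝ → Fin 3 → ℝ) (β : ℝ × ℝ × ℝ → Fin 3 → ℝ)
    (hv : ContDiff ℝ 2 v) (hd₂ : ContDiff ℝ 1 d₂) (hd₃ : ContDiff ℝ 1 d₃) (hq : ContDiff ℝ 1 q)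
    (hβ : ContDiff ℝ 1 β) (x : ℝ × (ℝ × ℝ × ℝ)) (hd : (R₀ x.2.1 + x.1 • Pmat R₀ x.2).det ≠ 0) :
    ContinuousAt (fun x : ℝ × (ℝ × ℝ × ℝ) => Emat R₀ v d₂ d₃ q β x.1 x.2) x := by
  have h0 : Continuous R₀ := continuous_M3 _ fun i j => (hR₀C1 i j).continuous
  have c1 : Continuous fun x : ℝ × (ℝ × ℝ × ℝ) => x.2.1 := by fun_prop
  have hR := (Rmat_cont v d₂ d₃ hv hd₂ hd₃).comp c1
  have hA := (Amat_cont d₂ d₃ q β hd₂ hd₃ hq hβ).comp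
    (continuous_snd : Continuous fun x : ℝ × (ℝ × ℝ × ℝ) => x.2)
  have hB := (Bmat_cont β hβ).comp (continuous_snd : Continuous fun x : ℝ × (ℝ × ℝ × ℝ) => x.2)
  have hP := (Pmat_cont R₀ hR₀C1).comp
    (continuous_snd : Continuous fun x : ℝ × (ℝ × ℝ × ℝ) => x.2)
  have hinv := continuousAt_inv_M3 _ x (Psi_cont R₀ hR₀C1) hd
  have hS := (continuous_fst : Continuous fun x : ℝ × (ℝ × ℝ × ℝ) => x.1).smul hB
  have hL := (((h0.comp c1).matrix_mul hR.matrix_transpose).matrix_mul (hA.add hS)).sub hP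
  have hmul : Continuous fun y : M3 × M3 => y.1 * y.2 :=
    continuous_fst.matrix_mul continuous_snd
  exact hmul.continuousAt.comp (hL.continuousAt.prodMk hinv)

/-- Pointwise limit. -/
lemma pointwise_limit {V : Type*} [NormedAddCommGroup V] [NormedSpace ℝ V] (x₀ : V)
    (f : V → ℝ) (δ : ℝ) (hδ : 0 < δ) (hf : ∀ y ∈ Metric.ball x₀ δ, ContDiffAt ℝ 2 f y) (h0 : f x₀ = 0) (hnn : ∀ y, 0 ≤ f y)
    (E : ℝ → V) (hE : ContinuousAt E 0) :
    Filter.Tendsto (fun h : ℝ => (1 / h ^ 2) * f (x₀ + h • E h)) (nhdsWithin 0 (Ioi 0))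
      (nhds ((1 / 2) * iteratedFDeriv ℝ 2 f x₀ ![E 0, E 0])) := by
  have hKc : Filter.Tendsto (fun h : ℝ => h • E h) (nhds 0) (nhds 0) := by
    have := (Filter.tendsto_id (x := nhds (0:ℝ))).smul hE.tendsto
    rw [zero_smul] at this
    exact this
  have hsm : ∀ᶠ h in nhds (0:ℝ), ‖h • E h‖ < δ := by
    have := hKc.norm
    rw [norm_zero] at this
    exact this.eventually (gt_mem_nhds hδ)
  choose! θ hθ hθe using fun (h : ℝ) (hh : ‖h • E h‖ < δ) =>
    taylor_min f x₀ δ hf h0 hnn (h • E h) hh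
  have hX : Filter.Tendsto (fun h : ℝ => x₀ + θ h • (h • E h)) (nhds 0) (nhds x₀) := by
    rw [tendsto_iff_norm_sub_tendsto_zero]
    refine squeeze_zero' (Filter.Eventually.of_forall fun _ => norm_nonneg _) ?_
      (by simpa using hKc.norm)
    filter_upwards [hsm] with h hh
    rw [add_sub_cancel_left, norm_smul, Real.norm_eq_abs, abs_of_nonneg (hθ h hh).1.le]
    exact mul_le_of_le_one_left (norm_nonneg _) (hθ h hh).2.le
  have hcd : ContDiffAt ℝ 2 f x₀ := hf x₀ (Metric.mem_ball_self hδ)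
  have hd1 : ContDiffAt ℝ 1 (fderiv ℝ f) x₀ := hcd.fderiv_right (by norm_num)
  have hd2 : ContDiffAt ℝ 0 (fderiv ℝ (fderiv ℝ f)) x₀ := hd1.fderiv_right (by norm_num)
  have hT : Filter.Tendsto (fun h : ℝ =>
      (1/2) * fderiv ℝ (fderiv ℝ f) (x₀ + θ h • (h • E h)) (E h) (E h)) (nhds 0)
      (nhds ((1/2) * fderiv ℝ (fderiv ℝ f) x₀ (E 0) (E 0))) := by
    have a := hd2.continuousAt.tendsto.comp hX
    have a1 := ((isBoundedBilinearMap_apply (𝕜 := ℝ) (E := V) (F := V →L[ℝ] ℝ)).continuous.tendsto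
      (fderiv ℝ (fderiv ℝ f) x₀, E 0)).comp (a.prodMk_nhds hE.tendsto)
    have b := ((isBoundedBilinearMap_apply (𝕜 := ℝ) (E := V) (F := ℝ)).continuous.tendsto
      (fderiv ℝ (fderiv ℝ f) x₀ (E 0), E 0)).comp (a1.prodMk_nhds hE.tendsto)
    exact b.const_mul _
  rw [iteratedFDeriv_two_apply]
  refine (hT.mono_left nhdsWithin_le_nhds).congr' ?_
  filter_upwards [nhdsWithin_le_nhds hsm, self_mem_nhdsWithin] with h hh hpos
  have hpos' : h ≠ 0 := (ne_of_gt hpos)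
  rw [hθe h hh, iteratedFDeriv_two_apply]
  simp
  field_simp

theorem recovery_sequence_energy_limit
    (L : ℝ) (hL : 0 < L)
    (γ : ℝ → Fin 3 → ℝ) (hγ : ContDiff ℝ 2 γ)
    (harc : ∀ s ∈ Icc (0:ℝ) L, enorm3 (deriv γ s) = 1)
    (hγinj : InjOn γ (Icc (0:ℝ) L))
    (R₀ : ℝ → M3) (hR₀C1 : ∀ i j, ContDiff ℝ 1 fun s => R₀ s i j)
    (hR₀SO : ∀ s ∈ Icc (0:ℝ) L, R₀ s ∈ SO3)
    (hR₀e1 : ∀ s ∈ Icc (0:ℝ) L, (R₀ s).mulVec (Pi.single 0 1) = deriv γ s)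
    (Dset : Set (ℝ × ℝ)) (hDopen : IsOpen Dset) (hDconn : IsConnected Dset)
    (hDbdd : Bornology.IsBounded Dset) (hDvol : volume Dset = 1)
    (W : ℝ × ℝ × ℝ → M3 → ℝ) (hWnn : ∀ z F, 0 ≤ W z F)
    (hWmeas : ∀ F, Measurable fun z => W z F)
    (δ : ℝ) (hδ : 0 < δ)
    (hC2 : ∀ᵐ z ∂(volume.restrict (Ioo (0:ℝ) L ×ˢ Dset)),
      ContDiffOn ℝ 2 (W z) {F : M3 | distSO3 F < δ})
    (C₁ : ℝ) (hC₁ : 0 < C₁)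
    (hbound : ∀ᵐ z ∂(volume.restrict (Ioo (0:ℝ) L ×ˢ Dset)),
      ∀ F : M3, distSO3 F < δ → ∀ G : M3,
        |iteratedFDeriv ℝ 2 (W z) F ![G, G]| ≤ C₁ * frob3 G ^ 2)
    (hframe : ∀ᵐ z ∂(volume.restrict (Ioo (0:ℝ) L ×ˢ Dset)),
      ∀ F : M3, ∀ R ∈ SO3, W z (R * F) = W z F)
    (hWzero : ∀ᵐ z ∂(volume.restrict (Ioo (0:ℝ) L ×ˢ Dset)), ∀ R ∈ SO3, W z R = 0)
    (v d₂ d₃ : ℝ → Fin 3 → ℝ)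
    (hv : ContDiff ℝ 2 v) (hd₂ : ContDiff ℝ 1 d₂) (hd₃ : ContDiff ℝ 1 d₃)
    (hRSO : ∀ s ∈ Icc (0:ℝ) L, Rmat v d₂ d₃ s ∈ SO3)
    (q : ℝ → Fin 3 → ℝ) (hq : ContDiff ℝ 1 q)
    (β : ℝ × ℝ × ℝ → Fin 3 → ℝ) (hβ : ContDiff ℝ 1 β) :
    Filter.Tendsto
      (fun h : ℝ => (1 / h ^ 2) *
        ∫ p in Ioo (0:ℝ) L ×ˢ Dset,
          W p (scaledGrad h (vh8 v d₂ d₃ q β h) p * (scaledGrad h (Psih γ R₀ h) p)⁻¹) *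
            (scaledGrad h (Psih γ R₀ h) p).det)
      (nhdsWithin 0 (Ioi 0))
      (nhds ((1 / 2) *
        ∫ p in Ioo (0:ℝ) L ×ˢ Dset, Q3 W p (Gqb R₀ v d₂ d₃ q β p))) := by
  have hΩm : MeasurableSet (Ioo (0:ℝ) L ×ˢ Dset) := measurableSet_Ioo.prod hDopen.measurableSet
  set Ω : Set (ℝ × ℝ × ℝ) := Ioo (0:ℝ) L ×ˢ Dset with hΩ
  set μ := volume.restrict Ω with hμ
  have hΩb : Bornology.IsBounded Ω := (Metric.isBounded_Ioo 0 L).prod hDbdd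
  haveI : IsFiniteMeasure μ := ⟨by rw [hμ, Measure.restrict_apply_univ]; exact hΩb.measure_lt_top⟩
  have hKc : IsCompact (Icc (0:ℝ) L ×ˢ closure Dset) := isCompact_Icc.prod hDbdd.isCompact_closure
  set K : Set (ℝ × ℝ × ℝ) := Icc (0:ℝ) L ×ˢ closure Dset with hK
  have hΩK : Ω ⊆ K := prod_mono Ioo_subset_Icc_self subset_closure
  have hR0K : ∀ p ∈ K, R₀ p.1 ∈ SO3 := fun p hp => hR₀SO _ hp.1
  have hRK : ∀ p ∈ K, Rmat v d₂ d₃ p.1 ∈ SO3 := fun p hp => hRSO _ hp.1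
  set E := Emat R₀ v d₂ d₃ q β with hE
  have hEc := Emat_cont R₀ hR₀C1 v d₂ d₃ q β hv hd₂ hd₃ hq hβ
  have hΨc := Psi_cont R₀ hR₀C1
  have hdetc : Continuous fun x : ℝ × (ℝ × ℝ × ℝ) => (R₀ x.2.1 + x.1 • Pmat R₀ x.2).det :=
    hΨc.matrix_det
  have hdet0 : ∀ p ∈ K, (R₀ p.1 + (0:ℝ) • Pmat R₀ p).det = 1 := fun p hp => by
    rw [zero_smul, add_zero]; exact (hR0K p hp).2
  have hEc0 : ∀ p ∈ K, ContinuousAt (fun x : ℝ × (ℝ × ℝ × ℝ) => E x.1 x.2) (0, p) :=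
    fun p hp => hEc (0, p) (by simp only [hdet0 p hp]; exact one_ne_zero)
  -- uniform bounds
  obtain ⟨C, hC⟩ : ∃ C, ∀ p ∈ K, ‖E 0 p‖ ≤ C := by
    apply hKc.exists_bound_of_continuousOn
    intro p hp
    have : ContinuousAt (fun p => E 0 p) p :=
      ContinuousAt.comp (f := fun p : ℝ × ℝ × ℝ => ((0:ℝ), p))
        (g := fun x : ℝ × (ℝ × ℝ × ℝ) => E x.1 x.2) (hEc0 p hp) (by fun_prop)
    exact this.continuousWithinAt
  have hC0 : ∀ᶠ h in nhds (0:ℝ), ∀ p ∈ K, ‖E h p‖ < C + 1 := by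
    apply hKc.eventually_forall_of_forall_eventually
    intro p hp
    exact (hEc0 p hp).norm.tendsto.eventually (gt_mem_nhds (by linarith [hC p hp]))
  have hdl : ∀ᶠ h in nhds (0:ℝ), ∀ p ∈ K, 0 < (R₀ p.1 + h • Pmat R₀ p).det := by
    apply hKc.eventually_forall_of_forall_eventually
    intro p hp
    exact (hdetc.tendsto (0, p)).eventually
      (lt_mem_nhds (by simp only [hdet0 p hp]; exact one_pos))
  have hdu : ∀ᶠ h in nhds (0:ℝ), ∀ p ∈ K, (R₀ p.1 + h • Pmat R₀ p).det < 2 := by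
    apply hKc.eventually_forall_of_forall_eventually
    intro p hp
    exact (hdetc.tendsto (0, p)).eventually
      (gt_mem_nhds (by simp only [hdet0 p hp]; exact one_lt_two))
  have hsmall : ∀ᶠ h in nhds (0:ℝ), |h| * (C + 1) < δ := by
    have : Continuous fun h : ℝ => |h| * (C + 1) := by fun_prop
    exact (this.tendsto 0).eventually (gt_mem_nhds (by simpa using hδ))
  have hball : ∀ h : ℝ, |h| * (C + 1) < δ → (∀ p ∈ K, ‖E h p‖ < C + 1) →
      ∀ p ∈ K, ‖h • E h p‖ < δ := by
    intro h h1 h2 p hp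
    rw [norm_smul, Real.norm_eq_abs]
    exact (mul_le_mul_of_nonneg_left (h2 p hp).le (abs_nonneg h)).trans_lt h1
  have hcd : ∀ᵐ p ∂μ, ∀ y ∈ Metric.ball (1 : M3) δ, ContDiffAt ℝ 2 (W p) y := by
    filter_upwards [hC2] with p hp y hy
    refine hp.contDiffAt (Filter.mem_of_superset (Metric.isOpen_ball.mem_nhds hy) ?_)
    intro F hF
    rw [Metric.mem_ball, dist_eq_norm] at hF
    exact (distSO3_le F).trans_lt hF
  have hΩae : ∀ᵐ p ∂μ, p ∈ Ω := ae_restrict_mem hΩm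
  -- the rewritten integrand
  have hrw : ∀ᶠ h in nhdsWithin (0:ℝ) (Ioi 0), ∀ᵐ p ∂μ,
      W p (scaledGrad h (vh8 v d₂ d₃ q β h) p * (scaledGrad h (Psih γ R₀ h) p)⁻¹) *
            (scaledGrad h (Psih γ R₀ h) p).det =
      W p (1 + h • E h p) * (R₀ p.1 + h • Pmat R₀ p).det := by
    filter_upwards [nhdsWithin_le_nhds hdl, self_mem_nhdsWithin] with h h1 h2
    have hne : h ≠ 0 := ne_of_gt h2
    filter_upwards [hframe, hΩae] with p hp hpΩ
    have hpK := hΩK hpΩ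
    rw [scaledGrad_Psih γ hγ R₀ hR₀C1 h hne p (hR₀e1 _ hpK.1),
      scaledGrad_vh8 v d₂ d₃ q β hv hd₂ hd₃ hq hβ h hne p,
      ← hp _ _ (prod_SO3 _ _ (hR0K p hpK) (hRK p hpK)),
      F_eq _ _ _ _ _ (hR0K p hpK) (hRK p hpK) h (h1 p hpK).ne']
    rfl
  rw [← integral_const_mul]
  simp only [← integral_const_mul]
  refine tendsto_integral_filter_of_dominated_convergence
    (fun _ => (1/2) * C₁ * (C + 1) ^ 2 * 2) ?_ ?_ (integrable_const _) ?_
  · filter_upwards [hrw, nhdsWithin_le_nhds hdl, nhdsWithin_le_nhds hC0,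
      nhdsWithin_le_nhds hsmall] with h h1 h2 h3 h4
    have hEon : ContinuousOn (fun p => E h p) Ω := by
      intro p hp
      have : ContinuousAt (fun p => E h p) p :=
        ContinuousAt.comp (f := fun p : ℝ × ℝ × ℝ => (h, p))
          (g := fun x : ℝ × (ℝ × ℝ × ℝ) => E x.1 x.2) (hEc (h, p) (h2 p (hΩK hp)).ne')
          (by fun_prop)
      exact this.continuousWithinAt
    have hFon : ContinuousOn (fun p => (1 : M3) + h • E h p) Ω :=
      continuousOn_const.add (hEon.const_smul h)
    haveI : TopologicalSpace.PseudoMetrizableSpace M3 :=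
      inferInstanceAs (TopologicalSpace.PseudoMetrizableSpace (Fin 3 → Fin 3 → ℝ))
    have hFm : AEStronglyMeasurable (fun p => (1 : M3) + h • E h p) μ :=
      hFon.aestronglyMeasurable hΩm
    have hWm : AEStronglyMeasurable (fun p => W p (1 + h • E h p)) μ := by
      apply caratheodory_meas μ W hWmeas _ hFm
      filter_upwards [hcd, hΩae] with p hp hpΩ
      refine (hp _ ?_).continuousAt
      rw [Metric.mem_ball, dist_eq_norm, add_sub_cancel_left]
      exact hball h h4 h3 p (hΩK hpΩ)
    have hdm : AEStronglyMeasurable (fun p : ℝ × ℝ × ℝ => (R₀ p.1 + h • Pmat R₀ p).det) μ :=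
      (hdetc.comp (by fun_prop : Continuous fun p : ℝ × ℝ × ℝ => (h, p))).aestronglyMeasurable
    refine ((hWm.mul hdm).const_mul (1 / h ^ 2)).congr ?_
    filter_upwards [h1] with p hp
    simp only [Pi.mul_apply, hp]
  · filter_upwards [hrw, nhdsWithin_le_nhds hdl, nhdsWithin_le_nhds hC0,
      nhdsWithin_le_nhds hsmall, nhdsWithin_le_nhds hdu, self_mem_nhdsWithin]
      with h h1 h2 h3 h4 h5 h6
    have h6' : 0 < h := h6
    filter_upwards [h1, hcd, hΩae, hbound, hWzero] with p hp hpc hpΩ hpb hp0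
    have hpK := hΩK hpΩ
    have hlt := hball h h4 h3 p hpK
    obtain ⟨θ, hθ, hθe⟩ := taylor_min (W p) 1 δ hpc (hp0 1 one_mem_SO3) (hWnn p) _ hlt
    have hb := hpb (1 + θ • (h • E h p)) (by
      refine (distSO3_le _).trans_lt (lt_of_le_of_lt ?_ hlt)
      rw [add_sub_cancel_left, norm_smul, Real.norm_eq_abs, abs_of_nonneg hθ.1.le]
      exact mul_le_of_le_one_left (norm_nonneg _) hθ.2.le) (h • E h p)
    rw [frob3_eq, norm_smul, Real.norm_eq_abs, abs_of_pos h6'] at hb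
    have hW1 : W p (1 + h • E h p) ≤ (1/2) * (C₁ * (h * ‖E h p‖) ^ 2) := by
      rw [hθe]
      linarith [le_abs_self (iteratedFDeriv ℝ 2 (W p) (1 + θ • (h • E h p)) ![h • E h p, h • E h p])]
    have hn := norm_nonneg (E h p)
    have hsq : ‖E h p‖ ^ 2 ≤ (C + 1) ^ 2 := pow_le_pow_left₀ hn (h3 p hpK).le 2
    have hW2 : (1 / h ^ 2) * W p (1 + h • E h p) ≤ (1/2) * C₁ * (C + 1) ^ 2 := by
      calc (1 / h ^ 2) * W p (1 + h • E h p)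
          ≤ (1 / h ^ 2) * ((1/2) * (C₁ * (h * ‖E h p‖) ^ 2)) :=
            mul_le_mul_of_nonneg_left hW1 (by positivity)
        _ = (1/2) * C₁ * ‖E h p‖ ^ 2 := by field_simp
        _ ≤ _ := mul_le_mul_of_nonneg_left hsq (by positivity)
    rw [hp, ← mul_assoc, Real.norm_eq_abs, abs_of_nonneg
      (mul_nonneg (mul_nonneg (by positivity) (hWnn _ _)) (h2 p hpK).le)]
    exact mul_le_mul hW2 (h5 p hpK).le (h2 p hpK).le (by positivity)
  · filter_upwards [hcd, hΩae, hframe, hWzero] with p hpc hpΩ hpf hp0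
    have hpK := hΩK hpΩ
    have hEp : ContinuousAt (fun h => E h p) 0 :=
      ContinuousAt.comp (f := fun h : ℝ => (h, p))
        (g := fun x : ℝ × (ℝ × ℝ × ℝ) => E x.1 x.2) (hEc0 p hpK) (by fun_prop)
    have hlim := pointwise_limit (1 : M3) (W p) δ hδ hpc (hp0 1 one_mem_SO3) (hWnn p) (fun h => E h p) hEp
    have hdlim : Filter.Tendsto (fun h : ℝ => (R₀ p.1 + h • Pmat R₀ p).det)
        (nhdsWithin 0 (Ioi 0)) (nhds 1) := by
      have : Continuous fun h : ℝ => (R₀ p.1 + h • Pmat R₀ p).det :=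
        hdetc.comp (by fun_prop : Continuous fun h : ℝ => (h, p))
      have h' := this.tendsto 0
      rw [hdet0 p hpK] at h'
      exact h'.mono_left nhdsWithin_le_nhds
    have hfin := hlim.mul hdlim
    have e0 : E 0 p = Gqb R₀ v d₂ d₃ q β p := Emat_zero R₀ v d₂ d₃ q β hβ p (hR0K p hpK)
    simp only [e0, mul_one] at hfin
    refine hfin.congr' (Filter.EventuallyEq.symm ?_)
    filter_upwards [nhdsWithin_le_nhds hdl, self_mem_nhdsWithin] with h h1 h2
    have hne : h ≠ 0 := ne_of_gt h2
    rw [scaledGrad_Psih γ hγ R₀ hR₀C1 h hne p (hR₀e1 _ hpK.1),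
      scaledGrad_vh8 v d₂ d₃ q β hv hd₂ hd₃ hq hβ h hne p,
      ← hpf (_ * _) _ (prod_SO3 _ _ (hR0K p hpK) (hRK p hpK)),
      F_eq _ _ _ _ _ (hR0K p hpK) (hRK p hpK) h (h1 p hpK).ne', ← mul_assoc]
    rfl
end
end

section
/- Let Q : ℝ^{3×3} → ℝ be a nonnegative quadratic form (Q(G) = B(G,G) for a symmetric bilinear form B, with Q ≥ 0). Let D ⊆ ℝ² be a bounded open set of area 1 with ∫_D ξ dξdζ = ∫_D ζ dξdζ = 0. Let R₀ ∈ SO(3), P ∈ ℝ^{3×3}, ĝ ∈ ℝ³, and let α̂ be a C¹ map from an open neighbourhood of cl(D) to ℝ³. Define α̃(ξ,ζ) := α̂(ξ,ζ) − ξ∫_D ∂_ξα̂ dξdζ − ζ∫_D ∂_ζα̂ dξdζ. Then ∫_D Q( R₀ ( P(0,ξ,ζ)ᵀ + ĝ | ∂_ξα̂ | ∂_ζα̂ ) R₀ᵀ ) dξdζ = ∫_D Q( R₀ ( P(0,ξ,ζ)ᵀ | ∂_ξα̃ | ∂_ζα̃ ) R₀ᵀ ) dξdζ + Q( R₀ (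 ĝ | ∫_D ∂_ξα̂ dξdζ | ∫_D ∂_ζα̂ dξdζ ) R₀ᵀ ); in particular the left-hand side is greater than or equal to ∫_D Q( R₀ ( P(0,ξ,ζ)ᵀ | ∂_ξα̃ | ∂_ζα̃ ) R₀ᵀ ) dξdζ. -/
open MeasureTheory Set

noncomputable section

/-- Partial derivative of a map `ℝ² → ℝ³` with respect to the first variable. -/
def dXi (α : ℝ × ℝ → Fin 3 → ℝ) (p : ℝ × ℝ) : Fin 3 → ℝ :=
  deriv (fun t => α (t, p.2)) p.1

/-- Partial derivative of a map `ℝ² → ℝ³` with respect to the second variable. -/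
def dZeta (α : ℝ × ℝ → Fin 3 → ℝ) (p : ℝ × ℝ) : Fin 3 → ℝ :=
  deriv (fun t => α (p.1, t)) p.2

/-- `α̃(ξ,ζ) := α̂(ξ,ζ) − ξ∫_D ∂_ξα̂ − ζ∫_D ∂_ζα̂`. -/
def tildeAlpha (Dset : Set (ℝ × ℝ)) (α : ℝ × ℝ → Fin 3 → ℝ) (p : ℝ × ℝ) : Fin 3 → ℝ :=
  α p - p.1 • (∫ q in Dset, dXi α q) - p.2 • (∫ q in Dset, dZeta α q)

theorem contBilin {E : Type*} [NormedAddCommGroup E] [NormedSpace ℝ E] [FiniteDimensional ℝ E]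
    (C : E →ₗ[ℝ] E →ₗ[ℝ] ℝ) {X : Type*} [TopologicalSpace X] {s : Set X} {f : X → E}
    (hf : ContinuousOn f s) : ContinuousOn (fun p => C (f p) (f p)) s := by
  let L : E →L[ℝ] (E →L[ℝ] ℝ) :=
    LinearMap.toContinuousLinearMap (LinearMap.toContinuousLinearMap.toLinearMap ∘ₗ C)
  have h : ContinuousOn (fun p => L (f p) (f p)) s :=
    (L.continuous.comp_continuousOn hf).clm_apply hf
  exact h

theorem split_lemma {E : Type*} [NormedAddCommGroup E] [NormedSpace ℝ E] [FiniteDimensional ℝ E]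
    (C : E →ₗ[ℝ] E →ₗ[ℝ] ℝ) (hs : ∀ x y, C x y = C y x) {X : Type*} [MeasurableSpace X]
    (μ : Measure X) [IsProbabilityMeasure μ] (f : X → E) (hf : Integrable f μ)
    (hf2 : Integrable (fun p => C (f p) (f p)) μ) (h0 : ∫ p, f p ∂μ = 0) (v : E) :
    ∫ p, C (f p + v) (f p + v) ∂μ = (∫ p, C (f p) (f p) ∂μ) + C v v := by
  have : CompleteSpace E := FiniteDimensional.complete ℝ E
  let L : E →L[ℝ] ℝ := LinearMap.toContinuousLinearMap (C v)
  have e : ∀ p, C (f p + v) (f p + v) = C (f p) (f p) + (2 * L (f p) + C v v) := by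
    intro p
    have : L (f p) = C v (f p) := rfl
    simp only [map_add, LinearMap.add_apply, this, hs (f p) v]
    ring
  have hL : Integrable (fun p => L (f p)) μ := L.integrable_comp hf
  have hL0 : ∫ p, L (f p) ∂μ = 0 := by
    rw [L.integral_comp_comm hf, h0, map_zero]
  have hI : Integrable (fun p => 2 * L (f p) + C v v) μ :=
    (hL.const_mul 2).add (integrable_const _)
  simp_rw [e]
  rw [integral_add hf2 hI,
    integral_add (hL.const_mul 2) (integrable_const _), integral_const_mul, hL0]
  simp

abbrev V3 : Type := Fin 3 → ℝ

def colLin : (V3 × V3 × V3) →ₗ[ℝ] M3 where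
  toFun v := colMat v.1 v.2.1 v.2.2
  map_add' x y := by
    ext i j
    simp only [colMat, Matrix.of_apply, Matrix.add_apply]
    split_ifs <;> simp
  map_smul' c x := by
    ext i j
    simp only [colMat, Matrix.of_apply, Matrix.smul_apply]
    split_ifs <;> simp

def conjLin (R : M3) : (V3 × V3 × V3) →ₗ[ℝ] M3 :=
  LinearMap.mulRight ℝ R.transpose ∘ₗ LinearMap.mulLeft ℝ R ∘ₗ colLin

theorem dXi_hasDeriv {α : ℝ × ℝ → V3} {p : ℝ × ℝ} (h : DifferentiableAt ℝ α p) :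
    HasDerivAt (fun t => α (t, p.2)) (fderiv ℝ α p (1, 0)) p.1 := by
  have h1 : HasDerivAt (fun t : ℝ => (t, p.2)) ((1 : ℝ), (0 : ℝ)) p.1 :=
    (hasDerivAt_id p.1).prodMk (hasDerivAt_const p.1 p.2)
  exact HasFDerivAt.comp_hasDerivAt (l := α) p.1 h.hasFDerivAt h1

theorem dZeta_hasDeriv {α : ℝ × ℝ → V3} {p : ℝ × ℝ} (h : DifferentiableAt ℝ α p) :
    HasDerivAt (fun t => α (p.1, t)) (fderiv ℝ α p (0, 1)) p.2 := by
  have h1 : HasDerivAt (fun t : ℝ => (p.1, t)) ((0 : ℝ), (1 : ℝ)) p.2 :=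
    (hasDerivAt_const p.2 p.1).prodMk (hasDerivAt_id p.2)
  exact HasFDerivAt.comp_hasDerivAt (l := α) p.2 h.hasFDerivAt h1

theorem dXi_tilde (D : Set (ℝ × ℝ)) {α : ℝ × ℝ → V3} {p : ℝ × ℝ} (h : DifferentiableAt ℝ α p) :
    dXi (tildeAlpha D α) p = dXi α p - ∫ q in D, dXi α q := by
  have h1 := dXi_hasDeriv h
  have h2 := (h1.sub ((hasDerivAt_id p.1).smul_const (∫ q in D, dXi α q))).sub
    (hasDerivAt_const p.1 (p.2 • (∫ q in D, dZeta α q)))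
  have h3 := h2.deriv
  rw [one_smul, sub_zero, ← h1.deriv] at h3
  exact h3

theorem dZeta_tilde (D : Set (ℝ × ℝ)) {α : ℝ × ℝ → V3} {p : ℝ × ℝ} (h : DifferentiableAt ℝ α p) :
    dZeta (tildeAlpha D α) p = dZeta α p - ∫ q in D, dZeta α q := by
  have h1 := dZeta_hasDeriv h
  have h2 := (h1.sub (hasDerivAt_const p.2 (p.1 • (∫ q in D, dXi α q)))).sub
    ((hasDerivAt_id p.2).smul_const (∫ q in D, dZeta α q))
  have h3 := h2.deriv
  rw [one_smul, sub_zero, ← h1.deriv] at h3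
  exact h3

theorem mulVec_split (P : M3) (x y : ℝ) :
    P.mulVec ![0, x, y] = x • P.mulVec ![0, 1, 0] + y • P.mulVec ![0, 0, 1] := by
  rw [← Matrix.mulVec_smul, ← Matrix.mulVec_smul, ← Matrix.mulVec_add]
  simp

theorem optimal_g_is_zero_splitting
    (B : M3 →ₗ[ℝ] M3 →ₗ[ℝ] ℝ) (hBsymm : ∀ X Y, B X Y = B Y X)
    (hBnn : ∀ G, 0 ≤ B G G)
    (Dset : Set (ℝ × ℝ)) (hDopen : IsOpen Dset) (hDbdd : Bornology.IsBounded Dset)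
    (hDvol : volume Dset = 1)
    (hmom1 : (∫ p in Dset, p.1) = 0) (hmom2 : (∫ p in Dset, p.2) = 0)
    (R₀ : M3) (hR₀ : R₀ ∈ SO3) (P : M3) (g : Fin 3 → ℝ)
    (α : ℝ × ℝ → Fin 3 → ℝ)
    (U : Set (ℝ × ℝ)) (hUopen : IsOpen U) (hUsub : closure Dset ⊆ U)
    (hα : ContDiffOn ℝ 1 α U) :
    (∫ p in Dset,
        B (R₀ * colMat (P.mulVec ![0, p.1, p.2] + g) (dXi α p) (dZeta α p) * R₀.transpose)
          (R₀ * colMat (P.mulVec ![0, p.1, p.2] + g) (dXi α p) (dZeta α p) * R₀.transpose)) =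
      (∫ p in Dset,
        B (R₀ * colMat (P.mulVec ![0, p.1, p.2])
              (dXi (tildeAlpha Dset α) p) (dZeta (tildeAlpha Dset α) p) * R₀.transpose)
          (R₀ * colMat (P.mulVec ![0, p.1, p.2])
              (dXi (tildeAlpha Dset α) p) (dZeta (tildeAlpha Dset α) p) * R₀.transpose)) +
        B (R₀ * colMat g (∫ q in Dset, dXi α q) (∫ q in Dset, dZeta α q) * R₀.transpose)
          (R₀ * colMat g (∫ q in Dset, dXi α q) (∫ q in Dset, dZeta α q) * R₀.transpose) ∧
    (∫ p in Dset,
        B (R₀ * colMat (P.mulVec ![0, p.1, p.2] + g) (dXi α p) (dZeta α p) * R₀.transpose)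
          (R₀ * colMat (P.mulVec ![0, p.1, p.2] + g) (dXi α p) (dZeta α p) * R₀.transpose)) ≥
      (∫ p in Dset,
        B (R₀ * colMat (P.mulVec ![0, p.1, p.2])
              (dXi (tildeAlpha Dset α) p) (dZeta (tildeAlpha Dset α) p) * R₀.transpose)
          (R₀ * colMat (P.mulVec ![0, p.1, p.2])
              (dXi (tildeAlpha Dset α) p) (dZeta (tildeAlpha Dset α) p) * R₀.transpose)) := by
  have hdiff : ∀ p ∈ U, DifferentiableAt ℝ α p := fun p hp =>
    (hα.differentiableOn one_ne_zero).differentiableAt (hUopen.mem_nhds hp)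
  have hfd : ContinuousOn (fderiv ℝ α) U := hα.continuousOn_fderiv_of_isOpen hUopen le_rfl
  have hX : ContinuousOn (dXi α) (closure Dset) := by
    have : ContinuousOn (fun p => fderiv ℝ α p (1, 0)) (closure Dset) :=
      (hfd.mono hUsub).clm_apply continuousOn_const
    exact this.congr fun p hp => (dXi_hasDeriv (hdiff p (hUsub hp))).deriv
  have hZ : ContinuousOn (dZeta α) (closure Dset) := by
    have : ContinuousOn (fun p => fderiv ℝ α p (0, 1)) (closure Dset) :=
      (hfd.mono hUsub).clm_apply continuousOn_const
    exact this.congr fun p hp => (dZeta_hasDeriv (hdiff p (hUsub hp))).deriv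
  have hcomp : IsCompact (closure Dset) := hDbdd.isCompact_closure
  have hint : ∀ {F : Type} [NormedAddCommGroup F] (f : ℝ × ℝ → F),
      ContinuousOn f (closure Dset) → Integrable f (volume.restrict Dset) := by
    intro F _ f hf
    exact (hf.integrableOn_compact hcomp).mono_set subset_closure
  have : IsProbabilityMeasure (volume.restrict Dset) := ⟨by simp [hDvol]⟩
  set m1 := ∫ q in Dset, dXi α q with hm1
  set m2 := ∫ q in Dset, dZeta α q with hm2
  let f : ℝ × ℝ → V3 × V3 × V3 := fun p =>
    (p.1 • P.mulVec ![0, 1, 0] + p.2 • P.mulVec ![0, 0, 1], dXi α p - m1, dZeta α p - m2)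
  let C : (V3 × V3 × V3) →ₗ[ℝ] (V3 × V3 × V3) →ₗ[ℝ] ℝ := B.compl₁₂ (conjLin R₀) (conjLin R₀)
  have hc1 : ContinuousOn (fun p : ℝ × ℝ => p.1 • P.mulVec ![0, 1, 0] + p.2 • P.mulVec ![0, 0, 1])
      (closure Dset) := by fun_prop
  have hc2 : ContinuousOn (fun p => dXi α p - m1) (closure Dset) := hX.sub continuousOn_const
  have hc3 : ContinuousOn (fun p => dZeta α p - m2) (closure Dset) := hZ.sub continuousOn_const
  have hf : ContinuousOn f (closure Dset) := hc1.prodMk (hc2.prodMk hc3)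
  have h0 : ∫ p in Dset, f p = 0 := by
    have e1 : ∫ p in Dset, (p.1 • P.mulVec ![0, 1, 0] + p.2 • P.mulVec ![0, 0, 1]) = 0 := by
      rw [integral_add (hint _ (by fun_prop)) (hint _ (by fun_prop)), integral_smul_const,
        integral_smul_const, hmom1, hmom2]
      simp
    have e2 : ∫ p in Dset, (dXi α p - m1) = 0 := by
      rw [integral_sub (hint _ hX) (integrable_const _), ← hm1]
      simp
    have e3 : ∫ p in Dset, (dZeta α p - m2) = 0 := by
      rw [integral_sub (hint _ hZ) (integrable_const _), ← hm2]
      simp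
    have := integral_pair (hint _ hc1) (hint _ (hc2.prodMk hc3))
    rw [integral_pair (hint _ hc2) (hint _ hc3), e1, e2, e3] at this
    exact this
  have key := split_lemma C (fun x y => hBsymm _ _) (volume.restrict Dset) f (hint _ hf)
    (hint _ (contBilin C hf)) h0 (g, m1, m2)
  have eL : (∫ p in Dset,
        B (R₀ * colMat (P.mulVec ![0, p.1, p.2] + g) (dXi α p) (dZeta α p) * R₀.transpose)
          (R₀ * colMat (P.mulVec ![0, p.1, p.2] + g) (dXi α p) (dZeta α p) * R₀.transpose)) =
      ∫ p in Dset, C (f p + (g, m1, m2)) (f p + (g, m1, m2)) := by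
    refine integral_congr_ae (Filter.Eventually.of_forall fun p => ?_)
    have : f p + (g, m1, m2) = (P.mulVec ![0, p.1, p.2] + g, dXi α p, dZeta α p) := by
      simp [f, mulVec_split P p.1 p.2]
    simp only [this]
    rfl
  have eR : (∫ p in Dset,
        B (R₀ * colMat (P.mulVec ![0, p.1, p.2])
              (dXi (tildeAlpha Dset α) p) (dZeta (tildeAlpha Dset α) p) * R₀.transpose)
          (R₀ * colMat (P.mulVec ![0, p.1, p.2])
              (dXi (tildeAlpha Dset α) p) (dZeta (tildeAlpha Dset α) p) * R₀.transpose)) =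
      ∫ p in Dset, C (f p) (f p) := by
    refine setIntegral_congr_fun hDopen.measurableSet fun p hp => ?_
    have hd := hdiff p (hUsub (subset_closure hp))
    simp only [dXi_tilde Dset hd, dZeta_tilde Dset hd, mulVec_split P p.1 p.2]
    rfl
  have main := (eL.trans key).trans (congrArg (· + C (g, m1, m2) (g, m1, m2)) eR.symm)
  refine ⟨main, ?_⟩
  have hnn : 0 ≤ C (g, m1, m2) (g, m1, m2) := hBnn _
  rw [ge_iff_le, eL, eR, key]
  linarith
end
end

section
/- Let Q₃ : ℝ^{3×3} → [0,∞) be a nonnegative quadratic form with Q₃(G) = Q₃((G + Gᵀ)/2) for all G and which is positive definite on symmetric matrices, let R₀ ∈ SO(3), and let D ⊂ ℝ² be the open disc of radius 1/√π centred at the origin. Then for every skew-symmetric matrix P ∈ ℝ^{3×3}, with entries p₁₂ = P₁₂, p₁₃ = P₁₃, p₂₃ = P₂₃, the infimum over all C¹ maps α : ℝ² → ℝ³ of ∫_D Q₃( R₀ ( P(0,ξ,ζ)ᵀ | ∂_ξα | ∂_ζα ) R₀ᵀ ) dξdζ equals (1/(4π)) · min over u, v, w ∈ ℝ³ of [ Q₃(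 R₀ ( (p₁₂, 0, −p₂₃)ᵀ | u | v ) R₀ᵀ ) + Q₃( R₀ ( (p₁₃, p₂₃, 0)ᵀ | v | w ) R₀ᵀ ) ], and this minimum is attained. -/
open MeasureTheory Set

noncomputable section

/-- The open disc of area one centred at the origin of `ℝ²`. -/
def unitDisc : Set (ℝ × ℝ) := {p : ℝ × ℝ | p.1 ^ 2 + p.2 ^ 2 < 1 / Real.pi}

lemma disc_open : IsOpen unitDisc :=
  isOpen_lt (by fun_prop) continuous_const

lemma disc_integrable (g : ℝ × ℝ → ℝ) (hg : Continuous g) : IntegrableOn g unitDisc := by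
  have hc : IsCompact (Icc (-1:ℝ) 1 ×ˢ Icc (-1:ℝ) 1) := isCompact_Icc.prod isCompact_Icc
  refine (hg.continuousOn.integrableOn_compact hc).mono_set ?_
  rintro ⟨x, y⟩ h
  have h' : x ^ 2 + y ^ 2 < 1 / Real.pi := h
  have hpi : 1 / Real.pi < 1 := by
    rw [div_lt_one Real.pi_pos]; linarith [Real.pi_gt_three]
  simp only [mem_prod, mem_Icc]
  refine ⟨⟨?_, ?_⟩, ?_, ?_⟩ <;> nlinarith [sq_nonneg x, sq_nonneg y]

lemma disc_polar (g : ℝ × ℝ → ℝ) (hg : Continuous g) :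
    ∫ p in unitDisc, g p =
      ∫ r in Ioo 0 (Real.sqrt (1 / Real.pi)), ∫ θ in Ioo (-Real.pi) Real.pi,
        r * g (r * Real.cos θ, r * Real.sin θ) := by
  rw [← integral_indicator disc_open.measurableSet, ← integral_comp_polarCoord_symm]
  have h1 : ∀ p ∈ polarCoord.target,
      p.1 • unitDisc.indicator g (polarCoord.symm p) =
      (Ioo 0 (Real.sqrt (1 / Real.pi)) ×ˢ Ioo (-Real.pi) Real.pi).indicator
        (fun p => p.1 * g (p.1 * Real.cos p.2, p.1 * Real.sin p.2)) p := by
    rintro ⟨r, θ⟩ hp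
    simp only [polarCoord_target, mem_prod, mem_Ioi] at hp
    have hm : polarCoord.symm (r, θ) ∈ unitDisc ↔
        (r, θ) ∈ Ioo 0 (Real.sqrt (1 / Real.pi)) ×ˢ Ioo (-Real.pi) Real.pi := by
      simp only [unitDisc, polarCoord_symm_apply, mem_ofPred_eq, mem_prod]
      have : (r * Real.cos θ) ^ 2 + (r * Real.sin θ) ^ 2 = r ^ 2 := by
        linear_combination r ^ 2 * Real.sin_sq_add_cos_sq θ
      rw [this, ← Real.lt_sqrt hp.1.le]
      simp [hp.1, hp.2.1, hp.2.2]
    by_cases h : polarCoord.symm (r, θ) ∈ unitDisc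
    · rw [indicator_of_mem h, indicator_of_mem (hm.1 h)]
      simp
    · rw [indicator_of_notMem h, indicator_of_notMem (fun h' => h (hm.2 h'))]
      simp
  rw [setIntegral_congr_fun polarCoord.open_target.measurableSet h1,
    setIntegral_indicator (measurableSet_Ioo.prod measurableSet_Ioo)]
  have h2 : polarCoord.target ∩ Ioo 0 (Real.sqrt (1 / Real.pi)) ×ˢ Ioo (-Real.pi) Real.pi
      = Ioo 0 (Real.sqrt (1 / Real.pi)) ×ˢ Ioo (-Real.pi) Real.pi := by
    rw [inter_eq_right, polarCoord_target]
    exact prod_mono (fun x hx => hx.1) le_rfl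
  rw [h2, Measure.volume_eq_prod, setIntegral_prod]
  have hc : IsCompact (Icc 0 (Real.sqrt (1 / Real.pi)) ×ˢ Icc (-Real.pi) Real.pi) :=
    isCompact_Icc.prod isCompact_Icc
  refine (ContinuousOn.integrableOn_compact hc ?_).mono_set
    (prod_mono Ioo_subset_Icc_self Ioo_subset_Icc_self)
  exact Continuous.continuousOn (by fun_prop)

lemma disc_angular (f : ℝ × ℝ → ℝ) (hf : ContDiff ℝ 1 f) :
    ∫ p in unitDisc, fderiv ℝ f p (-p.2, p.1) = 0 := by
  have hc : Continuous fun p : ℝ × ℝ => fderiv ℝ f p (-p.2, p.1) :=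
    (hf.continuous_fderiv one_ne_zero).clm_apply (by fun_prop)
  rw [disc_polar _ hc]
  have : ∀ r : ℝ, ∫ θ in Ioo (-Real.pi) Real.pi,
        r * fderiv ℝ f (r * Real.cos θ, r * Real.sin θ) (-(r * Real.sin θ), r * Real.cos θ) = 0 := by
    intro r
    rw [integral_const_mul, ← integral_Ioc_eq_integral_Ioo,
      ← intervalIntegral.integral_of_le (by linarith [Real.pi_pos])]
    have hd : ∀ θ ∈ uIcc (-Real.pi) Real.pi,
        HasDerivAt (fun θ => f (r * Real.cos θ, r * Real.sin θ))
        (fderiv ℝ f (r * Real.cos θ, r * Real.sin θ) (-(r * Real.sin θ), r * Real.cos θ)) θ := by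
      intro θ _
      have h1 : HasDerivAt (fun θ => (r * Real.cos θ, r * Real.sin θ))
          (-(r * Real.sin θ), r * Real.cos θ) θ := by
        have := ((Real.hasDerivAt_cos θ).const_mul r).prodMk ((Real.hasDerivAt_sin θ).const_mul r)
        simpa using this
      exact ((hf.differentiable one_ne_zero _).hasFDerivAt).comp_hasDerivAt θ h1
    rw [intervalIntegral.integral_eq_sub_of_hasDerivAt hd]
    · simp
    · refine Continuous.intervalIntegrable ?_ _ _
      exact hc.comp (by fun_prop : Continuous fun θ : ℝ => (r * Real.cos θ, r * Real.sin θ))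
  simp [this]

lemma disc_xy : ∫ p in unitDisc, p.1 * p.2 = 0 := by
  have h := disc_angular (fun p => p.1 * p.1) (by fun_prop)
  have h2 : ∫ p in unitDisc, (-2) * (p.1 * p.2) = 0 := by
    rw [← h]
    congr 1 with p
    have : HasFDerivAt (fun p : ℝ × ℝ => p.1 * p.1) _ p :=
      (hasFDerivAt_fst (𝕜 := ℝ) (p := p)).mul (hasFDerivAt_fst (𝕜 := ℝ) (p := p))
    rw [this.fderiv]; simp; ring
  rw [integral_const_mul] at h2
  linarith

lemma disc_xx_sub : ∫ p in unitDisc, (p.1 ^ 2 - p.2 ^ 2) = 0 := by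
  have h := disc_angular (fun p => p.1 * p.2) (by fun_prop)
  rw [← h]
  congr 1 with p
  have : HasFDerivAt (fun p : ℝ × ℝ => p.1 * p.2) _ p :=
    (hasFDerivAt_fst (𝕜 := ℝ) (p := p)).mul (hasFDerivAt_snd (𝕜 := ℝ) (p := p))
  rw [this.fderiv]; simp; ring

lemma disc_xx_add : ∫ p in unitDisc, (p.1 ^ 2 + p.2 ^ 2) = 1 / (2 * Real.pi) := by
  rw [disc_polar _ (by fun_prop)]
  have : ∀ r : ℝ, ∫ θ in Ioo (-Real.pi) Real.pi,
      r * ((r * Real.cos θ) ^ 2 + (r * Real.sin θ) ^ 2) = 2 * Real.pi * r ^ 3 := by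
    intro r
    have : ∀ θ : ℝ, r * ((r * Real.cos θ) ^ 2 + (r * Real.sin θ) ^ 2) = r ^ 3 := fun θ => by
      linear_combination r ^ 3 * Real.sin_sq_add_cos_sq θ
    simp only [this]
    rw [setIntegral_const]
    simp [Real.pi_pos.le, Measure.real]
    left
    ring
  simp only [this]
  rw [← integral_Ioc_eq_integral_Ioo, ← intervalIntegral.integral_of_le (Real.sqrt_nonneg _),
    intervalIntegral.integral_const_mul, integral_pow]
  have h4 : Real.sqrt (1 / Real.pi) ^ 4 = (1 / Real.pi) ^ 2 := by
    have := Real.sq_sqrt (show 0 ≤ 1 / Real.pi by positivity)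
    calc _ = (Real.sqrt (1 / Real.pi) ^ 2) ^ 2 := by ring
      _ = _ := by rw [this]
  have := Real.pi_ne_zero
  norm_num only [Nat.cast_ofNat] at *
  rw [h4]; field_simp; norm_num

lemma disc_xx : ∫ p in unitDisc, p.1 ^ 2 = 1 / (4 * Real.pi) := by
  have h1 := disc_xx_sub
  have h2 := disc_xx_add
  have i1 := disc_integrable (fun p => p.1 ^ 2) (by fun_prop)
  have i2 := disc_integrable (fun p => p.2 ^ 2) (by fun_prop)
  rw [integral_sub i1 i2] at h1
  rw [integral_add i1 i2] at h2
  have h3 : 1 / (4 * Real.pi) = (1 / (2 * Real.pi)) / 2 := by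
    have := Real.pi_ne_zero
    field_simp; norm_num
  rw [h3]; linarith

lemma disc_yy : ∫ p in unitDisc, p.2 ^ 2 = 1 / (4 * Real.pi) := by
  have h1 := disc_xx_sub
  have i1 := disc_integrable (fun p => p.1 ^ 2) (by fun_prop)
  have i2 := disc_integrable (fun p => p.2 ^ 2) (by fun_prop)
  rw [integral_sub i1 i2, disc_xx] at h1
  linarith

lemma disc_quad (a b c : ℝ) : ∫ p in unitDisc, (p.1 ^ 2 * a + p.1 * p.2 * b + p.2 ^ 2 * c) =
    1 / (4 * Real.pi) * (a + c) := by
  rw [integral_add (disc_integrable _ (by fun_prop)) (disc_integrable _ (by fun_prop)),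
    integral_add (disc_integrable _ (by fun_prop)) (disc_integrable _ (by fun_prop)),
    integral_mul_const, integral_mul_const, integral_mul_const, disc_xx, disc_yy, disc_xy]
  ring

lemma bil_continuous (b : M3 →ₗ[ℝ] M3 →ₗ[ℝ] ℝ) (X Y : ℝ × ℝ → M3)
    (hX : Continuous X) (hY : Continuous Y) : Continuous fun p => b (X p) (Y p) := by
  have h : ∀ p, b (X p) (Y p) = ∑ i, ∑ j, X p i j *
      ∑ k, ∑ l, Y p k l * b (Matrix.single i j 1) (Matrix.single k l 1) := by
    intro p
    have e : ∀ (φ : M3 →ₗ[ℝ] ℝ) (Z : M3), φ Z = ∑ i, ∑ j, Z i j * φ (Matrix.single i j 1) := by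
      intro φ Z
      conv_lhs => rw [Matrix.matrix_eq_sum_single Z]
      simp only [map_sum]
      refine Finset.sum_congr rfl fun i _ => Finset.sum_congr rfl fun j _ => ?_
      rw [← smul_eq_mul, ← map_smul, Matrix.smul_single, smul_eq_mul, mul_one]
    rw [← LinearMap.flip_apply, e]
    refine Finset.sum_congr rfl fun i _ => Finset.sum_congr rfl fun j _ => ?_
    rw [LinearMap.flip_apply, e]
  simp only [h]
  have hX' : ∀ i j, Continuous fun p => X p i j := fun i j => hX.matrix_elem i j
  have hY' : ∀ i j, Continuous fun p => Y p i j := fun i j => hY.matrix_elem i j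
  fun_prop

/-- `R₀ X R₀ᵀ` as a linear map. -/
def conjMap (R : M3) : M3 →ₗ[ℝ] M3 :=
  (LinearMap.mulRight ℝ R.transpose).comp (LinearMap.mulLeft ℝ R)

lemma conjMap_apply (R X : M3) : conjMap R X = R * X * R.transpose := rfl

/-- The map `(u, v, w) ↦ (0 | u | v)`. -/
def colL1 : ((Fin 3 → ℝ) × (Fin 3 → ℝ) × (Fin 3 → ℝ)) →ₗ[ℝ] M3 where
  toFun x := colMat 0 x.1 x.2.1
  map_add' x y := by ext i j; fin_cases j <;> simp [colMat]
  map_smul' c x := by ext i j; fin_cases j <;> simp [colMat]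

/-- The map `(u, v, w) ↦ (0 | v | w)`. -/
def colL2 : ((Fin 3 → ℝ) × (Fin 3 → ℝ) × (Fin 3 → ℝ)) →ₗ[ℝ] M3 where
  toFun x := colMat 0 x.2.1 x.2.2
  map_add' x y := by ext i j; fin_cases j <;> simp [colMat]
  map_smul' c x := by ext i j; fin_cases j <;> simp [colMat]

lemma euler_lagrange (b : M3 →ₗ[ℝ] M3 →ₗ[ℝ] ℝ) (hnn : ∀ G, 0 ≤ b G G)
    (hker : ∀ G, b G G = 0 → G + G.transpose = 0) (a₁ a₂ : Fin 3 → ℝ) :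
    ∃ u v w : Fin 3 → ℝ, ∀ u' v' w' : Fin 3 → ℝ,
      b (colMat a₁ u v) (colMat 0 u' v') + b (colMat a₂ v w) (colMat 0 v' w') = 0 := by
  let K := b.compl₁₂ colL1 colL1 + b.compl₁₂ colL2 colL2
  have hK : Function.Injective K := by
    rw [← LinearMap.ker_eq_bot, LinearMap.ker_eq_bot']
    intro x hx
    have h0 : b (colL1 x) (colL1 x) + b (colL2 x) (colL2 x) = 0 := by
      have := congrArg (fun φ => φ x) hx
      simpa [K] using this
    have h1 := hker _ (le_antisymm (by linarith [hnn (colL2 x)]) (hnn (colL1 x)))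
    have h2 := hker _ (le_antisymm (by linarith [hnn (colL1 x)]) (hnn (colL2 x)))
    obtain ⟨u, v, w⟩ := x
    have e1 := fun i j => congrFun (congrFun h1 i) j
    have e2 := fun i j => congrFun (congrFun h2 i) j
    simp only [colL1, colL2, colMat, LinearMap.coe_mk, AddHom.coe_mk, Matrix.add_apply,
      Matrix.transpose_apply, Matrix.of_apply, Matrix.zero_apply] at e1 e2
    have a01 := e1 0 1
    have a02 := e1 0 2
    have a11 := e1 1 1
    have a12 := e1 1 2
    have a22 := e1 2 2
    have c01 := e2 0 1
    have c02 := e2 0 2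
    have c11 := e2 1 1
    have c12 := e2 1 2
    have c22 := e2 2 2
    simp at a01 a02 a11 a12 a22 c01 c02 c11 c12 c22
    have hv : v = 0 := by ext i; fin_cases i <;> simp <;> linarith
    subst hv
    simp at a12 c12
    have hu : u = 0 := by ext i; fin_cases i <;> simp <;> linarith
    have hw : w = 0 := by ext i; fin_cases i <;> simp <;> linarith
    rw [hu, hw]; rfl
  have hS : Function.Surjective K :=
    (LinearMap.injective_iff_surjective_of_finrank_eq_finrank
      Subspace.dual_finrank_eq.symm).1 hK
  obtain ⟨⟨u, v, w⟩, hx⟩ := hS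
    (-((b (colMat a₁ 0 0)).comp colL1 + (b (colMat a₂ 0 0)).comp colL2))
  refine ⟨u, v, w, fun u' v' w' => ?_⟩
  have h := congrArg (fun φ => φ (u', v', w')) hx
  have hs : ∀ a y z : Fin 3 → ℝ, colMat a y z = colMat a 0 0 + colMat 0 y z := by
    intro a y z; ext i j; fin_cases j <;> simp [colMat]
  rw [hs a₁, hs a₂]
  simp [K, colL1, colL2] at h ⊢
  linarith

lemma colMat_add (a y z a' y' z' : Fin 3 → ℝ) :
    colMat (a + a') (y + y') (z + z') = colMat a y z + colMat a' y' z' := by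
  ext i j; fin_cases j <;> simp [colMat]

lemma colMat_smul (c : ℝ) (a y z : Fin 3 → ℝ) :
    colMat (c • a) (c • y) (c • z) = c • colMat a y z := by
  ext i j; fin_cases j <;> simp [colMat]

lemma deriv_slice (α : ℝ × ℝ → Fin 3 → ℝ) (hα : ContDiff ℝ 1 α) (p : ℝ × ℝ) :
    deriv (fun x => α (x, p.2)) p.1 = fderiv ℝ α p (1, 0) ∧
    deriv (fun y => α (p.1, y)) p.2 = fderiv ℝ α p (0, 1) := by
  have h := (hα.differentiable one_ne_zero p).hasFDerivAt
  constructor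
  · exact (HasFDerivAt.comp_hasDerivAt (f := fun x => (x, p.2)) p.1 h
      ((hasDerivAt_id _).prodMk (hasDerivAt_const _ _))).deriv
  · exact (HasFDerivAt.comp_hasDerivAt (f := fun y => (p.1, y)) p.2 h
      ((hasDerivAt_const _ _).prodMk (hasDerivAt_id _))).deriv

lemma colMat_continuous (a y z : ℝ × ℝ → Fin 3 → ℝ) (ha : Continuous a) (hy : Continuous y)
    (hz : Continuous z) : Continuous fun p => colMat (a p) (y p) (z p) := by
  refine continuous_matrix fun i j => ?_
  fin_cases j <;> simp [colMat] <;> fun_prop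

/-- The quadratic competitor. -/
def quadMap (u v w : Fin 3 → ℝ) (p : ℝ × ℝ) : Fin 3 → ℝ :=
  (p.1 * p.1 / 2) • u + (p.1 * p.2) • v + (p.2 * p.2 / 2) • w

lemma quadMap_contDiff (u v w : Fin 3 → ℝ) : ContDiff ℝ 1 (quadMap u v w) := by
  unfold quadMap; fun_prop

lemma quadMap_deriv (u v w : Fin 3 → ℝ) (p : ℝ × ℝ) :
    deriv (fun x => quadMap u v w (x, p.2)) p.1 = p.1 • u + p.2 • v ∧
    deriv (fun y => quadMap u v w (p.1, y)) p.2 = p.1 • v + p.2 • w := by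
  constructor
  · refine HasDerivAt.deriv ?_
    have h1 := ((((hasDerivAt_id p.1).mul (hasDerivAt_id p.1)).div_const 2).smul_const u)
    have h2 := (((hasDerivAt_id p.1).mul_const p.2).smul_const v)
    have h3 := (h1.add h2).add (hasDerivAt_const p.1 ((p.2 * p.2 / 2) • w))
    refine h3.congr_deriv ?_
    simp
  · refine HasDerivAt.deriv ?_
    have h1 := ((((hasDerivAt_id p.2).mul (hasDerivAt_id p.2)).div_const 2).smul_const w)
    have h2 := (((hasDerivAt_id p.2).const_mul p.1).smul_const v)
    have h3 := ((hasDerivAt_const p.2 ((p.1 * p.1 / 2) • u)).add h2).add h1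
    refine h3.congr_deriv ?_
    simp

lemma main_aux (b : M3 →ₗ[ℝ] M3 →ₗ[ℝ] ℝ) (hsymm : ∀ X Y, b X Y = b Y X) (hnn : ∀ G, 0 ≤ b G G)
    (hker : ∀ G, b G G = 0 → G + G.transpose = 0) (a₁ a₂ : Fin 3 → ℝ)
    (q : ℝ × ℝ → Fin 3 → ℝ) (hq : ∀ p, q p = p.1 • a₁ + p.2 • a₂) :
    ∃ u v w : Fin 3 → ℝ,
      (∀ u' v' w' : Fin 3 → ℝ,
        b (colMat a₁ u v) (colMat a₁ u v) + b (colMat a₂ v w) (colMat a₂ v w) ≤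
        b (colMat a₁ u' v') (colMat a₁ u' v') + b (colMat a₂ v' w') (colMat a₂ v' w')) ∧
      sInf {t : ℝ | ∃ α : ℝ × ℝ → Fin 3 → ℝ, ContDiff ℝ 1 α ∧
          t = ∫ p in unitDisc,
            b (colMat (q p)
                  (deriv (fun x => α (x, p.2)) p.1) (deriv (fun y => α (p.1, y)) p.2))
              (colMat (q p)
                  (deriv (fun x => α (x, p.2)) p.1) (deriv (fun y => α (p.1, y)) p.2))} =
        (1 / (4 * Real.pi)) *
          (b (colMat a₁ u v) (colMat a₁ u v) + b (colMat a₂ v w) (colMat a₂ v w)) := by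
  obtain ⟨u, v, w, hEL⟩ := euler_lagrange b hnn hker a₁ a₂
  have expand : ∀ X Y : M3, b (X + Y) (X + Y) = b X X + 2 * b X Y + b Y Y := by
    intro X Y
    simp only [map_add, LinearMap.add_apply]
    rw [hsymm Y X]; ring
  refine ⟨u, v, w, ?_, ?_⟩
  · intro u' v' w'
    have e1 : colMat a₁ u' v' = colMat a₁ u v + colMat 0 (u' - u) (v' - v) := by
      rw [← colMat_add]; simp
    have e2 : colMat a₂ v' w' = colMat a₂ v w + colMat 0 (v' - v) (w' - w) := by
      rw [← colMat_add]; simp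
    rw [e1, e2, expand, expand]
    linarith [hEL (u' - u) (v' - v) (w' - w), hnn (colMat 0 (u' - u) (v' - v)),
      hnn (colMat 0 (v' - v) (w' - w))]
  set F₁ := colMat a₁ u v with hF₁
  set F₂ := colMat a₂ v w with hF₂
  have hFs : ∀ p : ℝ × ℝ, colMat (q p) (p.1 • u + p.2 • v) (p.1 • v + p.2 • w) =
      p.1 • F₁ + p.2 • F₂ := by
    intro p
    rw [hq, colMat_add, colMat_smul, colMat_smul]
  have hqF : ∀ p : ℝ × ℝ, b (p.1 • F₁ + p.2 • F₂) (p.1 • F₁ + p.2 • F₂) =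
      p.1 ^ 2 * b F₁ F₁ + p.1 * p.2 * (2 * b F₁ F₂) + p.2 ^ 2 * b F₂ F₂ := by
    intro p
    rw [expand]
    simp only [map_smul, LinearMap.smul_apply, smul_eq_mul]
    ring
  have hmin : ∫ p in unitDisc, b (p.1 • F₁ + p.2 • F₂) (p.1 • F₁ + p.2 • F₂) =
      (1 / (4 * Real.pi)) * (b F₁ F₁ + b F₂ F₂) := by
    simp only [hqF]
    exact disc_quad _ _ _
  refine IsLeast.csInf_eq ⟨?_, ?_⟩
  · refine ⟨quadMap u v w, quadMap_contDiff u v w, ?_⟩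
    rw [← hmin]
    congr 1 with p
    rw [(quadMap_deriv u v w p).1, (quadMap_deriv u v w p).2, hFs]
  · rintro t ⟨α, hα, rfl⟩
    let τ : (Fin 3 → ℝ) →ₗ[ℝ] ℝ :=
      { toFun := fun d => b F₁ (colMat 0 0 d)
        map_add' := fun x y => by rw [← map_add, ← colMat_add]; simp
        map_smul' := fun c x => by
          rw [RingHom.id_apply, ← map_smul, ← colMat_smul]; simp }
    let β : ℝ × ℝ → Fin 3 → ℝ := fun p => α p - quadMap u v w p
    have hβ : ContDiff ℝ 1 β := hα.sub (quadMap_contDiff u v w)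
    let f : ℝ × ℝ → ℝ := fun p => LinearMap.toContinuousLinearMap τ (β p)
    have hf : ContDiff ℝ 1 f := (LinearMap.toContinuousLinearMap τ).contDiff.comp hβ
    have hang := disc_angular f hf
    have hdf : ∀ p d, fderiv ℝ f p d = τ (fderiv ℝ β p d) := by
      intro p d
      have : HasFDerivAt f ((LinearMap.toContinuousLinearMap τ).comp (fderiv ℝ β p)) p :=
        (LinearMap.toContinuousLinearMap τ).hasFDerivAt.comp p
          (hβ.differentiable one_ne_zero p).hasFDerivAt
      rw [this.fderiv]; rfl
    have hdβ : ∀ p d, fderiv ℝ β p d = fderiv ℝ α p d - fderiv ℝ (quadMap u v w) p d := by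
      intro p d
      have : fderiv ℝ β p = fderiv ℝ α p - fderiv ℝ (quadMap u v w) p :=
        ((hα.differentiable one_ne_zero p).hasFDerivAt.sub
          ((quadMap_contDiff u v w).differentiable one_ne_zero p).hasFDerivAt).fderiv
      rw [this]; rfl
    have hq1 : ∀ p, fderiv ℝ (quadMap u v w) p (1, 0) = p.1 • u + p.2 • v := fun p => by
      rw [← (deriv_slice _ (quadMap_contDiff u v w) p).1, (quadMap_deriv u v w p).1]
    have hq2 : ∀ p, fderiv ℝ (quadMap u v w) p (0, 1) = p.1 • v + p.2 • w := fun p => by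
      rw [← (deriv_slice _ (quadMap_contDiff u v w) p).2, (quadMap_deriv u v w p).2]
    have hX : ∀ p, colMat (q p)
        (deriv (fun x => α (x, p.2)) p.1) (deriv (fun y => α (p.1, y)) p.2) =
        (p.1 • F₁ + p.2 • F₂) + colMat 0 (fderiv ℝ β p (1, 0)) (fderiv ℝ β p (0, 1)) := by
      intro p
      rw [(deriv_slice α hα p).1, (deriv_slice α hα p).2, ← hFs, ← colMat_add, hdβ, hdβ,
        hq1, hq2]
      simp
    have hcross : ∀ p, b (p.1 • F₁ + p.2 • F₂)
        (colMat 0 (fderiv ℝ β p (1, 0)) (fderiv ℝ β p (0, 1))) =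
        fderiv ℝ f p (-p.2, p.1) := by
      intro p
      have hd : ((-p.2, p.1) : ℝ × ℝ) = (-p.2) • (1, 0) + p.1 • (0, 1) := by simp
      have hd' : fderiv ℝ f p (-p.2, p.1) =
          -p.2 * τ (fderiv ℝ β p (1, 0)) + p.1 * τ (fderiv ℝ β p (0, 1)) := by
        rw [hd, (fderiv ℝ f p).map_add, (fderiv ℝ f p).map_smul, (fderiv ℝ f p).map_smul,
          hdf, hdf, smul_eq_mul, smul_eq_mul]
      rw [hd']
      generalize fderiv ℝ β p (1, 0) = d₁
      generalize fderiv ℝ β p (0, 1) = d₂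
      have hs : colMat 0 d₁ d₂ = colMat 0 d₁ 0 + colMat 0 0 d₂ := by
        rw [← colMat_add]; simp
      have z : colMat 0 0 0 = 0 := by ext i j; fin_cases j <;> simp [colMat]
      have k1 := hEL d₁ 0 0
      have k2 := hEL 0 d₁ 0
      have k3 := hEL 0 0 d₂
      simp only [z, map_zero, add_zero, zero_add] at k1 k2 k3
      rw [hs]
      simp only [map_add, LinearMap.add_apply, map_smul, LinearMap.smul_apply, smul_eq_mul]
      change _ = -p.2 * b F₁ (colMat 0 0 d₁) + p.1 * b F₁ (colMat 0 0 d₂)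
      rw [k1, k3]
      linear_combination p.2 * k2
    have hcd : ∀ d, Continuous fun p => fderiv ℝ β p d := fun d =>
      (hβ.continuous_fderiv one_ne_zero).clm_apply continuous_const
    have hfc : Continuous fun p : ℝ × ℝ => fderiv ℝ f p (-p.2, p.1) :=
      (hf.continuous_fderiv one_ne_zero).clm_apply (by fun_prop)
    have hEc : Continuous fun p : ℝ × ℝ => p.1 • F₁ + p.2 • F₂ := by fun_prop
    have hCc : Continuous fun p => colMat 0 (fderiv ℝ β p (1, 0)) (fderiv ℝ β p (0, 1)) :=
      colMat_continuous _ _ _ continuous_const (hcd _) (hcd _)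
    have key : ∫ p in unitDisc, (b (p.1 • F₁ + p.2 • F₂) (p.1 • F₁ + p.2 • F₂) +
        2 * fderiv ℝ f p (-p.2, p.1)) = (1 / (4 * Real.pi)) * (b F₁ F₁ + b F₂ F₂) := by
      rw [integral_add (disc_integrable _ (bil_continuous b _ _ hEc hEc))
        (disc_integrable _ (by fun_prop)), integral_const_mul, hang, hmin]
      simp
    rw [← key]
    simp only [hX]
    refine integral_mono (disc_integrable _ ((bil_continuous b _ _ hEc hEc).add
      (by fun_prop))) (disc_integrable _ (bil_continuous b _ _ (hEc.add hCc) (hEc.add hCc))) ?_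
    intro p
    simp only []
    rw [expand (p.1 • F₁ + p.2 • F₂) (colMat _ _ _), hcross]
    linarith [hnn (colMat 0 (fderiv ℝ β p (1, 0)) (fderiv ℝ β p (0, 1)))]

theorem Q2_circular_cross_section_pointwise_minimization
    (B : M3 →ₗ[ℝ] M3 →ₗ[ℝ] ℝ) (hBsymm : ∀ X Y, B X Y = B Y X)
    (hBnn : ∀ G, 0 ≤ B G G)
    (hsympart : ∀ G : M3,
      B G G = B ((2:ℝ)⁻¹ • (G + G.transpose)) ((2:ℝ)⁻¹ • (G + G.transpose)))
    (hposdef : ∀ G : M3, G.transpose = G → G ≠ 0 → 0 < B G G)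
    (R₀ : M3) (hR₀ : R₀ ∈ SO3)
    (P : M3) (hskew : P.transpose = -P) :
    ∃ u v w : Fin 3 → ℝ,
      (∀ u' v' w' : Fin 3 → ℝ,
        B (R₀ * colMat ![P 0 1, 0, -(P 1 2)] u v * R₀.transpose)
            (R₀ * colMat ![P 0 1, 0, -(P 1 2)] u v * R₀.transpose) +
          B (R₀ * colMat ![P 0 2, P 1 2, 0] v w * R₀.transpose)
            (R₀ * colMat ![P 0 2, P 1 2, 0] v w * R₀.transpose) ≤
        B (R₀ * colMat ![P 0 1, 0, -(P 1 2)] u' v' * R₀.transpose)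
            (R₀ * colMat ![P 0 1, 0, -(P 1 2)] u' v' * R₀.transpose) +
          B (R₀ * colMat ![P 0 2, P 1 2, 0] v' w' * R₀.transpose)
            (R₀ * colMat ![P 0 2, P 1 2, 0] v' w' * R₀.transpose)) ∧
      sInf {t : ℝ | ∃ α : ℝ × ℝ → Fin 3 → ℝ, ContDiff ℝ 1 α ∧
          t = ∫ p in unitDisc,
            B (R₀ * colMat (P.mulVec ![0, p.1, p.2])
                  (deriv (fun x => α (x, p.2)) p.1) (deriv (fun y => α (p.1, y)) p.2) *
                R₀.transpose)
              (R₀ * colMat (P.mulVec ![0, p.1, p.2])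
                  (deriv (fun x => α (x, p.2)) p.1) (deriv (fun y => α (p.1, y)) p.2) *
                R₀.transpose)} =
        (1 / (4 * Real.pi)) *
          (B (R₀ * colMat ![P 0 1, 0, -(P 1 2)] u v * R₀.transpose)
              (R₀ * colMat ![P 0 1, 0, -(P 1 2)] u v * R₀.transpose) +
            B (R₀ * colMat ![P 0 2, P 1 2, 0] v w * R₀.transpose)
              (R₀ * colMat ![P 0 2, P 1 2, 0] v w * R₀.transpose)) := by
  obtain ⟨hR1, -⟩ := hR₀
  have hp : ∀ i j, P j i = -P i j := fun i j => by
    have := congrFun (congrFun hskew i) j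
    simpa using this
  refine main_aux (B.compl₁₂ (conjMap R₀) (conjMap R₀)) (fun X Y => hBsymm _ _)
    (fun G => hBnn _) ?_ ![P 0 1, 0, -(P 1 2)] ![P 0 2, P 1 2, 0]
    (fun p => P.mulVec ![0, p.1, p.2]) ?_
  · intro G hG
    have hG' : B (R₀ * G * R₀.transpose) (R₀ * G * R₀.transpose) = 0 := hG
    rw [hsympart] at hG'
    have ht : (R₀ * G * R₀.transpose).transpose = R₀ * G.transpose * R₀.transpose := by
      simp [Matrix.transpose_mul, Matrix.mul_assoc]
    have h0 : (2:ℝ)⁻¹ • (R₀ * G * R₀.transpose + (R₀ * G * R₀.transpose).transpose) = 0 := by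
      by_contra hne
      refine (hposdef _ ?_ hne).ne' hG'
      rw [Matrix.transpose_smul, Matrix.transpose_add, Matrix.transpose_transpose, add_comm]
    have h1 : R₀ * (G + G.transpose) * R₀.transpose = 0 := by
      rw [ht] at h0
      rw [mul_add, add_mul]
      exact (smul_eq_zero.1 h0).resolve_left (by norm_num)
    calc G + G.transpose
        = (R₀.transpose * R₀) * (G + G.transpose) * (R₀.transpose * R₀) := by
          rw [hR1]; simp
      _ = R₀.transpose * (R₀ * (G + G.transpose) * R₀.transpose) * R₀ := by
          simp only [Matrix.mul_assoc]
      _ = 0 := by rw [h1]; simp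
  · intro p
    have d1 : P 1 1 = 0 := by linarith [hp 1 1]
    have d2 : P 2 2 = 0 := by linarith [hp 2 2]
    have d12 := hp 1 2
    ext i
    fin_cases i <;> simp [Matrix.mulVec, dotProduct, Fin.sum_univ_three, d1, d2, d12] <;> ring
end
end

section
/- The set {F e₁ : F ∈ convexHull(SO(3))} equals the closed unit ball of ℝ³. That is: (i) for every F in the convex hull of SO(3) one has ‖F e₁‖ ≤ 1; and (ii) for every z ∈ ℝ³ with ‖z‖ ≤ 1 there exist d₂, d₃ ∈ ℝ³ such that the matrix with columns z, d₂, d₃ belongs to the convex hull of SO(3). -/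
open MeasureTheory Set

noncomputable section

lemma aux_SO3 (s y w : ℝ) (hs : 0 ≤ s) (h : s ^ 2 + y ^ 2 + w ^ 2 = 1) (e : ℝ) (he : e ^ 2 = 1) :
    (!![e * s, -(e * y), -w; y, 1 - y ^ 2 / (1 + s), -(e * (y * w / (1 + s)));
      w, -(y * w / (1 + s)), e * (1 - w ^ 2 / (1 + s))] : M3) ∈ SO3 := by
  obtain ⟨k, hk⟩ : ∃ k : ℝ, k * (1 + s) = 1 := ⟨(1 + s)⁻¹, inv_mul_cancel₀ (by positivity)⟩
  have hd : ∀ a : ℝ, a / (1 + s) = a * k := by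
    intro a
    rw [div_eq_iff (by positivity), mul_assoc, hk, mul_one]
  have hk2 : k * (y ^ 2 + w ^ 2) = 1 - s := by
    linear_combination k * h + (1 - s) * hk
  simp only [hd]
  constructor
  · ext i j
    fin_cases i <;> fin_cases j <;>
      simp [Matrix.mul_apply, Fin.sum_univ_three, Matrix.transpose_apply] <;>
      grind
  · simp [Matrix.det_fin_three]
    grind

theorem convexHull_SO3_first_column_eq_closed_unit_ball :
    (∀ F ∈ convexHull ℝ SO3, enorm3 (F.mulVec (Pi.single 0 1)) ≤ 1) ∧
    (∀ z : Fin 3 → ℝ, enorm3 z ≤ 1 →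
      ∃ d₂ d₃ : Fin 3 → ℝ, colMat z d₂ d₃ ∈ convexHull ℝ SO3) := by
  constructor
  · have hconv : Convex ℝ {F : M3 | ∑ i, (F i 0) ^ 2 ≤ 1} := by
      intro X hX Y hY a b ha hb hab
      simp only [Set.mem_ofPred_eq, Fin.sum_univ_three, Matrix.add_apply, Matrix.smul_apply,
        smul_eq_mul] at *
      have key : ∀ x y : ℝ, (a * x + b * y) ^ 2 ≤ a * x ^ 2 + b * y ^ 2 := by
        intro x y
        obtain rfl : b = 1 - a := by linarith
        nlinarith [mul_nonneg (mul_nonneg ha hb) (sq_nonneg (x - y))]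
      nlinarith [key (X 0 0) (Y 0 0), key (X 1 0) (Y 1 0), key (X 2 0) (Y 2 0)]
    have hsub : SO3 ⊆ {F : M3 | ∑ i, (F i 0) ^ 2 ≤ 1} := by
      rintro R ⟨hR, -⟩
      have := congrFun (congrFun hR 0) 0
      simp only [Matrix.mul_apply, Matrix.transpose_apply, Matrix.one_apply_eq] at this
      simp only [Set.mem_ofPred_eq, pow_two]
      exact this.le
    intro F hF
    have h := convexHull_min hsub hconv hF
    simp only [enorm3, Real.sqrt_le_one, Matrix.mulVec_single_one, Matrix.col_apply]
    exact h
  · intro z hz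
    have hz' : z 0 ^ 2 + z 1 ^ 2 + z 2 ^ 2 ≤ 1 := by
      have := Real.sqrt_le_one.1 hz
      simpa [Fin.sum_univ_three] using this
    set s := Real.sqrt (1 - z 1 ^ 2 - z 2 ^ 2) with hsdef
    have hs : 0 ≤ s := Real.sqrt_nonneg _
    have hs2 : s ^ 2 = 1 - z 1 ^ 2 - z 2 ^ 2 := Real.sq_sqrt (by nlinarith [sq_nonneg (z 0)])
    have hx : |z 0| ≤ s := abs_le_of_sq_le_sq (by linarith) hs
    obtain ⟨t, ht1, ht2, ht⟩ : ∃ t : ℝ, -1 ≤ t ∧ t ≤ 1 ∧ t * s = z 0 := by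
      obtain ⟨h1, h2⟩ := abs_le.1 hx
      rcases hs.eq_or_lt with h0 | h0
      · exact ⟨0, by norm_num, by norm_num, by rw [← h0] at h1 h2; linarith⟩
      · refine ⟨z 0 / s, ?_, ?_, div_mul_cancel₀ _ h0.ne'⟩
        · rw [le_div_iff₀ h0]; linarith
        · rw [div_le_iff₀ h0]; linarith
    have hP := aux_SO3 s (z 1) (z 2) hs (by linarith) 1 (by norm_num)
    have hM := aux_SO3 s (z 1) (z 2) hs (by linarith) (-1) (by norm_num)
    have hC := convex_convexHull ℝ SO3 (subset_convexHull ℝ SO3 hP) (subset_convexHull ℝ SO3 hM)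
      (show 0 ≤ (1 + t) / 2 by linarith) (show 0 ≤ (1 - t) / 2 by linarith) (by ring)
    generalize hG : ((1 + t) / 2) • (_ : M3) + ((1 - t) / 2) • (_ : M3) = G at hC
    refine ⟨fun i => G i 1, fun i => G i 2, ?_⟩
    convert hC using 1
    ext i j
    fin_cases j
    · subst hG
      fin_cases i <;> simp [colMat] <;> linarith
    · simp [colMat]
    · simp [colMat]
end
end

section
/- Let W : (0,L) × ℝ^{3×3} → [0,∞) be a Carathéodory function (measurable in s for each F, continuous in F for a.e. s) satisfying W(s,F) ≤ C₃·dist²(F, SO(3)) for a.e. s ∈ (0,L) and every F ∈ ℝ^{3×3}, for some C₃ > 0. Let v, w₂, w₃ ∈ C¹([0,L];ℝ³) and for h > 0 define v⁽ʰ⁾ : Ω → ℝ³ by v⁽ʰ⁾(s,ξ,ζ) := v(s) + hξw₂(s) + hζw₃(s). Then lim_{h→0⁺} ∫_Ω W(s, (∇_h v⁽ʰ⁾)(∇_hΨ⁽ʰ⁾)⁻¹) det(∇_hΨ⁽ʰ⁾) ds dξ dζ = ∫₀ᴸ W(s, (v′(s)|w₂(s)|w₃(s)) R₀(s)ᵀ)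 ds. -/
open MeasureTheory Set

noncomputable section

/-- The string recovery sequence `v⁽ʰ⁾(s,ξ,ζ) = v(s) + hξw₂(s) + hζw₃(s)`. -/
def vh15 (v w₂ w₃ : ℝ → Fin 3 → ℝ) (h : ℝ) (p : ℝ × ℝ × ℝ) : Fin 3 → ℝ :=
  v p.1 + (h * p.2.1) • w₂ p.1 + (h * p.2.2) • w₃ p.1

lemma aux_caratheodory {X : Type*} [MeasurableSpace X] (W : ℝ → M3 → ℝ) (μ : Measure ℝ)
    (hWmeas : ∀ F, Measurable fun s => W s F)
    (hWcont : ∀ᵐ s ∂μ, Continuous (W s)) (ρ : Measure X) (f : X → ℝ)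
    (hf : Measure.QuasiMeasurePreserving f ρ μ)
    (G : X → M3) (hG : ∀ i j, Measurable fun x => G x i j) :
    AEStronglyMeasurable (fun x => W (f x) (G x)) ρ := by
  classical
  set T := toMeasurable μ {s | ¬ Continuous (W s)} with hT
  have hTm : MeasurableSet T := measurableSet_toMeasurable _ _
  have hT0 : μ T = 0 := by rw [hT, measure_toMeasurable]; exact hWcont
  let W' : (Fin 3 → Fin 3 → ℝ) → ℝ → ℝ := fun F s => if s ∈ T then 0 else W s F
  have h1 : Measurable (Function.uncurry W') := by
    apply measurable_uncurry_of_continuous_of_measurable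
    · intro s
      by_cases hs : s ∈ T
      · simp only [W', hs, if_true]; exact continuous_const
      · simp only [W', hs, if_false]
        by_contra hc
        exact hs (subset_toMeasurable _ _ hc)
    · intro F
      exact Measurable.ite hTm measurable_const (hWmeas F)
  let G' : X → Fin 3 → Fin 3 → ℝ := G
  have hG' : Measurable G' :=
    measurable_pi_lambda _ fun i => measurable_pi_lambda _ fun j => hG i j
  have h2 : Measurable (fun x => Function.uncurry W' (G' x, f x)) :=
    h1.comp (hG'.prodMk hf.measurable)
  refine h2.aestronglyMeasurable.congr ?_
  have h3 : ∀ᵐ s ∂μ, s ∉ T := measure_eq_zero_iff_ae_notMem.1 hT0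
  filter_upwards [hf.ae h3] with x hx
  simp [Function.uncurry, W', G', hx]

lemma aux_bound {Y : Type*} [TopologicalSpace Y] (K : Set Y) (hK : IsCompact K)
    (g : ℝ × Y → ℝ) (hg : ∀ p ∈ K, ContinuousAt g (0, p)) :
    ∃ C : ℝ, ∀ᶠ h in nhds (0:ℝ), ∀ p ∈ K, g (h, p) ≤ C := by
  have hc : ContinuousOn (fun p => g (0, p)) K := fun p hp =>
    ((hg p hp).comp (f := fun p => ((0:ℝ), p)) (by fun_prop)).continuousWithinAt
  obtain ⟨C, hC⟩ := hK.bddAbove_image hc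
  refine ⟨C + 1, ?_⟩
  apply hK.eventually_forall_of_forall_eventually
  intro p hp
  have : g (0, p) < C + 1 := by
    have : g (0, p) ≤ C := hC (mem_image_of_mem (fun p => g (0, p)) hp)
    linarith
  filter_upwards [(hg p hp).eventually_lt_const this] with q hq using hq.le

lemma aux_dist (F : M3) : 0 ≤ distSO3 F ∧ distSO3 F ≤ frob3 (F - 1) := by
  constructor
  · apply Real.sInf_nonneg
    rintro _ ⟨R, -, rfl⟩
    exact Real.sqrt_nonneg _
  · apply csInf_le
    · refine ⟨0, ?_⟩
      rintro _ ⟨R, -, rfl⟩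
      exact Real.sqrt_nonneg _
    · exact ⟨1, by simp [SO3], rfl⟩

/-- Closed form of the scaled gradient. -/
def gradC (a b c : ℝ → Fin 3 → ℝ) (q : ℝ × ℝ × ℝ × ℝ) : M3 :=
  colMat (deriv a q.2.1 + (q.1 * q.2.2.1) • deriv b q.2.1 + (q.1 * q.2.2.2) • deriv c q.2.1)
    (b q.2.1) (c q.2.1)

lemma aux_deriv_coord (a : ℝ → Fin 3 → ℝ) (ha : ContDiff ℝ 1 a) (i : Fin 3) (s : ℝ) :
    HasDerivAt (fun t => a t i) (deriv a s i) s :=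
  hasDerivAt_pi.1 (ha.differentiable (by norm_num) s).hasDerivAt i

lemma aux_grad (a b c : ℝ → Fin 3 → ℝ) (ha : ContDiff ℝ 1 a) (hb : ContDiff ℝ 1 b)
    (hc : ContDiff ℝ 1 c) (h : ℝ) (hh : h ≠ 0) (p : ℝ × ℝ × ℝ) :
    scaledGrad h (vh15 a b c h) p = gradC a b c (h, p) := by
  obtain ⟨s, x, y⟩ := p
  ext i j
  simp only [scaledGrad, vh15, gradC, colMat, Matrix.of_apply, Pi.add_apply, Pi.smul_apply,
    smul_eq_mul]
  split_ifs
  · exact (((aux_deriv_coord a ha i s).add ((aux_deriv_coord b hb i s).const_mul (h * x))).add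
      ((aux_deriv_coord c hc i s).const_mul (h * y))).deriv
  · have : HasDerivAt (fun t : ℝ => a s i + h * t * b s i + h * y * c s i) (h * b s i) x := by
      have := ((((hasDerivAt_id x).const_mul h).mul_const (b s i)).const_add (a s i)).add_const
        (h * y * c s i)
      simpa using this
    rw [this.deriv]; field_simp
  · have : HasDerivAt (fun t : ℝ => a s i + h * x * b s i + h * t * c s i) (h * c s i) y := by
      have := ((((hasDerivAt_id y).const_mul h).mul_const (c s i)).const_add
        (a s i + h * x * b s i))
      simpa using this
    rw [this.deriv]; field_simp

lemma aux_grad_cont (a b c : ℝ → Fin 3 → ℝ) (ha : ContDiff ℝ 1 a) (hb : ContDiff ℝ 1 b)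
    (hc : ContDiff ℝ 1 c) : Continuous (gradC a b c) := by
  have ha' := ha.continuous_deriv (by norm_num)
  have hb' := hb.continuous_deriv (by norm_num)
  have hc' := hc.continuous_deriv (by norm_num)
  have hb0 := hb.continuous
  have hc0 := hc.continuous
  apply continuous_matrix
  intro i j
  simp only [gradC, colMat, Matrix.of_apply, Pi.add_apply, Pi.smul_apply, smul_eq_mul]
  split_ifs <;> fun_prop

lemma aux_frob_cont : Continuous frob3 := by
  unfold frob3
  have : ∀ i j, Continuous fun F : M3 => F i j := fun i j => continuous_id.matrix_elem i j
  fun_prop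

theorem string_recovery_sequence_energy_limit
    (L : ℝ) (hL : 0 < L)
    (γ : ℝ → Fin 3 → ℝ) (hγ : ContDiff ℝ 2 γ)
    (harc : ∀ s ∈ Icc (0:ℝ) L, enorm3 (deriv γ s) = 1)
    (hγinj : InjOn γ (Icc (0:ℝ) L))
    (R₀ : ℝ → M3) (hR₀C1 : ∀ i j, ContDiff ℝ 1 fun s => R₀ s i j)
    (hR₀SO : ∀ s ∈ Icc (0:ℝ) L, R₀ s ∈ SO3)
    (hR₀e1 : ∀ s ∈ Icc (0:ℝ) L, (R₀ s).mulVec (Pi.single 0 1) = deriv γ s)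
    (Dset : Set (ℝ × ℝ)) (hDopen : IsOpen Dset) (hDconn : IsConnected Dset)
    (hDbdd : Bornology.IsBounded Dset) (hDvol : volume Dset = 1)
    (W : ℝ → M3 → ℝ) (hWnn : ∀ s F, 0 ≤ W s F)
    (hWmeas : ∀ F, Measurable fun s => W s F)
    (hWcont : ∀ᵐ s ∂(volume.restrict (Ioo (0:ℝ) L)), Continuous (W s))
    (C₃ : ℝ) (hC₃ : 0 < C₃)
    (hWgrowth : ∀ᵐ s ∂(volume.restrict (Ioo (0:ℝ) L)),
      ∀ F : M3, W s F ≤ C₃ * distSO3 F ^ 2)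
    (v w₂ w₃ : ℝ → Fin 3 → ℝ)
    (hv : ContDiff ℝ 1 v) (hw₂ : ContDiff ℝ 1 w₂) (hw₃ : ContDiff ℝ 1 w₃) :
    Filter.Tendsto
      (fun h : ℝ =>
        ∫ p in Ioo (0:ℝ) L ×ˢ Dset,
          W p.1 (scaledGrad h (vh15 v w₂ w₃ h) p * (scaledGrad h (Psih γ R₀ h) p)⁻¹) *
            (scaledGrad h (Psih γ R₀ h) p).det)
      (nhdsWithin 0 (Ioi 0))
      (nhds (∫ s in Ioo (0:ℝ) L,
        W s (colMat (deriv v s) (w₂ s) (w₃ s) * (R₀ s).transpose))) := by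
  have hn2 : ContDiff ℝ 1 (nu2 R₀) := by
    refine contDiff_pi.2 fun i => ?_
    simpa [nu2] using hR₀C1 i 1
  have hn3 : ContDiff ℝ 1 (nu3 R₀) := by
    refine contDiff_pi.2 fun i => ?_
    simpa [nu3] using hR₀C1 i 2
  have hγ1 : ContDiff ℝ 1 γ := hγ.of_le (by norm_num)
  have hPsi : ∀ h, Psih γ R₀ h = vh15 γ (nu2 R₀) (nu3 R₀) h := fun h => rfl
  set V := gradC v w₂ w₃ with hV
  set A := gradC γ (nu2 R₀) (nu3 R₀) with hA
  have hVc : Continuous V := aux_grad_cont _ _ _ hv hw₂ hw₃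
  have hAc : Continuous A := aux_grad_cont _ _ _ hγ1 hn2 hn3
  have hA0 : ∀ s ∈ Icc (0:ℝ) L, ∀ x : ℝ × ℝ, A (0, s, x) = R₀ s := by
    intro s hs x
    ext i j
    have h0 : R₀ s i 0 = deriv γ s i := by
      have := congrFun (hR₀e1 s hs) i
      simpa using this
    fin_cases j <;> simp [hA, gradC, colMat, nu2, nu3, h0]
  have hV0 : ∀ s, ∀ x : ℝ × ℝ, V (0, s, x) = colMat (deriv v s) (w₂ s) (w₃ s) := by
    intro s x
    simp [hV, gradC]
  have hdet0 : ∀ s ∈ Icc (0:ℝ) L, ∀ x : ℝ × ℝ, (A (0, s, x)).det = 1 := by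
    intro s hs x
    rw [hA0 s hs x]; exact (hR₀SO s hs).2
  have hinv0 : ∀ s ∈ Icc (0:ℝ) L, ∀ x : ℝ × ℝ, (A (0, s, x))⁻¹ = (R₀ s).transpose := by
    intro s hs x
    rw [hA0 s hs x]; exact Matrix.inv_eq_left_inv (hR₀SO s hs).1
  have hinv : ∀ q, (A q)⁻¹ = (A q).det⁻¹ • (A q).adjugate := by
    intro q
    rw [Matrix.inv_def, Ring.inverse_eq_inv']
  set G : ℝ × ℝ × ℝ × ℝ → M3 := fun q => V q * (A q)⁻¹ with hG
  have hGc : ∀ s ∈ Icc (0:ℝ) L, ∀ x : ℝ × ℝ, ContinuousAt G (0, s, x) := by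
    intro s hs x
    have h1 : ContinuousAt (fun q => (A q)⁻¹) (0, s, x) := by
      simp only [hinv]
      refine ContinuousAt.smul (ContinuousAt.inv₀ hAc.matrix_det.continuousAt ?_)
        hAc.matrix_adjugate.continuousAt
      rw [hdet0 s hs x]; exact one_ne_zero
    exact hVc.continuousAt.mul h1
  have hGm : ∀ h i j, Measurable fun p : ℝ × ℝ × ℝ => G (h, p) i j := by
    intro h i j
    simp only [hG, hinv, Matrix.mul_apply, Matrix.smul_apply, smul_eq_mul]
    have e : Continuous fun p : ℝ × ℝ × ℝ => (h, p) := by fun_prop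
    refine Finset.measurable_sum _ fun k _ => ?_
    refine Measurable.mul ((hVc.comp e).matrix_elem i k).measurable (Measurable.mul ?_ ?_)
    · exact (hAc.comp e).matrix_det.measurable.inv
    · exact ((hAc.comp e).matrix_adjugate.matrix_elem k j).measurable
  set K : Set (ℝ × ℝ × ℝ) := Icc (0:ℝ) L ×ˢ closure Dset with hK
  have hKc : IsCompact K := isCompact_Icc.prod hDbdd.isCompact_closure
  obtain ⟨C, hC⟩ := aux_bound K hKc
    (fun q => C₃ * frob3 (G q - 1) ^ 2 * |(A q).det|) (by
      rintro ⟨s, x⟩ hp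
      have h1 := hGc s hp.1 x
      have h2 : ContinuousAt (fun q => frob3 (G q - 1)) (0, s, x) :=
        aux_frob_cont.continuousAt.comp (h1.sub continuousAt_const)
      have h3 : ContinuousAt (fun q => (A q).det) (0, s, x) := hAc.matrix_det.continuousAt
      exact (continuousAt_const.mul (h2.pow 2)).mul h3.abs)
  set μ := (volume : Measure ℝ).restrict (Ioo 0 L) with hμ
  set ν := (volume : Measure (ℝ × ℝ)).restrict Dset with hν
  have hνu : ν univ = 1 := by simp [hν, hDvol]
  have : IsProbabilityMeasure ν := ⟨hνu⟩
  have hvol : (volume : Measure (ℝ × ℝ × ℝ)).restrict (Ioo (0:ℝ) L ×ˢ Dset) = μ.prod ν := by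
    rw [hμ, hν, Measure.prod_restrict]; rfl
  have hqmp : Measure.QuasiMeasurePreserving Prod.fst (μ.prod ν) μ :=
    Measure.quasiMeasurePreserving_fst
  have hmem : ∀ᵐ p ∂(μ.prod ν), p ∈ Ioo (0:ℝ) L ×ˢ Dset := by
    rw [← hvol]
    exact ae_restrict_mem (measurableSet_Ioo.prod hDopen.measurableSet)
  have hlim : (∫ s in Ioo (0:ℝ) L, W s (colMat (deriv v s) (w₂ s) (w₃ s) * (R₀ s).transpose))
      = ∫ p, W p.1 (colMat (deriv v p.1) (w₂ p.1) (w₃ p.1) * (R₀ p.1).transpose) ∂(μ.prod ν) := by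
    rw [integral_fun_fst (fun s => W s (colMat (deriv v s) (w₂ s) (w₃ s) * (R₀ s).transpose))]
    simp [Measure.real, hνu, hμ]
  rw [hlim, hvol]
  have hpos : ∀ᶠ h in nhdsWithin (0:ℝ) (Ioi 0), h ≠ 0 := by
    filter_upwards [self_mem_nhdsWithin] with h hh using ne_of_gt hh
  refine Filter.Tendsto.congr'
    (f₁ := fun h => ∫ p, W p.1 (G (h, p)) * (A (h, p)).det ∂(μ.prod ν)) ?_ ?_
  · filter_upwards [hpos] with h hh
    simp only [hPsi, aux_grad _ _ _ hv hw₂ hw₃ h hh, aux_grad _ _ _ hγ1 hn2 hn3 h hh, hG, hV, hA]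
  refine tendsto_integral_filter_of_dominated_convergence (fun _ => C) ?_ ?_ ?_ ?_
  · refine Filter.Eventually.of_forall fun h => ?_
    have e : Continuous fun p : ℝ × ℝ × ℝ => (h, p) := by fun_prop
    exact (aux_caratheodory W μ hWmeas hWcont _ _ hqmp _ (hGm h)).mul
      (hAc.comp e).matrix_det.aestronglyMeasurable
  · filter_upwards [hC.filter_mono nhdsWithin_le_nhds] with h hh
    filter_upwards [hmem, hqmp.ae hWgrowth] with p hp hg
    refine le_trans ?_ (hh p ⟨Ioo_subset_Icc_self hp.1, subset_closure hp.2⟩)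
    rw [norm_mul, Real.norm_eq_abs, Real.norm_eq_abs, abs_of_nonneg (hWnn _ _)]
    refine mul_le_mul_of_nonneg_right ((hg _).trans ?_) (abs_nonneg _)
    obtain ⟨h1, h2⟩ := aux_dist (G (h, p))
    gcongr
  · exact integrable_const _
  · filter_upwards [hmem, hqmp.ae hWcont] with p hp hc
    obtain ⟨s, x⟩ := p
    have hs : s ∈ Icc (0:ℝ) L := Ioo_subset_Icc_self hp.1
    have e : Filter.Tendsto (fun h : ℝ => (h, s, x)) (nhdsWithin 0 (Ioi 0)) (nhds (0, s, x)) :=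
      (Continuous.tendsto (by fun_prop : Continuous fun h : ℝ => (h, s, x)) 0).mono_left
        nhdsWithin_le_nhds
    have h1 := (hc.tendsto _).comp ((hGc s hs x).tendsto.comp e)
    have h2 := (hAc.matrix_det.tendsto (0, s, x)).comp e
    have h3 := h1.mul h2
    simp only [hdet0 s hs x, mul_one, hG, hinv0 s hs x, hV0 s x] at h3
    exact h3
end
end
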